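/- Fix m ∈ ℕ and q ∈ ℕ. There exist δ > 0, r > 0 and C > 0 such that the following holds: for every K ∈ ℕ and every polynomial P of total degree at most m in K variables, with decomposition P = Q + R where Q lies in the degree-m Hermite span and deg R ≤ m−1, letting N ~ γ_K, F = P(N) and J_m F = Q(N), if the Lévy–Prokhorov distance between the law of J_m F and N(0,1) is at most δ, then E[ Γ[F,F]^{−q} ] ≤ C · ( E[F²] )^{r/2}, where Γ[F,F] := Σ_{k=1}^K (∂_k P(N))². -/

import Mathlib

open MeasureTheory ProbabilityTheory MvPolynomial Filter Topology

noncomputable def gaussPi (ι : Type) [Fintype ι] : Measure (ι → ℝ) :=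
  Measure.pi fun _ => gaussianReal 0 1

noncomputable def hermiteProd {K : ℕ} (k : Fin K → ℕ) : MvPolynomial (Fin K) ℝ :=
  ∏ i, Polynomial.aeval (MvPolynomial.X i) (Polynomial.hermite (k i))

noncomputable def chaos (K m : ℕ) : Submodule ℝ (MvPolynomial (Fin K) ℝ) :=
  Submodule.span ℝ {P | ∃ k : Fin K → ℕ, ∑ i, k i = m ∧ P = hermiteProd k}

noncomputable def sqField {ι : Type} [Fintype ι] (P : MvPolynomial ι ℝ) (x : ι → ℝ) : ℝ :=
  ∑ i, (eval x (pderiv i P)) ^ 2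

def TendstoInLaw {E : Type} [MeasurableSpace E] [TopologicalSpace E]
    (μs : ℕ → Measure E) (μ : Measure E) : Prop :=
  ∀ f : BoundedContinuousFunction E ℝ,
    Tendsto (fun n => ∫ x, f x ∂μs n) atTop (𝓝 (∫ x, f x ∂μ))

/-! The moments of `J_m F` of order two and four are controlled by its law, since moments of high
order are bounded through those of low order on a fixed chaos. If that law is close to `N(0,1)`, the
fourth cumulant is therefore small, and the computation of Nualart and Peccati, done here with the
Fischer inner product on leading forms, makes all contractions of the top derivative of `P` small.

The Laplace transform of `Γ[F,F]` at `t` is the average over a random direction `Y` of the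
characteristic function of `√(2 t) ∂_Y P(N)`. Weyl differencing, that is Cauchy–Schwarz after a
rotation of two independent Gaussian vectors, bounds a power of it by the characteristic function
of a multilinear form in `m` independent Gaussian vectors, in which only the top derivative of `P`
is left. This decoupled form has characteristic function decaying faster than any power as soon as
its contractions are small, by induction on `m`: the gradient in one vector may be replaced by
finitely many random directional derivatives, whose Gram matrix is nearly scalar because
contractions are small. Integrating the Laplace transform against `t ^ (q - 1) dt` bounds the
negative moment by a constant, which is at most a multiple of `𝔼[F²] ≥ 𝔼[(J_m F)²] ≥ 1/2`.
-/

namespace GaussianChaos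

section GaussianReal

variable {μ : ℝ} {v : NNReal}

lemma integrable_pow_gaussianReal (n : ℕ) : Integrable (fun x : ℝ => x ^ n) (gaussianReal μ v) := by
  rcases eq_or_ne n 0 with rfl | hn
  · simp
  · refine (integrable_norm_iff (by fun_prop)).1 ?_
    simpa using (memLp_id_gaussianReal (μ := μ) (v := v) n).integrable_norm_pow hn

lemma hasDerivAt_gaussianPDFReal (x : ℝ) :
    HasDerivAt (gaussianPDFReal μ v) (-((x - μ) / v) * gaussianPDFReal μ v x) x := by
  have hexp : HasDerivAt (fun x : ℝ => -(x - μ) ^ 2 / (2 * v)) (-((x - μ) / v)) x := by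
    refine ((((hasDerivAt_id x).sub_const μ).pow 2).neg.div_const (2 * (v : ℝ))).congr_deriv ?_
    simp only [id_eq, Nat.cast_ofNat, Nat.add_one_sub_one, pow_one, mul_one]
    rw [← neg_div, ← mul_div_mul_left (-(x - μ)) (v : ℝ) two_ne_zero]
    ring
  rw [gaussianPDFReal_def]
  refine (hexp.exp.const_mul (√(2 * Real.pi * v))⁻¹).congr_deriv ?_
  ring

lemma integrable_pow_mul_gaussianPDFReal (hv : v ≠ 0) (n : ℕ) :
    Integrable (fun x : ℝ => x ^ n * gaussianPDFReal μ v x) := by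
  have h := integrable_pow_gaussianReal (μ := μ) (v := v) n
  rw [gaussianReal_of_var_ne_zero _ hv, integrable_withDensity_iff_integrable_smul' (by fun_prop)
    (Eventually.of_forall fun x => by simp [gaussianPDF])] at h
  refine h.congr (Eventually.of_forall fun x => ?_)
  simp [gaussianPDF, gaussianPDFReal_nonneg, mul_comm]

/-- Integrating against the derivative of the density, `φ' = -x φ`, moves it onto `x ^ n`. -/
lemma integral_pow_succ_gaussianReal (n : ℕ) :
    ∫ x, x ^ (n + 1) ∂gaussianReal 0 v = v * (n * ∫ x, x ^ (n - 1) ∂gaussianReal 0 v) := by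
  rcases eq_or_ne v 0 with rfl | hv
  · simp
  have hv' : (v : ℝ) ≠ 0 := NNReal.coe_ne_zero.2 hv
  have h_int := integrable_pow_mul_gaussianPDFReal (μ := 0) hv
  have parts := integral_mul_deriv_eq_deriv_mul_of_integrable
    (u := fun x : ℝ => x ^ n) (u' := fun x : ℝ => n * x ^ (n - 1))
    (fun x _ => by simpa using hasDerivAt_pow n x)
    (fun x _ => hasDerivAt_gaussianPDFReal (μ := 0) (v := v) x)
    (((h_int (n + 1)).const_mul (-(v : ℝ)⁻¹)).congr (Eventually.of_forall fun x => by
      simp only [Pi.mul_apply, sub_zero]; ring))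
    (((h_int (n - 1)).const_mul (n : ℝ)).congr (Eventually.of_forall fun x => by
      simp only [Pi.mul_apply]; ring))
    (h_int n)
  simp only [integral_gaussianReal_eq_integral_smul hv, smul_eq_mul]
  calc ∫ x, gaussianPDFReal 0 v x * x ^ (n + 1)
      = -v * ∫ x, x ^ n * (-((x - 0) / v) * gaussianPDFReal 0 v x) := by
        rw [← integral_const_mul]
        refine integral_congr_ae (Eventually.of_forall fun x => ?_)
        simp only [sub_zero]
        field_simp
        ring
    _ = v * ∫ x, n * x ^ (n - 1) * gaussianPDFReal 0 v x := by rw [parts]; ring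
    _ = v * (n * ∫ x, gaussianPDFReal 0 v x * x ^ (n - 1)) := by
        simp only [mul_comm (gaussianPDFReal 0 v _), mul_assoc, integral_const_mul]

lemma integral_sq_gaussianReal : ∫ x, x ^ 2 ∂gaussianReal 0 1 = 1 := by
  simp [integral_pow_succ_gaussianReal 1]

lemma integral_pow_four_gaussianReal : ∫ x, x ^ 4 ∂gaussianReal 0 1 = 3 := by
  simp [integral_pow_succ_gaussianReal 3, integral_sq_gaussianReal]

end GaussianReal

section GaussianExpectation

variable {ι : Type} [Fintype ι]

instance : IsProbabilityMeasure (gaussPi ι) := by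
  unfold gaussPi; infer_instance

lemma eval_monomial_eq_prod (s : ι →₀ ℕ) (a : ℝ) (x : ι → ℝ) :
    eval x (monomial s a) = a * ∏ i, x i ^ s i := by
  rw [eval_monomial, Finsupp.prod_fintype _ _ (by simp)]

lemma integrable_eval (F : MvPolynomial ι ℝ) : Integrable (fun x => eval x F) (gaussPi ι) := by
  induction F using MvPolynomial.induction_on' with
  | monomial s a =>
    simp only [eval_monomial_eq_prod]
    exact (Integrable.fintype_prod (f := fun i x => x ^ s i)
      fun i => integrable_pow_gaussianReal (s i)).const_mul a
  | add F G hF hG => simp only [map_add]; exact hF.add hG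

/-- The expectation `𝔼[F(N)]`, `N ∼ γ`, as a linear form on polynomials. -/
noncomputable def gaussExp : MvPolynomial ι ℝ →ₗ[ℝ] ℝ where
  toFun F := ∫ x, eval x F ∂gaussPi ι
  map_add' F G := by simp only [map_add, integral_add (integrable_eval F) (integrable_eval G)]
  map_smul' a F := by simp only [smul_eval, integral_const_mul, RingHom.id_apply, smul_eq_mul]

lemma gaussExp_apply (F : MvPolynomial ι ℝ) : gaussExp F = ∫ x, eval x F ∂gaussPi ι := rfl

@[simp]
lemma gaussExp_C (a : ℝ) : gaussExp (C a : MvPolynomial ι ℝ) = a := by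
  simp [gaussExp_apply]

lemma gaussExp_mono {F G : MvPolynomial ι ℝ} (h : ∀ x, eval x F ≤ eval x G) :
    gaussExp F ≤ gaussExp G :=
  integral_mono (integrable_eval F) (integrable_eval G) h

lemma gaussExp_nonneg {F : MvPolynomial ι ℝ} (h : ∀ x, 0 ≤ eval x F) : 0 ≤ gaussExp F :=
  integral_nonneg h

lemma gaussExp_sq_nonneg (F : MvPolynomial ι ℝ) : 0 ≤ gaussExp (F ^ 2) :=
  gaussExp_nonneg fun x => by rw [map_pow]; positivity

lemma gaussExp_monomial (s : ι →₀ ℕ) (a : ℝ) :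
    gaussExp (monomial s a) = a * ∏ i, ∫ x : ℝ, x ^ s i ∂gaussianReal 0 1 := by
  simp only [gaussExp_apply, eval_monomial_eq_prod, integral_const_mul]
  rw [gaussPi, integral_fintype_prod_eq_prod (fun i x => x ^ s i)]

lemma gaussExp_X_mul (i : ι) (F : MvPolynomial ι ℝ) :
    gaussExp (X i * F) = gaussExp (pderiv i F) := by
  classical
  induction F using MvPolynomial.induction_on' with
  | monomial s a =>
    have hother : ∀ j ∈ Finset.univ.erase i,
        ∫ x : ℝ, x ^ ((s + Finsupp.single i 1 : ι →₀ ℕ) j) ∂gaussianReal 0 1 =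
          ∫ x : ℝ, x ^ ((s - Finsupp.single i 1 : ι →₀ ℕ) j) ∂gaussianReal 0 1 := by
      intro j hj
      simp [(Finset.ne_of_mem_erase hj).symm]
    rw [pderiv_monomial, mul_comm, ← pow_one (X i), ← monomial_add_single, gaussExp_monomial,
      gaussExp_monomial, ← Finset.mul_prod_erase _ _ (Finset.mem_univ i),
      ← Finset.mul_prod_erase _ _ (Finset.mem_univ i), Finset.prod_congr rfl hother]
    simp only [Finsupp.add_apply, Finsupp.single_eq_same, Finsupp.tsub_apply,
      integral_pow_succ_gaussianReal, NNReal.coe_one]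
    ring
  | add F G hF hG => simp only [mul_add, map_add, hF, hG]

lemma gaussExp_mul_sq_le (F G : MvPolynomial ι ℝ) :
    gaussExp (F * G) ^ 2 ≤ gaussExp (F ^ 2) * gaussExp (G ^ 2) := by
  have h := LinearMap.BilinForm.apply_sq_le_of_symm
    ((LinearMap.mul ℝ (MvPolynomial ι ℝ)).compr₂ gaussExp)
    (fun F => by simpa [sq] using gaussExp_sq_nonneg F)
    ⟨fun F G => by simp [mul_comm]⟩ F G
  simpa [sq] using h

end GaussianExpectation

section Degree

variable {ι : Type}

lemma pderiv_comm (i j : ι) (F : MvPolynomial ι ℝ) :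
    pderiv i (pderiv j F) = pderiv j (pderiv i F) := by
  classical
  have h : ⁅(pderiv i : Derivation ℝ (MvPolynomial ι ℝ) _), pderiv j⁆ = 0 :=
    derivation_ext fun k => by
      rw [Derivation.commutator_apply, pderiv_X, pderiv_X]
      rcases eq_or_ne k i with rfl | hi <;> rcases eq_or_ne k j with rfl | hj <;>
        simp [*]
  rw [← sub_eq_zero, ← Derivation.commutator_apply, h, Derivation.zero_apply]

/-- Polynomials of degree `< n`, described as those killed by all partial derivatives of order
`n`; the recursion makes inductions on the degree immediate. -/
noncomputable def degreeLT : ℕ → Submodule ℝ (MvPolynomial ι ℝ)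
  | 0 => ⊥
  | n + 1 => ⨅ k, (degreeLT n).comap (pderiv k).toLinearMap

lemma mem_degreeLT_zero {F : MvPolynomial ι ℝ} : F ∈ degreeLT 0 ↔ F = 0 := Iff.rfl

lemma mem_degreeLT_succ {n : ℕ} {F : MvPolynomial ι ℝ} :
    F ∈ degreeLT (n + 1) ↔ ∀ k, pderiv k F ∈ degreeLT n := by
  simp [degreeLT]

lemma degreeLT_le_succ (n : ℕ) : degreeLT (ι := ι) n ≤ degreeLT (n + 1) := by
  induction n with
  | zero => exact bot_le
  | succ n ih => exact fun F hF => mem_degreeLT_succ.2 fun k => ih (mem_degreeLT_succ.1 hF k)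

lemma degreeLT_mono : Monotone (degreeLT (ι := ι)) := monotone_nat_of_le_succ degreeLT_le_succ

lemma pderiv_mem_degreeLT {n : ℕ} {F : MvPolynomial ι ℝ} (hF : F ∈ degreeLT n) (k : ι) :
    pderiv k F ∈ degreeLT n :=
  mem_degreeLT_succ.1 (degreeLT_le_succ n hF) k

lemma C_mem_degreeLT (a : ℝ) : C a ∈ degreeLT (ι := ι) 1 :=
  mem_degreeLT_succ.2 fun k => by simp

lemma monomial_mem_degreeLT {n : ℕ} {s : ι →₀ ℕ} (a : ℝ) (hs : s.degree < n) :
    monomial s a ∈ degreeLT n := by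
  classical
  induction n generalizing s a with
  | zero => exact absurd hs (Nat.not_lt_zero _)
  | succ n ih =>
    refine mem_degreeLT_succ.2 fun k => ?_
    rw [pderiv_monomial]
    rcases Nat.eq_zero_or_pos (s k) with hk | hk
    · simp [hk]
    · refine ih _ ?_
      have hle : Finsupp.single k 1 ≤ s := Finsupp.single_le_iff.2 hk
      have hdeg := congrArg Finsupp.degree (tsub_add_cancel_of_le hle)
      simp only [map_add, Finsupp.degree_single] at hdeg
      omega

lemma mem_degreeLT_of_totalDegree_lt {n : ℕ} {F : MvPolynomial ι ℝ} (h : F.totalDegree < n) :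
    F ∈ degreeLT n := by
  rw [F.as_sum]
  exact Submodule.sum_mem _ fun s hs =>
    monomial_mem_degreeLT _ ((le_totalDegree hs).trans_lt h)

lemma exists_mem_degreeLT (F : MvPolynomial ι ℝ) : ∃ M, F ∈ degreeLT M :=
  ⟨_, mem_degreeLT_of_totalDegree_lt (Nat.lt_succ_self _)⟩

end Degree

section DerivForm

variable {ι : Type}

/-- The iterated partial derivative `∂_{I 0} ⋯ ∂_{I (r-1)}`. -/
noncomputable def iterPDeriv : {r : ℕ} → (Fin r → ι) → MvPolynomial ι ℝ →ₗ[ℝ] MvPolynomial ι ℝ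
  | 0, _ => LinearMap.id
  | _ + 1, I => (iterPDeriv (Fin.tail I)).comp (pderiv (I 0)).toLinearMap

lemma iterPDeriv_zero (I : Fin 0 → ι) (F : MvPolynomial ι ℝ) : iterPDeriv I F = F := rfl

lemma iterPDeriv_succ {r : ℕ} (I : Fin (r + 1) → ι) (F : MvPolynomial ι ℝ) :
    iterPDeriv I F = iterPDeriv (Fin.tail I) (pderiv (I 0) F) := rfl

lemma iterPDeriv_cons {r : ℕ} (k : ι) (I : Fin r → ι) (F : MvPolynomial ι ℝ) :
    iterPDeriv (Fin.cons k I : Fin (r + 1) → ι) F = iterPDeriv I (pderiv k F) := by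
  simp [iterPDeriv_succ]

lemma iterPDeriv_pderiv {r : ℕ} (k : ι) (I : Fin r → ι) (F : MvPolynomial ι ℝ) :
    iterPDeriv I (pderiv k F) = pderiv k (iterPDeriv I F) := by
  induction r generalizing F with
  | zero => rfl
  | succ r ih => rw [iterPDeriv_succ, iterPDeriv_succ, pderiv_comm, ih]

lemma iterPDeriv_eq_zero {r : ℕ} {F : MvPolynomial ι ℝ} (hF : F ∈ degreeLT r) (I : Fin r → ι) :
    iterPDeriv I F = 0 := by
  induction r generalizing F with
  | zero => exact hF
  | succ r ih => exact ih (mem_degreeLT_succ.1 hF _) _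

variable [Fintype ι]

lemma sum_cons {M : Type*} [AddCommMonoid M] {r : ℕ} (g : (Fin (r + 1) → ι) → M) :
    ∑ I, g I = ∑ k, ∑ I : Fin r → ι, g (Fin.cons k I) := by
  rw [← Fintype.sum_prod_type', ← (Fin.consEquiv fun _ : Fin (r + 1) => ι).sum_comp]
  rfl

section Module

variable {E : Type*} [AddCommMonoid E] [Module ℝ E]
  (A : MvPolynomial ι ℝ →ₗ[ℝ] MvPolynomial ι ℝ →ₗ[ℝ] E)

/-- The bilinear map `(F, G) ↦ ∑_{|I| = r} A (∂_I F) (∂_I G)`. -/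
noncomputable def derivSum (r : ℕ) : MvPolynomial ι ℝ →ₗ[ℝ] MvPolynomial ι ℝ →ₗ[ℝ] E :=
  ∑ I : Fin r → ι, A.compl₁₂ (iterPDeriv I) (iterPDeriv I)

lemma derivSum_apply (r : ℕ) (F G : MvPolynomial ι ℝ) :
    derivSum A r F G = ∑ I : Fin r → ι, A (iterPDeriv I F) (iterPDeriv I G) := by
  simp [derivSum]

lemma derivSum_zero (F G : MvPolynomial ι ℝ) : derivSum A 0 F G = A F G := by
  simp [derivSum_apply, iterPDeriv_zero]

lemma derivSum_succ (r : ℕ) (F G : MvPolynomial ι ℝ) :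
    derivSum A (r + 1) F G = ∑ k, derivSum A r (pderiv k F) (pderiv k G) := by
  simp only [derivSum_apply, sum_cons, iterPDeriv_cons]

lemma derivSum_eq_zero {r : ℕ} {F : MvPolynomial ι ℝ} (hF : F ∈ degreeLT r)
    (G : MvPolynomial ι ℝ) : derivSum A r F G = 0 := by
  simp [derivSum_apply, iterPDeriv_eq_zero hF]

lemma derivSum_X_mul {A A' : MvPolynomial ι ℝ →ₗ[ℝ] MvPolynomial ι ℝ →ₗ[ℝ] E} {i : ι}
    (h : ∀ F G, A (X i * F) G = A' F G) (r : ℕ) (F G : MvPolynomial ι ℝ) :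
    derivSum A r (X i * F) G =
      derivSum A' r F G + (r : ℝ) • derivSum A (r - 1) F (pderiv i G) := by
  classical
  induction r generalizing F G with
  | zero => simp [derivSum_zero, h]
  | succ r ih =>
    have hleibniz (k : ι) : pderiv k (X i * F) = X i * pderiv k F + if i = k then F else 0 := by
      simp [pderiv_X, Pi.single_apply]
    have hdiag : ∑ k, derivSum A r (if i = k then F else 0) (pderiv k G) =
        derivSum A r F (pderiv i G) := by
      rw [Finset.sum_eq_single i] <;> simp +contextual [eq_comm]
    have hlower : (r : ℝ) • ∑ k, derivSum A (r - 1) (pderiv k F) (pderiv k (pderiv i G)) =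
        (r : ℝ) • derivSum A r F (pderiv i G) := by
      rcases r with _ | r
      · simp
      · rw [derivSum_succ A r, Nat.add_sub_cancel]
    simp only [derivSum_succ, hleibniz, map_add, LinearMap.add_apply, ih,
      Finset.sum_add_distrib, hdiag, ← Finset.smul_sum, pderiv_comm i, hlower, Nat.add_sub_cancel]
    push_cast
    module

/-- The bilinear map `(F, G) ↦ ∑_{r < M} (1/r!) ∑_{|I| = r} A (∂_I F) (∂_I G)`, a truncation of
`exp (∑ k, ∂_k ⊗ ∂_k)`. It no longer depends on `M` once `F` has degree `< M`. -/
noncomputable def derivSeries (M : ℕ) : MvPolynomial ι ℝ →ₗ[ℝ] MvPolynomial ι ℝ →ₗ[ℝ] E :=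
  ∑ r ∈ Finset.range M, (r.factorial : ℝ)⁻¹ • derivSum A r

lemma derivSeries_apply (M : ℕ) (F G : MvPolynomial ι ℝ) :
    derivSeries A M F G = ∑ r ∈ Finset.range M, (r.factorial : ℝ)⁻¹ • derivSum A r F G := by
  simp [derivSeries]

lemma derivSeries_of_le {M M' : ℕ} (h : M ≤ M') {F : MvPolynomial ι ℝ} (hF : F ∈ degreeLT M)
    (G : MvPolynomial ι ℝ) : derivSeries A M' F G = derivSeries A M F G := by
  rw [derivSeries_apply, derivSeries_apply]
  refine (Finset.sum_subset (Finset.range_subset_range.2 h) fun r _ hr => ?_).symm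
  rw [derivSum_eq_zero A (degreeLT_mono (by simpa using hr) hF), smul_zero]

lemma derivSeries_C {M : ℕ} (hM : 1 ≤ M) (a : ℝ) (G : MvPolynomial ι ℝ) :
    derivSeries A M (C a) G = A (C a) G := by
  rw [derivSeries_of_le A hM (C_mem_degreeLT a)]
  simp [derivSeries_apply, derivSum_zero]

lemma derivSeries_X_mul {A A' : MvPolynomial ι ℝ →ₗ[ℝ] MvPolynomial ι ℝ →ₗ[ℝ] E} {i : ι}
    (h : ∀ F G, A (X i * F) G = A' F G) (M : ℕ) (F G : MvPolynomial ι ℝ) :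
    derivSeries A (M + 1) (X i * F) G =
      derivSeries A' (M + 1) F G + derivSeries A M F (pderiv i G) := by
  have hshift : ∑ r ∈ Finset.range (M + 1),
      (r.factorial : ℝ)⁻¹ • (r : ℝ) • derivSum A (r - 1) F (pderiv i G) =
        derivSeries A M F (pderiv i G) := by
    rw [derivSeries_apply, Finset.sum_range_succ']
    simp only [CharP.cast_eq_zero, zero_smul, smul_zero, add_zero, Nat.add_sub_cancel]
    refine Finset.sum_congr rfl fun r _ => ?_
    rw [Nat.factorial_succ, smul_smul]
    push_cast
    congr 1
    field_simp
  simp only [derivSeries_apply, derivSum_X_mul h, smul_add, Finset.sum_add_distrib] at hshift ⊢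
  rw [hshift]

end Module

/-- The bilinear form `(F, G) ↦ ∑_{|I| = r} l(∂_I F) l(∂_I G)`. -/
noncomputable def derivForm (l : MvPolynomial ι ℝ →ₗ[ℝ] ℝ) (r : ℕ) :
    LinearMap.BilinForm ℝ (MvPolynomial ι ℝ) :=
  derivSum ((LinearMap.mul ℝ ℝ).compl₁₂ l l) r

variable (l : MvPolynomial ι ℝ →ₗ[ℝ] ℝ)

lemma derivForm_apply (r : ℕ) (F G : MvPolynomial ι ℝ) :
    derivForm l r F G = ∑ I : Fin r → ι, l (iterPDeriv I F) * l (iterPDeriv I G) := by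
  simp [derivForm, derivSum_apply]

lemma derivForm_zero (F G : MvPolynomial ι ℝ) : derivForm l 0 F G = l F * l G := by
  simp [derivForm, derivSum_zero]

lemma derivForm_succ (r : ℕ) (F G : MvPolynomial ι ℝ) :
    derivForm l (r + 1) F G = ∑ k, derivForm l r (pderiv k F) (pderiv k G) :=
  derivSum_succ _ r F G

lemma derivForm_comm (r : ℕ) (F G : MvPolynomial ι ℝ) :
    derivForm l r F G = derivForm l r G F := by
  simp only [derivForm_apply, mul_comm]

lemma derivForm_self_nonneg (r : ℕ) (F : MvPolynomial ι ℝ) : 0 ≤ derivForm l r F F := by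
  rw [derivForm_apply]
  exact Finset.sum_nonneg fun _ _ => mul_self_nonneg _

end DerivForm

section Parseval

variable {ι : Type} [Fintype ι]

/-- The series `∑_{r < M} (1/r!) ∑_{|I| = r} 𝔼[∂_I F] 𝔼[∂_I G]`, which equals `𝔼[F G]` when `F` has
degree `< M`. -/
noncomputable def parsevalSeries (M : ℕ) : LinearMap.BilinForm ℝ (MvPolynomial ι ℝ) :=
  derivSeries ((LinearMap.mul ℝ ℝ).compl₁₂ gaussExp gaussExp) M

lemma parsevalSeries_apply (M : ℕ) (F G : MvPolynomial ι ℝ) :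
    parsevalSeries M F G =
      ∑ r ∈ Finset.range M, (r.factorial : ℝ)⁻¹ * derivForm gaussExp r F G :=
  derivSeries_apply _ M F G

lemma parsevalSeries_comm (M : ℕ) (F G : MvPolynomial ι ℝ) :
    parsevalSeries M F G = parsevalSeries M G F := by
  simp only [parsevalSeries_apply, derivForm_comm _ _ F G]

lemma parsevalSeries_X_mul (M : ℕ) (i : ι) (F G : MvPolynomial ι ℝ) :
    parsevalSeries (M + 1) (X i * F) G =
      parsevalSeries (M + 1) (pderiv i F) G + parsevalSeries M F (pderiv i G) := by
  rw [parsevalSeries, derivSeries_X_mul (A' := (LinearMap.mul ℝ ℝ).compl₁₂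
    (gaussExp ∘ₗ (pderiv i).toLinearMap) gaussExp) fun F G => by simp [gaussExp_X_mul]]
  simp [parsevalSeries, derivSeries_apply, derivSum_apply, iterPDeriv_pderiv]

lemma exists_gaussExp_mul_eq_parsevalSeries (F : MvPolynomial ι ℝ) :
    ∃ M₀, ∀ M ≥ M₀, ∀ G, gaussExp (F * G) = parsevalSeries M F G := by
  induction F using MvPolynomial.induction_on with
  | C a =>
    refine ⟨1, fun M hM G => ?_⟩
    rw [parsevalSeries, derivSeries_C _ hM, ← smul_eq_C_mul]
    simp
  | add F F' hF hF' =>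
    obtain ⟨M₁, h₁⟩ := hF
    obtain ⟨M₂, h₂⟩ := hF'
    refine ⟨max M₁ M₂, fun M hM G => ?_⟩
    rw [add_mul, map_add, h₁ M (le_of_max_le_left hM), h₂ M (le_of_max_le_right hM), map_add,
      LinearMap.add_apply]
  | mul_X F i hF =>
    obtain ⟨M₁, h₁⟩ := hF
    refine ⟨max M₁ (F.totalDegree + 1) + 1, fun M hM G => ?_⟩
    obtain ⟨M, rfl⟩ := Nat.exists_eq_add_of_le' (le_of_add_le_right hM)
    have hF : F ∈ degreeLT M := mem_degreeLT_of_totalDegree_lt (by omega)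
    have stable {F' : MvPolynomial ι ℝ} (hF' : F' ∈ degreeLT M) (G' : MvPolynomial ι ℝ) :
        parsevalSeries (M + 1) F' G' = parsevalSeries M F' G' :=
      derivSeries_of_le _ M.le_succ hF' G'
    calc gaussExp (F * X i * G)
        = parsevalSeries (M + 1) (X i * G) F := by
          rw [mul_assoc, h₁ (M + 1) (by omega), parsevalSeries_comm]
      _ = parsevalSeries (M + 1) F (pderiv i G) + parsevalSeries M (pderiv i F) G := by
          rw [parsevalSeries_X_mul, parsevalSeries_comm, parsevalSeries_comm M]
      _ = parsevalSeries (M + 1) (F * X i) G := by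
          rw [stable hF, ← stable (pderiv_mem_degreeLT hF i), mul_comm F, parsevalSeries_X_mul,
            add_comm]

lemma gaussExp_mul_eq_parsevalSeries {M : ℕ} {F : MvPolynomial ι ℝ} (hF : F ∈ degreeLT M)
    (G : MvPolynomial ι ℝ) : gaussExp (F * G) = parsevalSeries M F G := by
  obtain ⟨M₀, h⟩ := exists_gaussExp_mul_eq_parsevalSeries F
  rw [h (max M M₀) (le_max_right _ _), parsevalSeries, derivSeries_of_le _ (le_max_left _ _) hF,
    parsevalSeries]

lemma gaussExp_sq_eq_sum {M : ℕ} {F : MvPolynomial ι ℝ} (hF : F ∈ degreeLT M) :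
    gaussExp (F ^ 2) =
      ∑ r ∈ Finset.range M, (r.factorial : ℝ)⁻¹ * derivForm gaussExp r F F := by
  rw [sq, gaussExp_mul_eq_parsevalSeries hF, parsevalSeries_apply]

lemma inv_factorial_mul_derivForm_nonneg (l : MvPolynomial ι ℝ →ₗ[ℝ] ℝ) (r : ℕ)
    (F : MvPolynomial ι ℝ) : 0 ≤ (r.factorial : ℝ)⁻¹ * derivForm l r F F :=
  mul_nonneg (by positivity) (derivForm_self_nonneg l r F)

lemma sum_derivForm_le_gaussExp_sq (F : MvPolynomial ι ℝ) (s : Finset ℕ) :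
    ∑ r ∈ s, (r.factorial : ℝ)⁻¹ * derivForm gaussExp r F F ≤ gaussExp (F ^ 2) := by
  obtain ⟨M, hM⟩ := exists_mem_degreeLT F
  obtain ⟨M', hM'⟩ := s.exists_nat_subset_range
  rw [gaussExp_sq_eq_sum (degreeLT_mono (le_max_left M M') hM)]
  exact Finset.sum_le_sum_of_subset_of_nonneg
    (hM'.trans (Finset.range_subset_range.2 (le_max_right _ _)))
    fun r _ _ => inv_factorial_mul_derivForm_nonneg _ r F

lemma sum_gaussExp_pderiv_sq_eq {M : ℕ} {F : MvPolynomial ι ℝ} (hF : F ∈ degreeLT M) :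
    ∑ k, gaussExp (pderiv k F ^ 2) =
      ∑ r ∈ Finset.range M, (r.factorial : ℝ)⁻¹ * derivForm gaussExp (r + 1) F F := by
  simp only [fun k => gaussExp_sq_eq_sum (pderiv_mem_degreeLT hF k), derivForm_succ,
    Finset.mul_sum]
  exact Finset.sum_comm

lemma gaussian_poincare (F : MvPolynomial ι ℝ) :
    gaussExp (F ^ 2) ≤ gaussExp F ^ 2 + ∑ k, gaussExp (pderiv k F ^ 2) := by
  obtain ⟨M, hM⟩ := exists_mem_degreeLT F
  rw [sum_gaussExp_pderiv_sq_eq hM, gaussExp_sq_eq_sum (degreeLT_le_succ M hM),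
    Finset.sum_range_succ', add_comm, derivForm_zero, ← sq, Nat.factorial_zero, Nat.cast_one,
    inv_one, one_mul]
  gcongr with r
  · exact derivForm_self_nonneg _ _ _
  · exact r.le_succ

lemma sum_gaussExp_pderiv_sq_le {n : ℕ} {F : MvPolynomial ι ℝ} (hF : F ∈ degreeLT n) :
    ∑ k, gaussExp (pderiv k F ^ 2) ≤ n * gaussExp (F ^ 2) := by
  calc ∑ k, gaussExp (pderiv k F ^ 2)
      = ∑ r ∈ Finset.range n,
          (r + 1 : ℝ) * (((r + 1).factorial : ℝ)⁻¹ * derivForm gaussExp (r + 1) F F) := by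
        rw [sum_gaussExp_pderiv_sq_eq hF]
        refine Finset.sum_congr rfl fun r _ => ?_
        rw [Nat.factorial_succ]
        push_cast
        field_simp
    _ ≤ ∑ r ∈ Finset.range n,
          n * (((r + 1).factorial : ℝ)⁻¹ * derivForm gaussExp (r + 1) F F) := by
        refine Finset.sum_le_sum fun r hr => mul_le_mul_of_nonneg_right ?_
          (inv_factorial_mul_derivForm_nonneg _ _ F)
        exact_mod_cast Finset.mem_range.1 hr
    _ ≤ n * gaussExp (F ^ 2) := by
        rw [← Finset.mul_sum, gaussExp_sq_eq_sum (degreeLT_le_succ n hF), Finset.sum_range_succ']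
        gcongr
        exact le_add_of_nonneg_right (inv_factorial_mul_derivForm_nonneg _ 0 F)

end Parseval

section Hypercontractivity

variable {ι : Type} [Fintype ι]

lemma gaussExp_pow_four_le (F : MvPolynomial ι ℝ) :
    gaussExp (F ^ 4) ≤ 2 * gaussExp (F ^ 2) ^ 2 + 16 * gaussExp ((∑ k, pderiv k F ^ 2) ^ 2) := by
  have hgrad : ∑ k, gaussExp (pderiv k (F ^ 2) ^ 2) ≤
      1 / 2 * gaussExp (F ^ 4) + 8 * gaussExp ((∑ k, pderiv k F ^ 2) ^ 2) := by
    have hpderiv : ∑ k, pderiv k (F ^ 2) ^ 2 = 4 * F ^ 2 * ∑ k, pderiv k F ^ 2 := by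
      rw [Finset.mul_sum]
      refine Finset.sum_congr rfl fun k _ => ?_
      simp only [Derivation.leibniz_pow, smul_eq_mul, nsmul_eq_mul]
      push_cast
      ring
    rw [← map_sum, hpderiv, ← smul_eq_mul (1 / 2 : ℝ), ← smul_eq_mul (8 : ℝ), ← map_smul,
      ← map_smul, ← map_add]
    refine gaussExp_mono fun x => ?_
    simp only [map_add, smul_eval, map_mul, map_pow, map_ofNat]
    nlinarith [sq_nonneg (eval x F ^ 2 - 4 * eval x (∑ k, pderiv k F ^ 2))]
  have hpoincare := gaussian_poincare (F ^ 2)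
  rw [← pow_mul] at hpoincare
  linarith

lemma gaussExp_sum_sq_sq_le {κ : Type*} [Fintype κ] {C : ℝ} (hC : 0 ≤ C)
    {F : κ → MvPolynomial ι ℝ} (h : ∀ k, gaussExp (F k ^ 4) ≤ C * gaussExp (F k ^ 2) ^ 2) :
    gaussExp ((∑ k, F k ^ 2) ^ 2) ≤ C * (∑ k, gaussExp (F k ^ 2)) ^ 2 := by
  have hmixed (j k : κ) :
      gaussExp (F j ^ 2 * F k ^ 2) ≤ C * (gaussExp (F j ^ 2) * gaussExp (F k ^ 2)) := by
    have hj := gaussExp_sq_nonneg (F j)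
    have hk := gaussExp_sq_nonneg (F k)
    refine (abs_le_of_sq_le_sq' ?_ (by positivity)).2
    calc gaussExp (F j ^ 2 * F k ^ 2) ^ 2
        ≤ gaussExp (F j ^ 4) * gaussExp (F k ^ 4) := by
          have hcs := gaussExp_mul_sq_le (F j ^ 2) (F k ^ 2)
          rwa [← pow_mul, ← pow_mul] at hcs
      _ ≤ (C * gaussExp (F j ^ 2) ^ 2) * (C * gaussExp (F k ^ 2) ^ 2) := by
          gcongr
          · exact gaussExp_nonneg fun x => by rw [map_pow]; positivity
          · exact h j
          · exact h k
      _ = (C * (gaussExp (F j ^ 2) * gaussExp (F k ^ 2))) ^ 2 := by ring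
  rw [sq, sq, Finset.sum_mul_sum, Finset.sum_mul_sum]
  simp only [map_sum, Finset.mul_sum]
  exact Finset.sum_le_sum fun j _ => Finset.sum_le_sum fun k _ => hmixed j k

lemma exists_gaussExp_pow_four_le (n : ℕ) : ∃ C > (0 : ℝ), ∀ (ι : Type) [Fintype ι],
    ∀ F ∈ degreeLT (ι := ι) n, gaussExp (F ^ 4) ≤ C * gaussExp (F ^ 2) ^ 2 := by
  induction n with
  | zero =>
    refine ⟨1, one_pos, fun ι _ F hF => ?_⟩
    simp [mem_degreeLT_zero.1 hF]
  | succ n ih =>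
    obtain ⟨C, hC, h⟩ := ih
    refine ⟨2 + 16 * (C * (n + 1) ^ 2), by positivity, fun ι _ F hF => ?_⟩
    have hgrad : gaussExp ((∑ k, pderiv k F ^ 2) ^ 2) ≤
        C * (n + 1) ^ 2 * gaussExp (F ^ 2) ^ 2 := by
      calc gaussExp ((∑ k, pderiv k F ^ 2) ^ 2)
          ≤ C * (∑ k, gaussExp (pderiv k F ^ 2)) ^ 2 :=
            gaussExp_sum_sq_sq_le hC.le fun k => h ι _ (mem_degreeLT_succ.1 hF k)
        _ ≤ C * ((n + 1 : ℕ) * gaussExp (F ^ 2)) ^ 2 := by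
            gcongr
            · exact Finset.sum_nonneg fun k _ => gaussExp_sq_nonneg _
            · exact sum_gaussExp_pderiv_sq_le hF
        _ = C * (n + 1) ^ 2 * gaussExp (F ^ 2) ^ 2 := by push_cast; ring
    linarith [gaussExp_pow_four_le F]

end Hypercontractivity

section Hermite

lemma derivative_hermite_succ (n : ℕ) : (Polynomial.hermite (n + 1)).derivative =
    ((n + 1 : ℕ) : Polynomial ℤ) * Polynomial.hermite n := by
  induction n with
  | zero => simp
  | succ n ih =>
    rw [Polynomial.hermite_succ (n + 1), Polynomial.derivative_sub, Polynomial.derivative_mul, ih,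
      Polynomial.derivative_mul, Polynomial.derivative_natCast, Polynomial.derivative_X,
      Polynomial.hermite_succ n]
    push_cast
    ring

lemma pderiv_aeval {ι : Type} (i j : ι) (p : Polynomial ℤ) :
    pderiv i (Polynomial.aeval (X j : MvPolynomial ι ℝ) p) =
      Polynomial.aeval (X j) p.derivative * pderiv i (X j) :=
  ((pderiv i).restrictScalars ℤ).map_aeval p (X j)

variable {K : ℕ} (k : Fin K → ℕ) (i : Fin K)

lemma hermiteProd_update (n : ℕ) : hermiteProd (Function.update k i n) =
    Polynomial.aeval (X i) (Polynomial.hermite n) *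
      ∏ j ∈ Finset.univ.erase i, Polynomial.aeval (X j) (Polynomial.hermite (k j)) := by
  rw [hermiteProd, ← Finset.mul_prod_erase _ _ (Finset.mem_univ i), Function.update_self]
  congr 1
  refine Finset.prod_congr rfl fun j hj => ?_
  rw [Function.update_of_ne (Finset.ne_of_mem_erase hj)]

lemma pderiv_prod_erase_aeval (p : Fin K → Polynomial ℤ) :
    pderiv i (∏ j ∈ Finset.univ.erase i, Polynomial.aeval (X j : MvPolynomial (Fin K) ℝ) (p j))
      = 0 := by
  refine Finset.prod_induction _ (pderiv i · = 0) (fun F G hF hG => ?_) (by simp) fun j hj => ?_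
  · simp [hF, hG]
  · rw [pderiv_aeval, pderiv_X_of_ne (Finset.ne_of_mem_erase hj), mul_zero]

lemma pderiv_hermiteProd :
    pderiv i (hermiteProd k) = (k i : ℝ) • hermiteProd (Function.update k i (k i - 1)) := by
  conv_lhs => rw [← Function.update_eq_self i k]
  rw [hermiteProd_update, hermiteProd_update, Derivation.leibniz, pderiv_prod_erase_aeval,
    pderiv_aeval, pderiv_X_self]
  rcases k i with _ | n
  · simp
  · rw [derivative_hermite_succ]
    simp [smul_eq_C_mul]
    ring

/-- Integration by parts against `H_{n+1} = x H_n - H_n'`. -/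
lemma gaussExp_hermiteProd (hk : k i ≠ 0) : gaussExp (hermiteProd k) = 0 := by
  obtain ⟨n, hn⟩ := Nat.exists_eq_succ_of_ne_zero hk
  have hrec : hermiteProd k = X i * hermiteProd (Function.update k i n) -
      pderiv i (hermiteProd (Function.update k i n)) := by
    conv_lhs => rw [← Function.update_eq_self i k, hn]
    rw [hermiteProd_update, hermiteProd_update, Derivation.leibniz, pderiv_prod_erase_aeval,
      pderiv_aeval, pderiv_X_self, Nat.succ_eq_add_one, Polynomial.hermite_succ]
    simp
    ring
  rw [hrec, map_sub, gaussExp_X_mul, sub_self]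

end Hermite

section Chaos

variable {K m : ℕ} {Q : MvPolynomial (Fin K) ℝ}

lemma pderiv_mem_chaos (hQ : Q ∈ chaos K (m + 1)) (i : Fin K) : pderiv i Q ∈ chaos K m := by
  refine Submodule.span_le (p := (chaos K m).comap (pderiv i).toLinearMap) |>.2 ?_ hQ
  rintro _ ⟨k, hk, rfl⟩
  change pderiv i (hermiteProd k) ∈ chaos K m
  rw [pderiv_hermiteProd]
  rcases Nat.eq_zero_or_pos (k i) with hi | hi
  · simp [hi]
  · refine Submodule.smul_mem _ _ (Submodule.subset_span ⟨_, ?_, rfl⟩)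
    rw [Finset.sum_update_of_mem (Finset.mem_univ i)]
    rw [← Finset.add_sum_erase _ _ (Finset.mem_univ i), Finset.erase_eq] at hk
    omega

lemma gaussExp_eq_zero_of_mem_chaos (hm : m ≠ 0) (hQ : Q ∈ chaos K m) : gaussExp Q = 0 := by
  refine Submodule.span_le (p := gaussExp.ker) |>.2 ?_ hQ
  rintro _ ⟨k, hk, rfl⟩
  obtain ⟨i, -, hi⟩ := Finset.exists_ne_zero_of_sum_ne_zero (hk.trans_ne hm)
  exact gaussExp_hermiteProd k i hi

lemma chaos_le_degreeLT : chaos K m ≤ degreeLT (m + 1) := by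
  induction m with
  | zero =>
    refine Submodule.span_le.2 ?_
    rintro _ ⟨k, hk, rfl⟩
    refine mem_degreeLT_succ.2 fun i => ?_
    rw [pderiv_hermiteProd, (Finset.sum_eq_zero_iff.1 hk) i (Finset.mem_univ i), Nat.cast_zero,
      zero_smul]
    exact zero_mem _
  | succ m ih => exact fun Q hQ => mem_degreeLT_succ.2 fun i => ih (pderiv_mem_chaos hQ i)

lemma derivForm_gaussExp_eq_zero_of_mem_chaos {r : ℕ} (hr : r < m) (hQ : Q ∈ chaos K m)
    (G : MvPolynomial (Fin K) ℝ) : derivForm gaussExp r Q G = 0 := by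
  induction r generalizing m Q G with
  | zero => rw [derivForm_zero, gaussExp_eq_zero_of_mem_chaos (by omega) hQ, zero_mul]
  | succ r ih =>
    obtain ⟨m, rfl⟩ := Nat.exists_eq_add_of_le' (Nat.zero_lt_of_lt hr)
    rw [derivForm_succ]
    exact Finset.sum_eq_zero fun i _ => ih (by omega) (pderiv_mem_chaos hQ i) _

lemma gaussExp_sq_of_mem_chaos (hQ : Q ∈ chaos K m) :
    gaussExp (Q ^ 2) = (m.factorial : ℝ)⁻¹ * derivForm gaussExp m Q Q := by
  rw [gaussExp_sq_eq_sum (chaos_le_degreeLT hQ), Finset.sum_range_succ, Finset.sum_eq_zero,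
    zero_add]
  intro r hr
  rw [derivForm_gaussExp_eq_zero_of_mem_chaos (Finset.mem_range.1 hr) hQ, mul_zero]

end Chaos

section LeadingPart

variable {ι : Type}

/-- Evaluation at the origin, as a linear form. -/
noncomputable def evalZero : MvPolynomial ι ℝ →ₗ[ℝ] ℝ := (aeval (0 : ι → ℝ)).toLinearMap

lemma evalZero_apply (F : MvPolynomial ι ℝ) : evalZero F = eval 0 F := rfl

lemma evalZero_eq_coeff (F : MvPolynomial ι ℝ) : evalZero F = coeff 0 F := by
  rw [evalZero_apply, eval_zero, constantCoeff_eq]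

@[simp]
lemma evalZero_C (a : ℝ) : evalZero (C a : MvPolynomial ι ℝ) = a := by simp [evalZero_apply]

lemma eq_C_of_mem_degreeLT_one {F : MvPolynomial ι ℝ} (hF : F ∈ degreeLT 1) :
    F = C (evalZero F) := by
  classical
  ext s
  rw [coeff_C]
  split_ifs with hs
  · rw [evalZero_eq_coeff, hs]
  · obtain ⟨i, hi⟩ := Finsupp.ne_iff.1 (Ne.symm hs)
    have hle : Finsupp.single i 1 ≤ s := Finsupp.single_le_iff.2 (Nat.one_le_iff_ne_zero.2 hi)
    have hcoeff := coeff_pderiv (i := i) (p := F) (m := s - Finsupp.single i 1)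
    rw [mem_degreeLT_zero.1 (mem_degreeLT_succ.1 hF i), tsub_add_cancel_of_le hle, coeff_zero]
      at hcoeff
    exact (mul_eq_zero.1 hcoeff.symm).resolve_right (by positivity)

lemma mul_mem_degreeLT {a b : ℕ} {F G : MvPolynomial ι ℝ} (hF : F ∈ degreeLT a)
    (hG : G ∈ degreeLT (b + 1)) : F * G ∈ degreeLT (a + b) := by
  induction a generalizing b F G with
  | zero => rw [mem_degreeLT_zero.1 hF, zero_mul]; exact zero_mem _
  | succ a iha =>
    induction b generalizing G with
    | zero =>
      refine mem_degreeLT_succ.2 fun k => ?_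
      rw [Derivation.leibniz, mem_degreeLT_zero.1 (mem_degreeLT_succ.1 hG k), smul_zero, zero_add,
        smul_eq_mul, mul_comm]
      exact iha (mem_degreeLT_succ.1 hF k) hG
    | succ b ihb =>
      refine (mem_degreeLT_succ (n := a + 1 + b)).2 fun k => ?_
      rw [Derivation.leibniz]
      refine add_mem (ihb (mem_degreeLT_succ.1 hG k)) ?_
      rw [smul_eq_mul, mul_comm, add_right_comm]
      exact iha (mem_degreeLT_succ.1 hF k) hG

lemma iterPDeriv_mem_degreeLT {n r : ℕ} {F : MvPolynomial ι ℝ} (hF : F ∈ degreeLT (n + r))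
    (I : Fin r → ι) : iterPDeriv I F ∈ degreeLT n := by
  induction r generalizing F with
  | zero => exact hF
  | succ r ih => exact ih (mem_degreeLT_succ.1 hF _) _

lemma iterPDeriv_congr {r : ℕ} {F G : MvPolynomial ι ℝ} (h : F - G ∈ degreeLT r)
    (I : Fin r → ι) : iterPDeriv I F = iterPDeriv I G := by
  rw [← sub_eq_zero, ← map_sub, iterPDeriv_eq_zero h]

lemma pderiv_homogeneousComponent (n : ℕ) (k : ι) (F : MvPolynomial ι ℝ) :
    pderiv k (homogeneousComponent (n + 1) F) = homogeneousComponent n (pderiv k F) := by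
  ext s
  simp only [coeff_pderiv, coeff_homogeneousComponent, map_add, Finsupp.degree_single,
    add_left_inj]
  split_ifs <;> simp

lemma sub_homogeneousComponent_mem_degreeLT {n : ℕ} {F : MvPolynomial ι ℝ}
    (hF : F ∈ degreeLT (n + 1)) : F - homogeneousComponent n F ∈ degreeLT n := by
  induction n generalizing F with
  | zero =>
    rw [mem_degreeLT_zero, homogeneousComponent_zero, ← evalZero_eq_coeff,
      ← eq_C_of_mem_degreeLT_one hF, sub_self]
  | succ n ih =>
    refine mem_degreeLT_succ.2 fun k => ?_
    rw [map_sub, pderiv_homogeneousComponent]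
    exact ih (mem_degreeLT_succ.1 hF k)

lemma isHomogeneous_iterPDeriv {n r : ℕ} {p : MvPolynomial ι ℝ} (hp : p.IsHomogeneous (n + r))
    (I : Fin r → ι) : (iterPDeriv I p).IsHomogeneous n := by
  induction r generalizing p with
  | zero => exact hp
  | succ r ih => exact ih hp.pderiv _

variable [Fintype ι]

lemma derivForm_gaussExp_eq_derivForm_evalZero {n : ℕ} {F G : MvPolynomial ι ℝ}
    (hF : F ∈ degreeLT (n + 1)) (hG : G ∈ degreeLT (n + 1)) :
    derivForm gaussExp n F G = derivForm evalZero n F G := by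
  have hconst {F : MvPolynomial ι ℝ} (hF : F ∈ degreeLT (n + 1)) (I : Fin n → ι) :
      gaussExp (iterPDeriv I F) = evalZero (iterPDeriv I F) := by
    have hI : iterPDeriv I F ∈ degreeLT 1 := iterPDeriv_mem_degreeLT (by rwa [add_comm]) I
    rw [eq_C_of_mem_degreeLT_one hI, gaussExp_C, evalZero_C]
  simp only [derivForm_apply, hconst hF, hconst hG]

lemma derivForm_self_congr (l : MvPolynomial ι ℝ →ₗ[ℝ] ℝ) {r : ℕ} {F G : MvPolynomial ι ℝ}
    (h : F - G ∈ degreeLT r) : derivForm l r F F = derivForm l r G G := by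
  simp only [derivForm_apply, iterPDeriv_congr h]

end LeadingPart

section Fischer

variable {ι : Type} [Fintype ι]

/-- The Fischer inner product: monomials are orthogonal and `‖x^s‖² = s!`, so that multiplication
by `X k` is adjoint to `∂_k`. -/
noncomputable def fischer : LinearMap.BilinForm ℝ (MvPolynomial ι ℝ) :=
  (basisMonomials ι ℝ).constr ℝ fun s => ((∏ i, (s i).factorial : ℕ) : ℝ) • lcoeff ℝ s

lemma fischer_monomial (s : ι →₀ ℕ) (a : ℝ) (G : MvPolynomial ι ℝ) :
    fischer (monomial s a) G = a * (∏ i, (s i).factorial : ℕ) * coeff s G := by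
  have h : monomial s a = a • basisMonomials ι ℝ s := by
    simp [coe_basisMonomials, smul_monomial]
  rw [h, map_smul, fischer, Module.Basis.constr_basis]
  simp [mul_assoc]

lemma fischer_C (a : ℝ) (G : MvPolynomial ι ℝ) : fischer (C a) G = a * evalZero G := by
  rw [← monomial_zero', fischer_monomial]
  simp [evalZero_eq_coeff]

lemma fischer_comm (F G : MvPolynomial ι ℝ) : fischer F G = fischer G F := by
  classical
  induction F using MvPolynomial.induction_on' with
  | monomial s a =>
    induction G using MvPolynomial.induction_on' with
    | monomial t b =>
      rw [fischer_monomial, fischer_monomial, coeff_monomial, coeff_monomial]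
      rcases eq_or_ne s t with rfl | hst
      · simp only [if_true]
        ring
      · simp [hst, hst.symm]
    | add G G' hG hG' => simp only [map_add, LinearMap.add_apply, hG, hG']
  | add F F' hF hF' => simp only [map_add, LinearMap.add_apply, hF, hF']

lemma fischer_X_mul (k : ι) (F G : MvPolynomial ι ℝ) :
    fischer (X k * F) G = fischer F (pderiv k G) := by
  classical
  induction F using MvPolynomial.induction_on' with
  | monomial s a =>
    have hother : ∏ j ∈ Finset.univ.erase k, ((s + Finsupp.single k 1 : ι →₀ ℕ) j).factorial =
        ∏ j ∈ Finset.univ.erase k, (s j).factorial :=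
      Finset.prod_congr rfl fun j hj => by simp [(Finset.ne_of_mem_erase hj).symm]
    rw [mul_comm, ← pow_one (X k), ← monomial_add_single, fischer_monomial, fischer_monomial,
      coeff_pderiv, ← Finset.mul_prod_erase _ _ (Finset.mem_univ k),
      ← Finset.mul_prod_erase _ _ (Finset.mem_univ k), hother]
    simp only [Finsupp.add_apply, Finsupp.single_eq_same, Nat.factorial_succ]
    push_cast
    ring
  | add F H hF hH => simp only [mul_add, map_add, LinearMap.add_apply, hF, hH]

/-- By Euler's identity `n p = ∑ k, X_k ∂_k p` and induction on `n`. -/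
lemma fischer_of_isHomogeneous {n : ℕ} {p : MvPolynomial ι ℝ} (hp : p.IsHomogeneous n)
    (G : MvPolynomial ι ℝ) :
    fischer p G = (n.factorial : ℝ)⁻¹ * derivForm evalZero n p G := by
  induction n generalizing p G with
  | zero =>
    rw [eq_C_of_mem_degreeLT_one (mem_degreeLT_of_totalDegree_lt
      (hp.totalDegree_le.trans_lt one_pos)), fischer_C, derivForm_zero]
    simp
  | succ n ih =>
    have heuler : ((n + 1 : ℕ) : ℝ) • p = ∑ k, X k * pderiv k p := by
      rw [hp.sum_X_mul_pderiv, Nat.cast_smul_eq_nsmul]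
    have hderiv : ((n + 1 : ℕ) : ℝ) * fischer p G =
        (n.factorial : ℝ)⁻¹ * derivForm evalZero (n + 1) p G := by
      rw [← smul_eq_mul, ← LinearMap.smul_apply, ← map_smul, heuler, map_sum,
        LinearMap.sum_apply, derivForm_succ, Finset.mul_sum]
      exact Finset.sum_congr rfl fun k _ => by rw [fischer_X_mul, ih hp.pderiv]
    rw [Nat.factorial_succ, Nat.cast_mul, mul_inv, mul_assoc, ← hderiv,
      inv_mul_cancel_left₀ (by positivity)]

/-- The bilinear forms `(p, h) ↦ ⟨p, g⟩ ⟨f, h⟩`, as a function of `(f, g)`. -/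
noncomputable def fischerCross :
    MvPolynomial ι ℝ →ₗ[ℝ] MvPolynomial ι ℝ →ₗ[ℝ] LinearMap.BilinForm ℝ (MvPolynomial ι ℝ) :=
  LinearMap.mk₂ ℝ (fun f g => (LinearMap.mul ℝ ℝ).compl₁₂ (fischer.flip g) (fischer f))
    (fun _ _ _ => by ext; simp [mul_add]) (fun _ _ _ => by ext; simp [mul_left_comm])
    (fun _ _ _ => by ext; simp) (fun _ _ _ => by ext; simp [mul_assoc])

lemma fischerCross_apply (f g p h : MvPolynomial ι ℝ) :
    fischerCross f g p h = fischer p g * fischer f h := rfl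

lemma derivSum_fischerCross_apply (s : ℕ) (f g p h : MvPolynomial ι ℝ) :
    derivSum fischerCross s f g p h =
      ∑ J : Fin s → ι, fischer p (iterPDeriv J g) * fischer (iterPDeriv J f) h := by
  simp [derivSum_apply, fischerCross_apply]

lemma derivSeries_fischerCross_apply (N : ℕ) (f g p h : MvPolynomial ι ℝ) :
    derivSeries fischerCross N f g p h =
      ∑ s ∈ Finset.range N, (s.factorial : ℝ)⁻¹ * derivSum fischerCross s f g p h := by
  simp [derivSeries_apply]

lemma derivSeries_fischerCross_X_mul (N : ℕ) (k : ι) (f g p h : MvPolynomial ι ℝ) :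
    derivSeries fischerCross N f g (X k * p) h =
      derivSeries fischerCross N f (pderiv k g) p h := by
  simp only [derivSeries_fischerCross_apply, derivSum_fischerCross_apply, fischer_X_mul,
    iterPDeriv_pderiv]

lemma exists_fischer_eq_derivSeries (f : MvPolynomial ι ℝ) :
    ∃ N₀, ∀ N ≥ N₀, ∀ a g h,
      fischer (C a * f) (g * h) = derivSeries fischerCross N f g (C a) h := by
  induction f using MvPolynomial.induction_on with
  | C b =>
    refine ⟨1, fun N hN a g h => ?_⟩
    rw [derivSeries_C _ hN, fischerCross_apply, ← C_mul, fischer_C, fischer_C, fischer_C]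
    simp only [evalZero_apply, map_mul]
    ring
  | add f f' hf hf' =>
    obtain ⟨N₁, h₁⟩ := hf
    obtain ⟨N₂, h₂⟩ := hf'
    refine ⟨max N₁ N₂, fun N hN a g h => ?_⟩
    rw [mul_add, map_add, LinearMap.add_apply, h₁ N (le_of_max_le_left hN),
      h₂ N (le_of_max_le_right hN)]
    simp only [map_add, LinearMap.add_apply]
  | mul_X f k hf =>
    obtain ⟨N₁, h₁⟩ := hf
    refine ⟨N₁ + 1, fun N hN a g h => ?_⟩
    obtain ⟨N, rfl⟩ := Nat.exists_eq_add_of_le' (le_of_add_le_right hN)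
    have hvalue (M : ℕ) (f g h : MvPolynomial ι ℝ) : derivSeries fischerCross M f g (C a) h =
        derivSeries (fischerCross.compr₂ (LinearMap.applyₗ h ∘ₗ LinearMap.applyₗ (C a))) M f g := by
      simp [derivSeries_apply, derivSum_apply]
    rw [mul_comm f, mul_left_comm, fischer_X_mul, Derivation.leibniz, map_add, smul_eq_mul,
      smul_eq_mul, mul_comm h, h₁ (N + 1) (by omega), h₁ N (by omega), hvalue, hvalue, hvalue,
      derivSeries_X_mul fun f g => ?_]
    simp [fischerCross_apply, fischer_X_mul]

/-- The Gaussian product formula on leading parts: `⟨p f, g h⟩` is the sum over `r` and `s` of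
`(1/(r! s!)) ∑_{|I| = r} ∑_{|J| = s} ⟨∂_I p, ∂_J g⟩ ⟨∂_J f, ∂_I h⟩`. -/
lemma exists_fischer_mul_eq_derivSeries (p f : MvPolynomial ι ℝ) :
    ∃ M₀, ∀ M ≥ M₀, ∀ N ≥ M₀, ∀ g h,
      fischer (p * f) (g * h) = derivSeries (derivSeries fischerCross N f g) M p h := by
  induction p using MvPolynomial.induction_on with
  | C a =>
    obtain ⟨N₀, h₀⟩ := exists_fischer_eq_derivSeries f
    refine ⟨max N₀ 1, fun M hM N hN g h => ?_⟩
    rw [derivSeries_C _ (le_of_max_le_right hM), h₀ N (le_of_max_le_left hN)]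
  | add p p' hp hp' =>
    obtain ⟨M₁, h₁⟩ := hp
    obtain ⟨M₂, h₂⟩ := hp'
    refine ⟨max M₁ M₂, fun M hM N hN g h => ?_⟩
    rw [add_mul, map_add, LinearMap.add_apply, map_add, LinearMap.add_apply,
      h₁ M (le_of_max_le_left hM) N (le_of_max_le_left hN),
      h₂ M (le_of_max_le_right hM) N (le_of_max_le_right hN)]
  | mul_X p k hp =>
    obtain ⟨M₁, h₁⟩ := hp
    refine ⟨M₁ + 1, fun M hM N hN g h => ?_⟩
    obtain ⟨M, rfl⟩ := Nat.exists_eq_add_of_le' (le_of_add_le_right hM)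
    rw [mul_comm p, derivSeries_X_mul (derivSeries_fischerCross_X_mul N k f g), mul_assoc,
      fischer_X_mul, Derivation.leibniz, map_add, smul_eq_mul, smul_eq_mul, mul_comm h,
      h₁ M (by omega) N (by omega), h₁ (M + 1) (by omega) N (by omega), add_comm]

lemma derivSum_derivSum_fischerCross_self (r s : ℕ) (p : MvPolynomial ι ℝ) :
    derivSum (derivSum fischerCross s p p) r p p =
      ∑ I : Fin r → ι, ∑ J : Fin s → ι, fischer (iterPDeriv I p) (iterPDeriv J p) ^ 2 := by
  simp only [derivSum_apply _ r, derivSum_fischerCross_apply]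
  refine Finset.sum_congr rfl fun I _ => Finset.sum_congr rfl fun J _ => ?_
  rw [fischer_comm (iterPDeriv J p), sq]

lemma exists_fischer_mul_self_eq_sum (p : MvPolynomial ι ℝ) : ∃ M₀, ∀ M ≥ M₀,
    fischer (p * p) (p * p) = ∑ r ∈ Finset.range M, ∑ s ∈ Finset.range M,
      (r.factorial * s.factorial : ℝ)⁻¹ *
        ∑ I : Fin r → ι, ∑ J : Fin s → ι, fischer (iterPDeriv I p) (iterPDeriv J p) ^ 2 := by
  obtain ⟨M₀, h⟩ := exists_fischer_mul_eq_derivSeries p p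
  refine ⟨M₀, fun M hM => ?_⟩
  rw [h M hM M hM, derivSeries_apply]
  refine Finset.sum_congr rfl fun r _ => ?_
  have hterm : derivSum (derivSeries fischerCross M p p) r p p = ∑ s ∈ Finset.range M,
      (s.factorial : ℝ)⁻¹ * derivSum (derivSum fischerCross s p p) r p p := by
    simp only [derivSum_apply _ r, derivSeries_fischerCross_apply, Finset.mul_sum]
    exact Finset.sum_comm
  rw [hterm, smul_eq_mul, Finset.mul_sum]
  simp only [derivSum_derivSum_fischerCross_self, mul_inv, mul_assoc]

lemma sum_diag_le_sum_sum {a : ℕ → ℕ → ℝ} (ha : ∀ r s, 0 ≤ a r s) {S T : Finset ℕ} (hST : S ⊆ T) :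
    ∑ r ∈ S, a r r ≤ ∑ r ∈ T, ∑ s ∈ T, a r s :=
  (Finset.sum_le_sum fun r hr =>
    Finset.single_le_sum (f := a r) (fun s _ => ha r s) (hST hr)).trans
    (Finset.sum_le_sum_of_subset_of_nonneg hST fun r _ _ => Finset.sum_nonneg fun s _ => ha r s)

lemma sum_sq_fischer_iterPDeriv_le (p : MvPolynomial ι ℝ) (S : Finset ℕ) :
    ∑ r ∈ S, (r.factorial * r.factorial : ℝ)⁻¹ *
        ∑ I : Fin r → ι, ∑ J : Fin r → ι, fischer (iterPDeriv I p) (iterPDeriv J p) ^ 2 ≤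
      fischer (p * p) (p * p) := by
  obtain ⟨M₀, h⟩ := exists_fischer_mul_self_eq_sum p
  obtain ⟨M', hM'⟩ := S.exists_nat_subset_range
  rw [h (max M₀ M') (le_max_left _ _)]
  exact sum_diag_le_sum_sum (a := fun r s => (r.factorial * s.factorial : ℝ)⁻¹ *
    ∑ I : Fin r → ι, ∑ J : Fin s → ι, fischer (iterPDeriv I p) (iterPDeriv J p) ^ 2)
    (fun r s => by positivity)
    (hM'.trans (Finset.range_subset_range.2 (le_max_right _ _)))

end Fischer

section FourthMoment

variable {ι : Type} [Fintype ι]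

/-- The squared norm of the contraction over `s` indices of the array `(∂_I f(0))_{|I| = s + r}`
with itself. -/
noncomputable def contractionSq (r s : ℕ) (f : MvPolynomial ι ℝ) : ℝ :=
  ∑ I : Fin r → ι, ∑ J : Fin r → ι, derivForm evalZero s (iterPDeriv I f) (iterPDeriv J f) ^ 2

lemma contractionSq_zero_left (s : ℕ) (f : MvPolynomial ι ℝ) :
    contractionSq 0 s f = derivForm evalZero s f f ^ 2 := by
  simp [contractionSq, iterPDeriv_zero]

lemma contractionSq_zero_right (r : ℕ) (f : MvPolynomial ι ℝ) :
    contractionSq r 0 f = derivForm evalZero r f f ^ 2 := by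
  simp only [contractionSq, derivForm_zero, derivForm_apply _ r]
  rw [sq, Finset.sum_mul_sum]
  exact Finset.sum_congr rfl fun I _ => Finset.sum_congr rfl fun J _ => by ring

lemma contractionSq_congr {r s : ℕ} {F G : MvPolynomial ι ℝ} (h : F - G ∈ degreeLT (s + r)) :
    contractionSq r s F = contractionSq r s G := by
  have hI (I : Fin r → ι) (J : Fin s → ι) :
      iterPDeriv J (iterPDeriv I F) = iterPDeriv J (iterPDeriv I G) := by
    refine iterPDeriv_congr ?_ J
    rw [← map_sub]
    exact iterPDeriv_mem_degreeLT h I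
  simp only [contractionSq, derivForm_apply, hI]

lemma sum_sq_fischer_iterPDeriv_eq {r s : ℕ} {p : MvPolynomial ι ℝ}
    (hp : p.IsHomogeneous (s + r)) :
    ∑ I : Fin r → ι, ∑ J : Fin r → ι, fischer (iterPDeriv I p) (iterPDeriv J p) ^ 2 =
      (s.factorial ^ 2 : ℝ)⁻¹ * contractionSq r s p := by
  simp only [contractionSq, Finset.mul_sum, fun I => fischer_of_isHomogeneous
    (isHomogeneous_iterPDeriv hp I), mul_pow, inv_pow]

lemma sum_contractionSq_le {n : ℕ} {p : MvPolynomial ι ℝ} (hp : p.IsHomogeneous n)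
    {S : Finset ℕ} (hS : ∀ r ∈ S, r ≤ n) :
    ∑ r ∈ S, ((r.factorial * (n - r).factorial) ^ 2 : ℝ)⁻¹ * contractionSq r (n - r) p ≤
      fischer (p * p) (p * p) := by
  refine le_of_eq_of_le (Finset.sum_congr rfl fun r hr => ?_) (sum_sq_fischer_iterPDeriv_le p S)
  rw [sum_sq_fischer_iterPDeriv_eq (s := n - r) (by rwa [Nat.sub_add_cancel (hS r hr)]),
    mul_pow, mul_inv, mul_assoc, sq (r.factorial : ℝ)]

lemma gaussExp_sq_of_mem_chaos_eq {K m : ℕ} {Q : MvPolynomial (Fin K) ℝ} (hQ : Q ∈ chaos K m) :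
    gaussExp (Q ^ 2) = (m.factorial : ℝ)⁻¹ * derivForm evalZero m Q Q := by
  rw [gaussExp_sq_of_mem_chaos hQ, derivForm_gaussExp_eq_derivForm_evalZero
    (chaos_le_degreeLT hQ) (chaos_le_degreeLT hQ)]

lemma add_fischer_le_gaussExp_pow_four {m : ℕ} (hm : m ≠ 0) {Q p : MvPolynomial ι ℝ}
    (hQ : Q ∈ degreeLT (m + 1)) (hp : p.IsHomogeneous m) (hQp : Q - p ∈ degreeLT m) :
    gaussExp (Q ^ 2) ^ 2 + fischer (p * p) (p * p) ≤ gaussExp (Q ^ 4) := by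
  have hp' : p ∈ degreeLT (m + 1) :=
    mem_degreeLT_of_totalDegree_lt (hp.totalDegree_le.trans_lt m.lt_succ_self)
  have hsq : Q ^ 2 ∈ degreeLT (m + m + 1) := by
    rw [sq, add_right_comm]
    exact mul_mem_degreeLT hQ hQ
  have hdiff : Q ^ 2 - p * p ∈ degreeLT (m + m) := by
    rw [show Q ^ 2 - p * p = (Q - p) * (Q + p) by ring]
    exact mul_mem_degreeLT hQp (add_mem hQ hp')
  have hbessel := sum_derivForm_le_gaussExp_sq (Q ^ 2) {0, m + m}
  rw [Finset.sum_pair (by omega), derivForm_zero, derivForm_gaussExp_eq_derivForm_evalZero hsq hsq,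
    derivForm_self_congr _ hdiff, ← fischer_of_isHomogeneous (hp.mul hp), ← pow_mul] at hbessel
  simpa [sq] using hbessel

/-- The inequality of Nualart and Peccati behind the fourth moment theorem. -/
lemma contractionSq_le {K r s : ℕ} (hr : r ≠ 0) (hs : s ≠ 0) {Q : MvPolynomial (Fin K) ℝ}
    (hQ : Q ∈ chaos K (s + r)) :
    contractionSq r s Q ≤ (r.factorial * s.factorial) ^ 2 *
      (gaussExp (Q ^ 4) - 3 * gaussExp (Q ^ 2) ^ 2) := by
  set p := homogeneousComponent (s + r) Q
  have hp : p.IsHomogeneous (s + r) := homogeneousComponent_isHomogeneous (s + r) Q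
  have hQp : Q - p ∈ degreeLT (s + r) :=
    sub_homogeneousComponent_mem_degreeLT (chaos_le_degreeLT hQ)
  have hfour := add_fischer_le_gaussExp_pow_four (by omega) (chaos_le_degreeLT hQ) hp hQp
  have hcontr := sum_contractionSq_le hp (S := {0, s + r, r}) (by simp)
  rw [Finset.sum_insert (by simp; omega), Finset.sum_pair (by omega)] at hcontr
  simp only [Nat.sub_zero, Nat.sub_self, Nat.add_sub_cancel, contractionSq_zero_left,
    contractionSq_zero_right, Nat.factorial_zero, Nat.cast_one, one_mul, mul_one, ← inv_pow,
    ← mul_pow, ← derivForm_self_congr _ hQp, ← contractionSq_congr hQp,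
    ← gaussExp_sq_of_mem_chaos_eq hQ] at hcontr
  rw [mul_comm, ← div_le_iff₀ (by positivity), div_eq_inv_mul, ← inv_pow]
  linarith

end FourthMoment

section QuadraticForms

variable {ι : Type} [Fintype ι]

lemma integral_cexp_gaussPi (v : ι → ℝ) :
    ∫ x, Complex.exp ((∑ i, x i * v i : ℝ) * Complex.I) ∂gaussPi ι =
      Complex.exp ((-(∑ i, v i ^ 2) / 2 : ℝ)) := by
  have hcoord (i : ι) : ∫ t : ℝ, Complex.exp (v i * t * Complex.I) ∂gaussianReal 0 1 =
      Complex.exp ((-(v i ^ 2) / 2 : ℝ)) := by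
    rw [← charFun_apply_real, charFun_gaussianReal]
    simp [neg_div]
  have hprod (x : ι → ℝ) : Complex.exp ((∑ i, x i * v i : ℝ) * Complex.I) =
      ∏ i, Complex.exp (v i * x i * Complex.I) := by
    simp only [← Complex.exp_sum, ← Finset.sum_mul, Complex.ofReal_sum, Complex.ofReal_mul,
      mul_comm (v _ : ℂ)]
  simp only [hprod]
  rw [gaussPi, integral_fintype_prod_eq_prod fun i (t : ℝ) => Complex.exp (v i * t * Complex.I)]
  simp only [hcoord, ← Complex.exp_sum, ← Complex.ofReal_sum, ← Finset.sum_div,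
    Finset.sum_neg_distrib]

lemma integral_cos_gaussPi (v : ι → ℝ) :
    ∫ x, Real.cos (∑ i, x i * v i) ∂gaussPi ι = Real.exp (-(∑ i, v i ^ 2) / 2) := by
  have h_int : Integrable (fun x : ι → ℝ => Complex.exp ((∑ i, x i * v i : ℝ) * Complex.I))
      (gaussPi ι) :=
    Integrable.of_bound (Continuous.aestronglyMeasurable (by fun_prop)) 1
      (Eventually.of_forall fun x => (Complex.norm_exp_ofReal_mul_I _).le)
  have h := congrArg Complex.re (integral_cexp_gaussPi v)
  rw [← RCLike.re_eq_complex_re, ← integral_re h_int] at h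
  simpa only [RCLike.re_eq_complex_re, Complex.exp_ofReal_mul_I_re, Complex.exp_ofReal_re] using h

/-- The quadratic form with matrix `M`, as a polynomial. -/
noncomputable def quadForm (M : ι → ι → ℝ) : MvPolynomial ι ℝ := ∑ i, ∑ j, M i j • (X i * X j)

lemma eval_quadForm (M : ι → ι → ℝ) (x : ι → ℝ) :
    eval x (quadForm M) = ∑ i, ∑ j, x i * x j * M i j := by
  simp [quadForm, smul_eval, mul_comm]

lemma pderiv_quadForm (M : ι → ι → ℝ) (k : ι) :
    pderiv k (quadForm M) = ∑ i, (M k i + M i k) • X i := by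
  classical
  simp [quadForm, pderiv_X, Pi.single_apply, Finset.sum_add_distrib, add_smul, add_comm]

lemma pderiv_pderiv_quadForm (M : ι → ι → ℝ) (k l : ι) :
    pderiv l (pderiv k (quadForm M)) = C (M k l + M l k) := by
  classical
  simp [pderiv_quadForm, pderiv_X, Pi.single_apply, smul_eq_C_mul]

lemma gaussExp_X (i : ι) : gaussExp (X i : MvPolynomial ι ℝ) = 0 := by
  rw [← mul_one (X i), gaussExp_X_mul, pderiv_one, map_zero]

lemma gaussExp_quadForm (M : ι → ι → ℝ) : gaussExp (quadForm M) = ∑ i, M i i := by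
  classical
  have hcov (i j : ι) : gaussExp (X i * X j : MvPolynomial ι ℝ) = if i = j then 1 else 0 := by
    rw [gaussExp_X_mul, pderiv_X, Pi.single_apply, apply_ite gaussExp, map_zero, ← C_1,
      gaussExp_C]
    simp only [eq_comm]
  simp [quadForm, hcov]

lemma gaussExp_quadForm_sq_le (M : ι → ι → ℝ) :
    gaussExp (quadForm M ^ 2) ≤ (∑ i, M i i) ^ 2 + 2 * ∑ i, ∑ j, M i j ^ 2 := by
  have hdeg : quadForm M ∈ degreeLT 3 := by
    simp only [mem_degreeLT_succ (n := 1), mem_degreeLT_succ (n := 2), pderiv_pderiv_quadForm]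
    exact fun _ _ => C_mem_degreeLT _
  have hsymm : ∑ i, ∑ j, (M i j + M j i) ^ 2 ≤ 4 * ∑ i, ∑ j, M i j ^ 2 :=
    calc ∑ i, ∑ j, (M i j + M j i) ^ 2
        ≤ ∑ i, ∑ j, (2 * M i j ^ 2 + 2 * M j i ^ 2) := by
          gcongr with i _ j _
          linarith [add_sq_le (a := M i j) (b := M j i)]
      _ = 4 * ∑ i, ∑ j, M i j ^ 2 := by
          simp only [Finset.sum_add_distrib, ← Finset.mul_sum,
            Finset.sum_comm (f := fun i j => M j i ^ 2)]
          ring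
  have hgrad (k : ι) : gaussExp (pderiv k (quadForm M)) = 0 := by
    simp [pderiv_quadForm, gaussExp_X]
  rw [gaussExp_sq_eq_sum hdeg]
  simp only [Finset.sum_range_succ, Finset.sum_range_zero, derivForm_succ, derivForm_zero,
    pderiv_pderiv_quadForm, gaussExp_C, gaussExp_quadForm, hgrad, ← sq, Nat.factorial]
  norm_num
  linarith

lemma gaussExp_quadForm_sub_trace_sq_le (M : ι → ι → ℝ) :
    gaussExp ((quadForm M - C (∑ i, M i i)) ^ 2) ≤ 2 * ∑ i, ∑ j, M i j ^ 2 := by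
  set t := ∑ i, M i i
  have hexpand : (quadForm M - C t) ^ 2 = quadForm M ^ 2 - (2 * t) • quadForm M + C (t ^ 2) := by
    simp only [smul_eq_C_mul, map_mul, map_ofNat, map_pow]
    ring
  have hsq := gaussExp_quadForm_sq_le M
  have htrace := gaussExp_quadForm M
  rw [hexpand, map_add, map_sub, map_smul, gaussExp_C, htrace, smul_eq_mul]
  linarith

lemma integrable_sum_mul_sq (v : ι → ℝ) :
    Integrable (fun x => (∑ i, x i * v i) ^ 2) (gaussPi ι) := by
  have h := integrable_eval ((∑ i, X i * C (v i)) ^ 2)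
  simpa only [map_pow, map_sum, map_mul, eval_X, eval_C] using h

lemma integral_sum_mul_sq (v : ι → ℝ) :
    ∫ x, (∑ i, x i * v i) ^ 2 ∂gaussPi ι = ∑ i, v i ^ 2 := by
  have h := gaussExp_quadForm fun i j => v i * v j
  simp only [gaussExp_apply, eval_quadForm] at h
  simp only [sq, ← h, Finset.sum_mul_sum, mul_mul_mul_comm]

end QuadraticForms

section DirectionalDerivative

variable {ι : Type} [Fintype ι]

/-- The directional derivative `∑ k, x k ∂_k`. -/
noncomputable def dirDeriv (x : ι → ℝ) : MvPolynomial ι ℝ →ₗ[ℝ] MvPolynomial ι ℝ :=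
  ∑ k, x k • (pderiv k).toLinearMap

lemma dirDeriv_apply (x : ι → ℝ) (f : MvPolynomial ι ℝ) :
    dirDeriv x f = ∑ k, x k • pderiv k f := by
  simp [dirDeriv]

lemma bilinForm_dirDeriv (B : LinearMap.BilinForm ℝ (MvPolynomial ι ℝ)) (x y : ι → ℝ)
    (f g : MvPolynomial ι ℝ) :
    B (dirDeriv x f) (dirDeriv y g) = ∑ i, ∑ j, x i * y j * B (pderiv i f) (pderiv j g) := by
  simp only [dirDeriv_apply, map_sum, map_smul, LinearMap.sum_apply, LinearMap.smul_apply,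
    smul_eq_mul, Finset.mul_sum, mul_assoc, mul_left_comm (y _)]
  exact Finset.sum_comm

lemma iterPDeriv_dirDeriv {r : ℕ} (I : Fin r → ι) (x : ι → ℝ) (f : MvPolynomial ι ℝ) :
    iterPDeriv I (dirDeriv x f) = dirDeriv x (iterPDeriv I f) := by
  simp [dirDeriv_apply, iterPDeriv_pderiv]

lemma contractionSq_nonneg (r s : ℕ) (f : MvPolynomial ι ℝ) : 0 ≤ contractionSq r s f :=
  Finset.sum_nonneg fun _ _ => Finset.sum_nonneg fun _ _ => sq_nonneg _

lemma contractionSq_succ (r s : ℕ) (f : MvPolynomial ι ℝ) :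
    contractionSq (r + 1) s f = ∑ I : Fin r → ι, ∑ J : Fin r → ι, ∑ k, ∑ l,
      derivForm evalZero s (pderiv k (iterPDeriv I f)) (pderiv l (iterPDeriv J f)) ^ 2 := by
  simp only [contractionSq, sum_cons, iterPDeriv_cons, iterPDeriv_pderiv]
  rw [Finset.sum_comm]
  refine Finset.sum_congr rfl fun I _ => ?_
  rw [Finset.sum_congr rfl fun k _ => Finset.sum_comm, Finset.sum_comm]

lemma contractionSq_one (s : ℕ) (f : MvPolynomial ι ℝ) :
    contractionSq 1 s f = ∑ k, ∑ l, derivForm evalZero s (pderiv k f) (pderiv l f) ^ 2 := by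
  simp [contractionSq_succ 0, iterPDeriv_zero]

lemma contractionSq_smul (r s : ℕ) (c : ℝ) (f : MvPolynomial ι ℝ) :
    contractionSq r s (c • f) = c ^ 4 * contractionSq r s f := by
  simp only [contractionSq, map_smul, LinearMap.smul_apply, smul_eq_mul, Finset.mul_sum]
  exact Finset.sum_congr rfl fun I _ => Finset.sum_congr rfl fun J _ => by ring

lemma sum_sum_sq_sum_mul {α β : Type*} [Fintype α] [Fintype β] (a b : α → β → ℝ) :
    ∑ i, ∑ j, (∑ l, a i l * b j l) ^ 2 =
      ∑ l, ∑ l', (∑ i, a i l * a i l') * ∑ j, b j l * b j l' := by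
  calc ∑ i, ∑ j, (∑ l, a i l * b j l) ^ 2
      = ∑ ij : α × α, ∑ ll : β × β, a ij.1 ll.1 * a ij.1 ll.2 * (b ij.2 ll.1 * b ij.2 ll.2) := by
        simp only [Fintype.sum_prod_type]
        refine Finset.sum_congr rfl fun i _ => Finset.sum_congr rfl fun j _ => ?_
        rw [sq, Finset.sum_mul_sum]
        exact Finset.sum_congr rfl fun l _ => Finset.sum_congr rfl fun l' _ => by ring
    _ = _ := by
        rw [Finset.sum_comm]
        simp only [Fintype.sum_prod_type, Finset.sum_mul_sum]

lemma sum_sum_sq_gram_add_le {α β : Type*} [Fintype α] [Fintype β] (a b : α → β → ℝ) :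
    ∑ i, ∑ j, (∑ l, (a i l + b i l) * (a j l + b j l)) ^ 2 ≤
      8 * ∑ i, ∑ j, (∑ l, a i l * a j l) ^ 2 + 8 * ∑ i, ∑ j, (∑ l, b i l * b j l) ^ 2 := by
  have hcross : 2 * ∑ i, ∑ j, (∑ l, a i l * b j l) ^ 2 ≤
      ∑ i, ∑ j, (∑ l, a i l * a j l) ^ 2 + ∑ i, ∑ j, (∑ l, b i l * b j l) ^ 2 := by
    rw [sum_sum_sq_sum_mul, sum_sum_sq_sum_mul, sum_sum_sq_sum_mul]
    rw [← Finset.sum_add_distrib, Finset.mul_sum]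
    gcongr with l
    rw [← Finset.sum_add_distrib, Finset.mul_sum]
    gcongr with l'
    linarith [two_mul_le_add_sq (∑ i, a i l * a i l') (∑ i, b i l * b i l')]
  have hswap : ∑ i, ∑ j, (∑ l, b i l * a j l) ^ 2 = ∑ i, ∑ j, (∑ l, a i l * b j l) ^ 2 := by
    rw [Finset.sum_comm]
    simp only [mul_comm]
  have hfour (w x y z : ℝ) : (w + x + (y + z)) ^ 2 ≤
      4 * w ^ 2 + 4 * x ^ 2 + (4 * y ^ 2 + 4 * z ^ 2) := by
    linarith [add_sq_le (a := w + x) (b := y + z), add_sq_le (a := w) (b := x),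
      add_sq_le (a := y) (b := z)]
  calc ∑ i, ∑ j, (∑ l, (a i l + b i l) * (a j l + b j l)) ^ 2
      ≤ ∑ i, ∑ j, (4 * (∑ l, a i l * a j l) ^ 2 + 4 * (∑ l, b i l * a j l) ^ 2
        + (4 * (∑ l, a i l * b j l) ^ 2 + 4 * (∑ l, b i l * b j l) ^ 2)) := by
        gcongr with i _ j _
        simp only [mul_add, add_mul, Finset.sum_add_distrib]
        exact hfour _ _ _ _
    _ ≤ _ := by
        simp only [Finset.sum_add_distrib, ← Finset.mul_sum, hswap]
        linarith

lemma contractionSq_add_le (r s : ℕ) (f g : MvPolynomial ι ℝ) :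
    contractionSq r s (f + g) ≤ 8 * contractionSq r s f + 8 * contractionSq r s g := by
  simp only [contractionSq, derivForm_apply]
  simpa only [map_add] using sum_sum_sq_gram_add_le
    (fun (I : Fin r → ι) (L : Fin s → ι) => evalZero (iterPDeriv L (iterPDeriv I f)))
    (fun (I : Fin r → ι) (L : Fin s → ι) => evalZero (iterPDeriv L (iterPDeriv I g)))

lemma contractionSq_sum_le (r s : ℕ) {α : Type*} (S : Finset α) (f : α → MvPolynomial ι ℝ) :
    contractionSq r s (∑ a ∈ S, f a) ≤ 8 ^ S.card * ∑ a ∈ S, contractionSq r s (f a) := by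
  classical
  induction S using Finset.induction_on with
  | empty => simp [contractionSq]
  | insert a S ha ih =>
    rw [Finset.sum_insert ha, Finset.card_insert_of_notMem ha, Finset.sum_insert ha, pow_succ]
    have hadd := contractionSq_add_le r s (f a) (∑ i ∈ S, f i)
    have hpow : (1 : ℝ) ≤ 8 ^ S.card := one_le_pow₀ (by norm_num)
    nlinarith [contractionSq_nonneg r s (f a)]

lemma contractionSq_dirDeriv (r s : ℕ) (x : ι → ℝ) (f : MvPolynomial ι ℝ) :
    contractionSq r s (dirDeriv x f) = ∑ I : Fin r → ι, ∑ J : Fin r → ι,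
      eval x (quadForm fun i j => derivForm evalZero s
        (pderiv i (iterPDeriv I f)) (pderiv j (iterPDeriv J f))) ^ 2 := by
  simp only [contractionSq, iterPDeriv_dirDeriv, bilinForm_dirDeriv, eval_quadForm]

lemma integrable_contractionSq_dirDeriv (r s : ℕ) (f : MvPolynomial ι ℝ) :
    Integrable (fun x => contractionSq r s (dirDeriv x f)) (gaussPi ι) := by
  simp only [contractionSq_dirDeriv, ← map_pow, ← map_sum]
  exact integrable_eval _

lemma integral_contractionSq_dirDeriv_le (r s : ℕ) (f : MvPolynomial ι ℝ) :
    ∫ x, contractionSq r s (dirDeriv x f) ∂gaussPi ι ≤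
      contractionSq r (s + 1) f + 2 * contractionSq (r + 1) s f := by
  simp only [contractionSq_dirDeriv, ← map_pow, ← map_sum, ← gaussExp_apply]
  simp only [map_sum, contractionSq_succ, contractionSq.eq_1 r (s + 1), derivForm_succ,
    Finset.mul_sum, ← Finset.sum_add_distrib]
  gcongr with I _ J _
  simpa only [Finset.mul_sum] using gaussExp_quadForm_sq_le fun i j =>
    derivForm evalZero s (pderiv i (iterPDeriv I f)) (pderiv j (iterPDeriv J f))

lemma integral_sq_derivForm_dirDeriv_sub_le (n : ℕ) (f : MvPolynomial ι ℝ) :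
    ∫ x, (derivForm evalZero n (dirDeriv x f) (dirDeriv x f) -
      derivForm evalZero (n + 1) f f) ^ 2 ∂gaussPi ι ≤ 2 * contractionSq 1 n f := by
  have h := gaussExp_quadForm_sub_trace_sq_le fun i j =>
    derivForm evalZero n (pderiv i f) (pderiv j f)
  simpa only [gaussExp_apply, map_pow, map_sub, eval_C, eval_quadForm, ← contractionSq_one,
    ← bilinForm_dirDeriv, ← derivForm_succ] using h

lemma integral_integral_sq_derivForm_dirDeriv (n : ℕ) (f : MvPolynomial ι ℝ) :
    ∫ y, ∫ x, derivForm evalZero n (dirDeriv x f) (dirDeriv y f) ^ 2 ∂gaussPi ι ∂gaussPi ι =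
      contractionSq 1 n f := by
  have hinner (y : ι → ℝ) :
      ∫ x, derivForm evalZero n (dirDeriv x f) (dirDeriv y f) ^ 2 ∂gaussPi ι =
        ∑ i, (∑ j, y j * derivForm evalZero n (pderiv i f) (pderiv j f)) ^ 2 := by
    simp only [← integral_sum_mul_sq, bilinForm_dirDeriv, Finset.mul_sum, mul_assoc]
  simp only [hinner]
  rw [integral_finsetSum _ fun i _ => integrable_sum_mul_sq _]
  simp only [integral_sum_mul_sq, contractionSq_one]

end DirectionalDerivative

section Decoupling

variable {ι : Type} [Fintype ι] {n q : ℕ}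

/-- The iterated directional derivative at the origin, in the directions `y 0, …, y (n - 1)`: for
`f` homogeneous of degree `n` it is `n!` times the polarization of `f`. -/
noncomputable def multiDeriv : (n : ℕ) → (Fin n → ι → ℝ) → (MvPolynomial ι ℝ →ₗ[ℝ] ℝ)
  | 0, _ => evalZero
  | n + 1, y => (multiDeriv n (Fin.tail y)).comp (dirDeriv (y 0))

lemma multiDeriv_succ (y : Fin (n + 1) → ι → ℝ) (f : MvPolynomial ι ℝ) :
    multiDeriv (n + 1) y f = multiDeriv n (Fin.tail y) (dirDeriv (y 0) f) :=
  rfl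

lemma multiDeriv_cons (x : ι → ℝ) (y : Fin n → ι → ℝ) (f : MvPolynomial ι ℝ) :
    multiDeriv (n + 1) (Fin.cons x y : Fin (n + 1) → ι → ℝ) f = multiDeriv n y (dirDeriv x f) := by
  rw [multiDeriv_succ, Fin.tail_cons, Fin.cons_zero]

lemma multiDeriv_dirDeriv (x : ι → ℝ) (y : Fin n → ι → ℝ) (f : MvPolynomial ι ℝ) :
    multiDeriv n y (dirDeriv x f) = ∑ k, x k * multiDeriv n y (pderiv k f) := by
  simp [dirDeriv_apply]

lemma multiDeriv_sum_smul {α : Type*} [Fintype α] (y : Fin n → ι → ℝ) (g : α → ℝ)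
    (F : α → MvPolynomial ι ℝ) :
    multiDeriv n y (∑ j, g j • F j) = ∑ j, g j * multiDeriv n y (F j) := by
  simp

@[fun_prop]
lemma continuous_multiDeriv {α : Type*} [TopologicalSpace α] {u : α → Fin n → ι → ℝ}
    (hu : Continuous u) (f : MvPolynomial ι ℝ) : Continuous fun a => multiDeriv n (u a) f := by
  induction n generalizing f with
  | zero => exact continuous_const
  | succ n ih =>
    simp only [multiDeriv_succ, multiDeriv_dirDeriv]
    refine continuous_finsetSum _ fun k _ => .mul (by fun_prop) (ih ?_ _)
    unfold Fin.tail
    fun_prop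

/-- The law of `n` independent standard Gaussian vectors of `ℝ^ι`. -/
noncomputable def gaussCopies (n : ℕ) (ι : Type) [Fintype ι] : Measure (Fin n → ι → ℝ) :=
  Measure.pi fun _ => gaussPi ι

instance : IsProbabilityMeasure (gaussCopies n ι) := by
  unfold gaussCopies
  infer_instance

lemma integral_gaussCopies_succ (h : (Fin (n + 1) → ι → ℝ) → ℝ) :
    ∫ y, h y ∂gaussCopies (n + 1) ι =
      ∫ z, h (Fin.cons z.1 z.2) ∂(gaussPi ι).prod (gaussCopies n ι) := by
  have hpres := (measurePreserving_piFinSuccAbove (fun _ : Fin (n + 1) => gaussPi ι) 0).symm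
  unfold gaussCopies
  rw [← hpres.integral_comp']
  simp [MeasurableEquiv.piFinSuccAbove, Fin.insertNthEquiv]

/-- The characteristic function at `1` of the decoupled form of `f`, that is of
`multiDeriv n (y 0, …, y (n - 1)) f` for independent Gaussian vectors `y i`. It is real since the
law of the decoupled form is symmetric for `n ≠ 0`. -/
noncomputable def decoupledCharFun (n : ℕ) (f : MvPolynomial ι ℝ) : ℝ :=
  ∫ y, Real.cos (multiDeriv n y f) ∂gaussCopies n ι

lemma integrable_of_continuous_of_bound {α : Type*} [TopologicalSpace α] [MeasurableSpace α]
    [OpensMeasurableSpace α] {μ : Measure α} [IsFiniteMeasure μ] {g : α → ℝ}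
    (hg : Continuous g) {b : ℝ} (hb : ∀ a, |g a| ≤ b) : Integrable g μ :=
  .of_bound hg.measurable.aestronglyMeasurable b (Eventually.of_forall hb)

lemma integral_le_of_forall_le {α : Type*} [MeasurableSpace α] {μ : Measure α}
    [IsProbabilityMeasure μ] {g : α → ℝ} (hg : Integrable g μ) {b : ℝ} (hb : ∀ a, g a ≤ b) :
    ∫ a, g a ∂μ ≤ b := by
  simpa using integral_mono hg (integrable_const b) hb

lemma decoupledCharFun_le_one (f : MvPolynomial ι ℝ) : decoupledCharFun n f ≤ 1 :=
  integral_le_of_forall_le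
    (integrable_of_continuous_of_bound (by fun_prop) fun _ => Real.abs_cos_le_one _)
    fun _ => Real.cos_le_one _

lemma decoupledCharFun_succ (f : MvPolynomial ι ℝ) :
    decoupledCharFun (n + 1) f =
      ∫ y, Real.exp (-(∑ k, multiDeriv n y (pderiv k f) ^ 2) / 2) ∂gaussCopies n ι := by
  unfold decoupledCharFun
  rw [integral_gaussCopies_succ]
  simp only [multiDeriv_cons, multiDeriv_dirDeriv]
  rw [integral_prod_symm]
  · simp only [integral_cos_gaussPi]
  · exact integrable_of_continuous_of_bound (by fun_prop) fun _ => Real.abs_cos_le_one _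

lemma integrable_decoupledCharFun_sum_smul {α : Type} [Fintype α] (F : α → MvPolynomial ι ℝ) :
    Integrable (fun g : α → ℝ => decoupledCharFun n (∑ j, g j • F j)) (gaussPi α) := by
  unfold decoupledCharFun
  simp only [multiDeriv_sum_smul]
  have hprod : Integrable (fun z : (α → ℝ) × (Fin n → ι → ℝ) =>
      Real.cos (∑ j, z.1 j * multiDeriv n z.2 (F j))) ((gaussPi α).prod (gaussCopies n ι)) :=
    integrable_of_continuous_of_bound (by fun_prop) fun _ => Real.abs_cos_le_one _
  exact hprod.integral_prod_left

lemma integral_exp_neg_sum_multiDeriv_sq {α : Type} [Fintype α] (F : α → MvPolynomial ι ℝ) :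
    ∫ y, Real.exp (-(∑ j, multiDeriv n y (F j) ^ 2) / 2) ∂gaussCopies n ι =
      ∫ g, decoupledCharFun n (∑ j, g j • F j) ∂gaussPi α := by
  unfold decoupledCharFun
  simp only [multiDeriv_sum_smul]
  rw [integral_integral_swap]
  · simp only [integral_cos_gaussPi]
  · exact integrable_of_continuous_of_bound (by fun_prop) fun _ => Real.abs_cos_le_one _

lemma exp_neg_div_mem_Icc {s c : ℝ} (hs : 0 ≤ s) (hc : 0 ≤ c) :
    Real.exp (-s / c) ∈ Set.Icc 0 1 :=
  ⟨(Real.exp_pos _).le, Real.exp_le_one_iff.2 (div_nonpos_of_nonpos_of_nonneg (by linarith) hc)⟩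

lemma abs_le_one_of_mem_Icc {a : ℝ} (ha : a ∈ Set.Icc 0 1) : |a| ≤ 1 :=
  abs_le.2 ⟨by linarith [ha.1], ha.2⟩

lemma half_le_integral_exp_neg_sq {v : ι → ℝ} {e : ℝ} (he : 0 < e) (hv : ∑ k, v k ^ 2 ≤ e) :
    (1 / 2 : ℝ) ≤ ∫ x, Real.exp (-(∑ k, x k * v k) ^ 2 / (2 * e)) ∂gaussPi ι := by
  have h_int := (integrable_sum_mul_sq v).div_const (2 * e)
  calc (1 / 2 : ℝ) ≤ 1 - (∑ k, v k ^ 2) / (2 * e) := by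
        have : (∑ k, v k ^ 2) / (2 * e) ≤ 1 / 2 := by
          rw [div_le_div_iff₀ (by positivity) (by norm_num)]
          linarith
        linarith
    _ = ∫ x, (1 - (∑ k, x k * v k) ^ 2 / (2 * e)) ∂gaussPi ι := by
        rw [integral_sub (integrable_const _) h_int, integral_div, integral_sum_mul_sq]
        simp
    _ ≤ _ := by
        refine integral_mono ((integrable_const _).sub h_int)
          (integrable_of_continuous_of_bound (by fun_prop) fun x =>
            abs_le_one_of_mem_Icc (exp_neg_div_mem_Icc (sq_nonneg _) (by positivity))) fun x => ?_
        have := Real.add_one_le_exp (-(∑ k, x k * v k) ^ 2 / (2 * e))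
        simp only [neg_div] at this ⊢
        linarith

lemma integral_le_of_integral_section_le {α β : Type*} [MeasurableSpace α] [MeasurableSpace β]
    {μ : Measure α} {ν : Measure β} [IsProbabilityMeasure μ] [IsProbabilityMeasure ν]
    {g : α → β → ℝ} (hgm : Measurable (Function.uncurry g)) (hg : ∀ x y, g x y ∈ Set.Icc 0 1)
    {S : Set α} {b c d : ℝ} (hd : 0 < d) (hS : MeasurableSet S) (hSd : μ.real Sᶜ ≤ d)
    (hgS : ∀ x ∈ S, ∫ y, g x y ∂ν ≤ b) (hb : 0 ≤ b) (hc : 0 ≤ c) {h : β → ℝ}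
    (hh : Integrable h ν) (hh1 : ∀ y, h y ≤ 1) (hhc : ∀ y, h y ≤ c ∨ 2 * d ≤ ∫ x, g x y ∂μ) :
    ∫ y, h y ∂ν ≤ c + d⁻¹ * b := by
  have h_int : Integrable (Function.uncurry g) ((μ.restrict S).prod ν) :=
    .of_bound hgm.aestronglyMeasurable 1 (Eventually.of_forall fun z =>
      abs_le_one_of_mem_Icc (hg z.1 z.2))
  have hsection (y : β) : Integrable (g · y) μ :=
    .of_bound hgm.of_uncurry_right.aestronglyMeasurable 1
      (Eventually.of_forall fun x => abs_le_one_of_mem_Icc (hg x y))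
  have hpoint (y : β) : h y ≤ c + d⁻¹ * ∫ x in S, g x y ∂μ := by
    have hpos : 0 ≤ ∫ x in S, g x y ∂μ := integral_nonneg fun x => (hg x y).1
    rcases hhc y with hy | hy
    · nlinarith [mul_nonneg (inv_pos.2 hd).le hpos]
    · have hcompl : ∫ x in Sᶜ, g x y ∂μ ≤ d :=
        calc ∫ x in Sᶜ, g x y ∂μ ≤ ∫ _ in Sᶜ, 1 ∂μ :=
              integral_mono (hsection y).integrableOn (integrable_const _) fun x => (hg x y).2
          _ ≤ d := by simpa using hSd
      have hlarge : d ≤ ∫ x in S, g x y ∂μ := by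
        linarith [integral_add_compl hS (hsection y)]
      linarith [hh1 y, (le_inv_mul_iff₀ hd).2 ((mul_one d).trans_le hlarge)]
  have hmarginal : Integrable (fun y => d⁻¹ * ∫ x in S, g x y ∂μ) ν :=
    h_int.integral_prod_right.const_mul _
  calc ∫ y, h y ∂ν ≤ ∫ y, (c + d⁻¹ * ∫ x in S, g x y ∂μ) ∂ν :=
        integral_mono hh ((integrable_const _).add hmarginal) hpoint
    _ = c + d⁻¹ * ∫ x in S, ∫ y, g x y ∂ν ∂μ := by
        rw [integral_add (integrable_const _) hmarginal, integral_const_mul,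
          integral_integral_swap h_int]
        simp
    _ ≤ c + d⁻¹ * b := by
        gcongr
        calc ∫ x in S, ∫ y, g x y ∂ν ∂μ ≤ ∫ _ in S, b ∂μ :=
              setIntegral_mono_on h_int.integral_prod_left (integrable_const _) hS hgS
          _ = μ.real S * b := by simp
          _ ≤ b := mul_le_of_le_one_left hb measureReal_le_one

lemma half_pow_le_integral_exp_neg_sum_multiDeriv_sq {y : Fin n → ι → ℝ} {f : MvPolynomial ι ℝ}
    {e : ℝ} (he : 0 < e) (hy : ∑ k, multiDeriv n y (pderiv k f) ^ 2 ≤ e) :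
    (1 / 2 : ℝ) ^ q ≤ ∫ X : Fin q → ι → ℝ,
      Real.exp (-(∑ j, multiDeriv n y (dirDeriv (X j) f) ^ 2) / (2 * e)) ∂gaussCopies q ι := by
  have hexp (X : Fin q → ι → ℝ) :
      Real.exp (-(∑ j, multiDeriv n y (dirDeriv (X j) f) ^ 2) / (2 * e)) =
        ∏ j, Real.exp (-(∑ k, X j k * multiDeriv n y (pderiv k f)) ^ 2 / (2 * e)) := by
    simp only [← Real.exp_sum, multiDeriv_dirDeriv, ← Finset.sum_div, Finset.sum_neg_distrib]
  simp only [hexp]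
  rw [gaussCopies, integral_fintype_prod_eq_pow (ι := Fin q) fun x : ι → ℝ =>
    Real.exp (-(∑ k, x k * multiDeriv n y (pderiv k f)) ^ 2 / (2 * e)), Fintype.card_fin]
  exact pow_le_pow_left₀ (by norm_num) (half_le_integral_exp_neg_sq he hy) q

/-- Replacing the gradient of `f` by `q` random directional derivatives: the Gaussian integration
over `ι` is traded for one over `Fin q`, whose dimension is under control. -/
lemma decoupledCharFun_succ_le {f : MvPolynomial ι ℝ} {e b : ℝ} (he : 0 < e) (hb : 0 ≤ b)
    {S : Set (Fin q → ι → ℝ)} (hS : MeasurableSet S)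
    (hSc : (gaussCopies q ι).real Sᶜ ≤ (1 / 2) ^ (q + 1))
    (hgood : ∀ X ∈ S, ∫ g, decoupledCharFun n (∑ j, g j • (√e)⁻¹ • dirDeriv (X j) f)
      ∂gaussPi (Fin q) ≤ b) :
    decoupledCharFun (n + 1) f ≤ Real.exp (-e / 2) + 2 ^ (q + 1) * b := by
  set g : (Fin q → ι → ℝ) → (Fin n → ι → ℝ) → ℝ := fun X y =>
    Real.exp (-(∑ j, multiDeriv n y (dirDeriv (X j) f) ^ 2) / (2 * e)) with hgdef
  have hgS (X) (hX : X ∈ S) : ∫ y, g X y ∂gaussCopies n ι ≤ b := by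
    refine le_of_eq_of_le ?_ (hgood X hX)
    rw [← integral_exp_neg_sum_multiDeriv_sq]
    simp only [hgdef, map_smul, smul_eq_mul, mul_pow, inv_pow, Real.sq_sqrt he.le,
      ← Finset.mul_sum]
    congr with y
    field_simp
  have hgm : Measurable (Function.uncurry g) := by
    refine Continuous.measurable ?_
    simp only [hgdef, Function.uncurry_def, multiDeriv_dirDeriv]
    fun_prop
  have hmem (y : Fin n → ι → ℝ) :
      Real.exp (-(∑ k, multiDeriv n y (pderiv k f) ^ 2) / 2) ∈ Set.Icc 0 1 :=
    exp_neg_div_mem_Icc (by positivity) (by norm_num)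
  rw [decoupledCharFun_succ]
  have h := integral_le_of_integral_section_le hgm
    (fun X y => exp_neg_div_mem_Icc (by positivity) (by positivity)) (by positivity) hS hSc hgS hb
    (Real.exp_nonneg (-e / 2))
    (integrable_of_continuous_of_bound (by fun_prop) fun y => abs_le_one_of_mem_Icc (hmem y))
    (fun y => (hmem y).2) fun y => ?_
  · simpa using h
  rcases le_or_gt (∑ k, multiDeriv n y (pderiv k f) ^ 2) e with hy | hy
  · right
    calc 2 * (1 / 2 : ℝ) ^ (q + 1) = (1 / 2) ^ q := by rw [pow_succ]; ring
      _ ≤ _ := half_pow_le_integral_exp_neg_sum_multiDeriv_sq he hy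
  · left
    gcongr

end Decoupling

section SmallBalls

lemma gaussianPDFReal_zero_one_le_half (x : ℝ) : gaussianPDFReal 0 1 x ≤ 1 / 2 := by
  have hsqrt : (2 : ℝ) ≤ √(2 * Real.pi) :=
    Real.le_sqrt_of_sq_le (by linarith [Real.pi_gt_three])
  have hexp : Real.exp (-x ^ 2 / 2) ≤ 1 := Real.exp_le_one_iff.2 (by linarith [sq_nonneg x])
  simp only [gaussianPDFReal, NNReal.coe_one, mul_one, sub_zero]
  calc (√(2 * Real.pi))⁻¹ * Real.exp (-x ^ 2 / 2) ≤ 2⁻¹ * 1 := by gcongr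
    _ = 1 / 2 := by norm_num

lemma gaussianReal_Icc_le {ρ : ℝ} (hρ : 0 ≤ ρ) : (gaussianReal 0 1).real (Set.Icc (-ρ) ρ) ≤ ρ := by
  rw [measureReal_def, gaussianReal_apply_eq_integral _ one_ne_zero,
    ENNReal.toReal_ofReal (integral_nonneg fun x => gaussianPDFReal_nonneg 0 1 x)]
  calc ∫ x in Set.Icc (-ρ) ρ, gaussianPDFReal 0 1 x ≤ ∫ _ in Set.Icc (-ρ) ρ, (1 / 2 : ℝ) :=
        setIntegral_mono (integrable_gaussianPDFReal 0 1).integrableOn (by simp)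
          gaussianPDFReal_zero_one_le_half
    _ = ρ := by
        rw [setIntegral_const, Real.volume_real_Icc_of_le (by linarith), smul_eq_mul]
        ring

lemma gaussPi_cube_le {α : Type} [Fintype α] {ρ : ℝ} (hρ : 0 ≤ ρ) :
    (gaussPi α).real (Set.univ.pi fun _ => Set.Icc (-ρ) ρ) ≤ ρ ^ Fintype.card α := by
  rw [measureReal_def, gaussPi, Measure.pi_pi, ENNReal.toReal_prod]
  simp only [Finset.prod_const, Finset.card_univ]
  exact pow_le_pow_left₀ ENNReal.toReal_nonneg (gaussianReal_Icc_le hρ) _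

lemma integral_gaussPi_le_of_le_off_ball {α : Type} [Fintype α] {h : (α → ℝ) → ℝ}
    (h_int : Integrable h (gaussPi α)) (hone : ∀ g, h g ≤ 1) {ρ b : ℝ} (hρ : 0 ≤ ρ) (hb : 0 ≤ b)
    (hoff : ∀ g, ρ ^ 2 < ∑ j, g j ^ 2 → h g ≤ b) :
    ∫ g, h g ∂gaussPi α ≤ ρ ^ Fintype.card α + b := by
  set cube : Set (α → ℝ) := Set.univ.pi fun _ => Set.Icc (-ρ) ρ
  have hcube : MeasurableSet cube := MeasurableSet.univ_pi fun _ => measurableSet_Icc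
  have hind : Integrable (cube.indicator fun _ => (1 : ℝ)) (gaussPi α) :=
    (integrable_const 1).indicator hcube
  have hpoint (g : α → ℝ) : h g ≤ cube.indicator (fun _ => (1 : ℝ)) g + b := by
    by_cases hg : g ∈ cube
    · rw [Set.indicator_of_mem hg]
      linarith [hone g]
    · rw [Set.indicator_of_notMem hg, zero_add]
      refine hoff g ?_
      by_contra! hle
      refine hg fun j _ => abs_le.1 (abs_le_of_sq_le_sq (le_trans ?_ hle) hρ)
      exact Finset.single_le_sum (f := fun j => g j ^ 2) (fun _ _ => sq_nonneg _)
        (Finset.mem_univ j)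
  calc ∫ g, h g ∂gaussPi α ≤ ∫ g, (cube.indicator (fun _ => (1 : ℝ)) g + b) ∂gaussPi α :=
        integral_mono h_int (hind.add (integrable_const _)) hpoint
    _ = (gaussPi α).real cube + b := by
        rw [integral_add hind (integrable_const _), integral_indicator_const _ hcube]
        simp
    _ ≤ ρ ^ Fintype.card α + b := by
        gcongr
        exact gaussPi_cube_le hρ

end SmallBalls

section ContractionSum

variable {ι : Type} [Fintype ι] {n : ℕ}

/-- The sum of the squared norms of all nontrivial contractions of the `n`-th derivative of `f` at
the origin. -/
noncomputable def contractionSum (n : ℕ) (f : MvPolynomial ι ℝ) : ℝ :=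
  ∑ r ∈ Finset.Ico 1 n, contractionSq r (n - r) f

lemma contractionSum_nonneg (n : ℕ) (f : MvPolynomial ι ℝ) : 0 ≤ contractionSum n f :=
  Finset.sum_nonneg fun _ _ => contractionSq_nonneg _ _ _

lemma contractionSq_one_le_contractionSum (hn : n ≠ 0) (f : MvPolynomial ι ℝ) :
    contractionSq 1 n f ≤ contractionSum (n + 1) f :=
  Finset.single_le_sum (f := fun r => contractionSq r (n + 1 - r) f)
    (fun _ _ => contractionSq_nonneg _ _ _) (Finset.mem_Ico.2 (by omega))

lemma contractionSum_smul (c : ℝ) (f : MvPolynomial ι ℝ) :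
    contractionSum n (c • f) = c ^ 4 * contractionSum n f := by
  simp only [contractionSum, contractionSq_smul, Finset.mul_sum]

lemma contractionSq_sum_smul_le (r s : ℕ) {α : Type*} [Fintype α] (g : α → ℝ)
    (F : α → MvPolynomial ι ℝ) :
    contractionSq r s (∑ j, g j • F j) ≤
      8 ^ Fintype.card α * (∑ j, g j ^ 2) ^ 2 * ∑ j, contractionSq r s (F j) := by
  refine (contractionSq_sum_le r s Finset.univ _).trans ?_
  rw [mul_assoc, Finset.card_univ]
  gcongr
  rw [Finset.mul_sum]
  gcongr with j
  have hj : g j ^ 2 ≤ ∑ i, g i ^ 2 :=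
    Finset.single_le_sum (f := fun j => g j ^ 2) (fun _ _ => sq_nonneg _) (Finset.mem_univ j)
  rw [contractionSq_smul, show g j ^ 4 = (g j ^ 2) ^ 2 by ring]
  gcongr
  exact contractionSq_nonneg _ _ _

lemma contractionSum_sum_smul_le {α : Type*} [Fintype α] (g : α → ℝ) (F : α → MvPolynomial ι ℝ) :
    contractionSum n (∑ j, g j • F j) ≤
      8 ^ Fintype.card α * (∑ j, g j ^ 2) ^ 2 * ∑ j, contractionSum n (F j) := by
  unfold contractionSum
  rw [Finset.sum_comm, Finset.mul_sum]
  gcongr with r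
  exact contractionSq_sum_smul_le _ _ g F

lemma integrable_contractionSum_dirDeriv (f : MvPolynomial ι ℝ) :
    Integrable (fun x => contractionSum n (dirDeriv x f)) (gaussPi ι) :=
  integrable_finsetSum _ fun _ _ => integrable_contractionSq_dirDeriv _ _ f

lemma integral_contractionSum_dirDeriv_le (f : MvPolynomial ι ℝ) :
    ∫ x, contractionSum n (dirDeriv x f) ∂gaussPi ι ≤ 3 * contractionSum (n + 1) f := by
  have hlast : ∑ r ∈ Finset.Ico 1 n, contractionSq r (n + 1 - r) f ≤ contractionSum (n + 1) f :=
    Finset.sum_le_sum_of_subset_of_nonneg (Finset.Ico_subset_Ico_right n.le_succ)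
      fun _ _ _ => contractionSq_nonneg _ _ _
  have hfirst : ∑ r ∈ Finset.Ico 1 n, contractionSq (r + 1) (n - r) f ≤
      contractionSum (n + 1) f := by
    have hshift := Finset.sum_Ico_add' (fun r => contractionSq r (n + 1 - r) f) 1 n 1
    simp only [Nat.add_sub_add_right] at hshift
    rw [hshift]
    exact Finset.sum_le_sum_of_subset_of_nonneg (Finset.Ico_subset_Ico_left one_le_two)
      fun _ _ _ => contractionSq_nonneg _ _ _
  unfold contractionSum at hlast hfirst ⊢
  rw [integral_finsetSum _ fun _ _ => integrable_contractionSq_dirDeriv _ _ f]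
  calc ∑ r ∈ Finset.Ico 1 n, ∫ x, contractionSq r (n - r) (dirDeriv x f) ∂gaussPi ι
      ≤ ∑ r ∈ Finset.Ico 1 n,
          (contractionSq r (n + 1 - r) f + 2 * contractionSq (r + 1) (n - r) f) := by
        gcongr with r hr
        rw [Nat.sub_add_comm (Finset.mem_Ico.1 hr).2.le]
        exact integral_contractionSq_dirDeriv_le _ _ f
    _ ≤ _ := by
        rw [Finset.sum_add_distrib, ← Finset.mul_sum]
        linarith

end ContractionSum

section RandomDirections

variable {ι : Type} [Fintype ι] {n q : ℕ}

lemma measurePreserving_eval_gaussCopies (i : Fin q) :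
    MeasurePreserving (fun X : Fin q → ι → ℝ => X i) (gaussCopies q ι) (gaussPi ι) :=
  measurePreserving_eval (fun _ : Fin q => gaussPi ι) i

lemma measurePreserving_pair_gaussCopies {i j : Fin q} (hij : i ≠ j) :
    MeasurePreserving (fun X : Fin q → ι → ℝ => (X i, X j)) (gaussCopies q ι)
      ((gaussPi ι).prod (gaussPi ι)) := by
  refine ⟨by fun_prop, ?_⟩
  have hindep := iIndepFun_pi (μ := fun _ : Fin q => gaussPi ι) (X := fun _ => id)
    fun _ => aemeasurable_id
  have hmap := (indepFun_iff_map_prod_eq_prod_map_map (measurable_pi_apply i).aemeasurable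
    (measurable_pi_apply j).aemeasurable).1 (hindep.indepFun hij)
  rwa [← gaussCopies, (measurePreserving_eval_gaussCopies i).map_eq,
    (measurePreserving_eval_gaussCopies j).map_eq] at hmap

/-- The deviation of the Gram matrix of the `q` derivatives `dirDeriv (X j) f`, for the form
`derivForm evalZero n`, from its mean, in squared Hilbert–Schmidt norm. -/
noncomputable def gramDefect (n : ℕ) (f : MvPolynomial ι ℝ) (X : Fin q → ι → ℝ) : ℝ :=
  ∑ i, ∑ j, (derivForm evalZero n (dirDeriv (X i) f) (dirDeriv (X j) f) -
    if i = j then derivForm evalZero (n + 1) f f else 0) ^ 2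

lemma integrable_sq_derivForm_dirDeriv_sub (n : ℕ) (f : MvPolynomial ι ℝ) (c : ℝ) :
    Integrable (fun x => (derivForm evalZero n (dirDeriv x f) (dirDeriv x f) - c) ^ 2)
      (gaussPi ι) := by
  have h := integrable_eval
    ((quadForm (fun i j => derivForm evalZero n (pderiv i f) (pderiv j f)) - C c) ^ 2)
  simpa only [map_pow, map_sub, eval_C, eval_quadForm, ← bilinForm_dirDeriv] using h

lemma integrable_prod_sq_derivForm_dirDeriv (n : ℕ) (f : MvPolynomial ι ℝ) :
    Integrable (fun z : (ι → ℝ) × (ι → ℝ) =>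
      derivForm evalZero n (dirDeriv z.1 f) (dirDeriv z.2 f) ^ 2)
      ((gaussPi ι).prod (gaussPi ι)) := by
  have hexpand (z : (ι → ℝ) × (ι → ℝ)) :
      derivForm evalZero n (dirDeriv z.1 f) (dirDeriv z.2 f) ^ 2 =
        ∑ k : ι × ι, ∑ l : ι × ι, eval z.1 (X k.1 * X l.1) * eval z.2 (X k.2 * X l.2) *
          (derivForm evalZero n (pderiv k.1 f) (pderiv k.2 f) *
            derivForm evalZero n (pderiv l.1 f) (pderiv l.2 f)) := by
    rw [bilinForm_dirDeriv, ← Fintype.sum_prod_type' (f := fun i j =>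
      z.1 i * z.2 j * derivForm evalZero n (pderiv i f) (pderiv j f)), sq, Finset.sum_mul_sum]
    simp only [map_mul, eval_X]
    exact Finset.sum_congr rfl fun k _ => Finset.sum_congr rfl fun l _ => by ring
  simp only [hexpand]
  exact integrable_finsetSum _ fun k _ => integrable_finsetSum _ fun l _ =>
    ((integrable_eval _).mul_prod (integrable_eval _)).mul_const _

lemma integrable_sq_derivForm_dirDeriv_sub_ite (f : MvPolynomial ι ℝ) (i j : Fin q) :
    Integrable (fun X : Fin q → ι → ℝ =>
      (derivForm evalZero n (dirDeriv (X i) f) (dirDeriv (X j) f) -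
        if i = j then derivForm evalZero (n + 1) f f else 0) ^ 2) (gaussCopies q ι) := by
  rcases eq_or_ne i j with rfl | hij
  · simp only [if_true]
    exact (measurePreserving_eval_gaussCopies i).integrable_comp_of_integrable
      (integrable_sq_derivForm_dirDeriv_sub n f _)
  · simp only [hij, if_false, sub_zero]
    exact (measurePreserving_pair_gaussCopies hij).integrable_comp_of_integrable
      (integrable_prod_sq_derivForm_dirDeriv n f)

lemma integral_comp_of_measurePreserving {α β : Type*} [MeasurableSpace α] [MeasurableSpace β]
    {μ : Measure α} {ν : Measure β} {T : α → β} (hT : MeasurePreserving T μ ν) {h : β → ℝ}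
    (hh : Integrable h ν) : ∫ x, h (T x) ∂μ = ∫ y, h y ∂ν := by
  rw [← hT.map_eq, integral_map hT.aemeasurable (hT.map_eq ▸ hh.aestronglyMeasurable)]

lemma integral_sq_derivForm_dirDeriv_sub_ite_le (f : MvPolynomial ι ℝ) (i j : Fin q) :
    ∫ X : Fin q → ι → ℝ, (derivForm evalZero n (dirDeriv (X i) f) (dirDeriv (X j) f) -
      if i = j then derivForm evalZero (n + 1) f f else 0) ^ 2 ∂gaussCopies q ι ≤
      2 * contractionSq 1 n f := by
  rcases eq_or_ne i j with rfl | hij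
  · simp only [if_true]
    rw [integral_comp_of_measurePreserving (measurePreserving_eval_gaussCopies i)
      (integrable_sq_derivForm_dirDeriv_sub n f _)]
    exact integral_sq_derivForm_dirDeriv_sub_le n f
  · simp only [hij, if_false, sub_zero]
    rw [integral_comp_of_measurePreserving (measurePreserving_pair_gaussCopies hij)
      (integrable_prod_sq_derivForm_dirDeriv n f),
      integral_prod_symm _ (integrable_prod_sq_derivForm_dirDeriv n f),
      integral_integral_sq_derivForm_dirDeriv]
    linarith [contractionSq_nonneg 1 n f]

lemma integrable_gramDefect (f : MvPolynomial ι ℝ) :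
    Integrable (gramDefect (q := q) n f) (gaussCopies q ι) :=
  integrable_finsetSum _ fun i _ => integrable_finsetSum _ fun j _ =>
    integrable_sq_derivForm_dirDeriv_sub_ite f i j

lemma integral_gramDefect_le (f : MvPolynomial ι ℝ) :
    ∫ X, gramDefect n f X ∂gaussCopies q ι ≤ 2 * q ^ 2 * contractionSq 1 n f := by
  unfold gramDefect
  rw [integral_finsetSum _ fun i _ => integrable_finsetSum _ fun j _ =>
    integrable_sq_derivForm_dirDeriv_sub_ite f i j]
  calc _ ≤ ∑ _i : Fin q, ∑ _j : Fin q, 2 * contractionSq 1 n f := by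
        gcongr with i
        rw [integral_finsetSum _ fun j _ => integrable_sq_derivForm_dirDeriv_sub_ite f i j]
        gcongr with j
        exact integral_sq_derivForm_dirDeriv_sub_ite_le f i j
    _ = 2 * q ^ 2 * contractionSq 1 n f := by
        simp only [Finset.sum_const, Finset.card_univ, Fintype.card_fin, nsmul_eq_mul]
        ring

/-- The quantity whose smallness makes `X` a good tuple of directions: the Gram matrix of the
derivatives `dirDeriv (X j) f` is close to its mean, and their contractions are small. -/
noncomputable def directionDefect (n : ℕ) (η : ℝ) (f : MvPolynomial ι ℝ) (X : Fin q → ι → ℝ) : ℝ :=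
  4 * gramDefect n f X + η⁻¹ * ∑ j, contractionSum n (dirDeriv (X j) f)

lemma gramDefect_nonneg (f : MvPolynomial ι ℝ) (X : Fin q → ι → ℝ) : 0 ≤ gramDefect n f X := by
  unfold gramDefect
  positivity

lemma sum_contractionSum_nonneg {α : Type*} [Fintype α] (F : α → MvPolynomial ι ℝ) :
    0 ≤ ∑ j, contractionSum n (F j) :=
  Finset.sum_nonneg fun _ _ => contractionSum_nonneg _ _

lemma directionDefect_nonneg {η : ℝ} (hη : 0 ≤ η) (f : MvPolynomial ι ℝ) (X : Fin q → ι → ℝ) :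
    0 ≤ directionDefect n η f X := by
  have hgram := gramDefect_nonneg (n := n) f X
  have hsum := sum_contractionSum_nonneg (n := n) fun j => dirDeriv (X j) f
  unfold directionDefect
  positivity

lemma continuous_directionDefect (η : ℝ) (f : MvPolynomial ι ℝ) :
    Continuous (directionDefect (q := q) n η f) := by
  unfold directionDefect gramDefect contractionSum
  simp only [bilinForm_dirDeriv, contractionSq_dirDeriv, eval_quadForm]
  fun_prop

lemma integrable_directionDefect (η : ℝ) (f : MvPolynomial ι ℝ) :
    Integrable (directionDefect (q := q) n η f) (gaussCopies q ι) :=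
  ((integrable_gramDefect f).const_mul _).add ((integrable_finsetSum _ fun j _ =>
    (measurePreserving_eval_gaussCopies j).integrable_comp_of_integrable
      (integrable_contractionSum_dirDeriv f)).const_mul _)

lemma integral_directionDefect_le (hn : n ≠ 0) {η : ℝ} (hη : 0 ≤ η) (f : MvPolynomial ι ℝ) :
    ∫ X, directionDefect n η f X ∂gaussCopies q ι ≤
      (8 * q ^ 2 + 3 * q * η⁻¹) * contractionSum (n + 1) f := by
  have h_int (j : Fin q) : Integrable (fun X : Fin q → ι → ℝ =>
      contractionSum n (dirDeriv (X j) f)) (gaussCopies q ι) :=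
    (measurePreserving_eval_gaussCopies j).integrable_comp_of_integrable
      (integrable_contractionSum_dirDeriv f)
  have hgram : ∫ X, gramDefect n f X ∂gaussCopies q ι ≤ 2 * q ^ 2 * contractionSum (n + 1) f :=
    (integral_gramDefect_le f).trans (by gcongr; exact contractionSq_one_le_contractionSum hn f)
  have hsum : ∑ j, ∫ X : Fin q → ι → ℝ, contractionSum n (dirDeriv (X j) f) ∂gaussCopies q ι ≤
      q * (3 * contractionSum (n + 1) f) := by
    simp only [integral_comp_of_measurePreserving (measurePreserving_eval_gaussCopies _)
      (integrable_contractionSum_dirDeriv f), Finset.sum_const, Finset.card_univ,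
      Fintype.card_fin, nsmul_eq_mul]
    gcongr
    exact integral_contractionSum_dirDeriv_le f
  unfold directionDefect
  rw [integral_add ((integrable_gramDefect f).const_mul _)
    ((integrable_finsetSum _ fun j _ => h_int j).const_mul _), integral_const_mul,
    integral_const_mul, integral_finsetSum _ fun j _ => h_int j]
  calc _ ≤ 4 * (2 * q ^ 2 * contractionSum (n + 1) f) +
        η⁻¹ * (q * (3 * contractionSum (n + 1) f)) := by gcongr
    _ = _ := by ring

lemma measureReal_directionDefect_le (hn : n ≠ 0) {η t p : ℝ} (hη : 0 ≤ η) (ht : 0 < t)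
    {f : MvPolynomial ι ℝ}
    (hf : (8 * q ^ 2 + 3 * q * η⁻¹) * contractionSum (n + 1) f ≤ t * p) :
    (gaussCopies q ι).real {X | directionDefect n η f X ≤ t}ᶜ ≤ p := by
  have hmarkov := mul_meas_ge_le_integral_of_nonneg
    (Eventually.of_forall fun X => directionDefect_nonneg (n := n) hη f X)
    (integrable_directionDefect (q := q) η f) t
  have hsub : {X | directionDefect n η f X ≤ t}ᶜ ⊆
      {X : Fin q → ι → ℝ | t ≤ directionDefect n η f X} := fun X hX =>
    (not_le.1 (Set.notMem_ofPred_iff.1 hX)).le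
  refine (measureReal_mono hsub).trans (le_of_mul_le_mul_left ?_ ht)
  exact hmarkov.trans ((integral_directionDefect_le hn hη f).trans hf)

end RandomDirections

section DecouplingDecay

variable {ι : Type} [Fintype ι] {n q : ℕ}

lemma mul_sum_sq_le_of_near_scalar {α : Type*} [Fintype α] [DecidableEq α] {M : α → α → ℝ} {S : ℝ}
    (hS : 0 ≤ S) (hM : ∑ i, ∑ j, (M i j - if i = j then S else 0) ^ 2 ≤ (S / 2) ^ 2)
    (g : α → ℝ) : S * (∑ j, g j ^ 2) / 2 ≤ ∑ i, ∑ j, g i * g j * M i j := by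
  set E : α → α → ℝ := fun i j => M i j - if i = j then S else 0
  have hsplit : ∑ i, ∑ j, g i * g j * M i j =
      S * (∑ j, g j ^ 2) + ∑ i, ∑ j, g i * g j * E i j := by
    have hdiag : ∑ i, g i * g i * S = S * ∑ j, g j ^ 2 := by
      rw [← Finset.sum_mul, mul_comm]
      simp only [sq]
    simp only [E, mul_sub, Finset.sum_sub_distrib, mul_ite, mul_zero, Finset.sum_ite_eq,
      Finset.mem_univ, if_true, hdiag]
    ring
  have hcauchy : (∑ i, ∑ j, g i * g j * E i j) ^ 2 ≤
      (∑ i, ∑ j, (g i * g j) ^ 2) * ∑ i, ∑ j, E i j ^ 2 := by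
    simpa only [Fintype.sum_prod_type] using Finset.sum_mul_sq_le_sq_mul_sq
      (Finset.univ : Finset (α × α)) (fun p => g p.1 * g p.2) fun p => E p.1 p.2
  have hnorm : ∑ i, ∑ j, (g i * g j) ^ 2 = (∑ j, g j ^ 2) ^ 2 := by
    simp only [sq (∑ j, g j ^ 2), Finset.sum_mul_sum, mul_pow]
  have hpert : |∑ i, ∑ j, g i * g j * E i j| ≤ (∑ j, g j ^ 2) * (S / 2) := by
    refine abs_le_of_sq_le_sq ?_ (by positivity)
    rw [mul_pow, ← hnorm]
    exact hcauchy.trans (by gcongr)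
  linarith [(abs_le.1 hpert).1]

lemma mul_sum_sq_le_derivForm_sum_smul {α : Type*} [Fintype α] [DecidableEq α]
    {F : α → MvPolynomial ι ℝ} {S : ℝ} (hS : 0 ≤ S) (hF : ∑ i, ∑ j,
      (derivForm evalZero n (F i) (F j) - if i = j then S else 0) ^ 2 ≤ (S / 2) ^ 2)
    (g : α → ℝ) :
    S * (∑ j, g j ^ 2) / 2 ≤ derivForm evalZero n (∑ j, g j • F j) (∑ j, g j • F j) := by
  have h := mul_sum_sq_le_of_near_scalar hS hF g
  refine h.trans_eq ?_
  simp only [map_sum, map_smul, LinearMap.sum_apply, LinearMap.smul_apply, smul_eq_mul,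
    Finset.mul_sum, mul_assoc]
  rw [Finset.sum_comm]
  exact Finset.sum_congr rfl fun _ _ => Finset.sum_congr rfl fun _ _ => mul_left_comm _ _ _

lemma contractionSum_sum_smul_le_sq {α : Type*} [Fintype α] [DecidableEq α]
    {F : α → MvPolynomial ι ℝ} {S δ : ℝ} (hS : 0 ≤ S) (hδ : 0 ≤ δ) (hF : ∑ i, ∑ j,
      (derivForm evalZero n (F i) (F j) - if i = j then S else 0) ^ 2 ≤ (S / 2) ^ 2)
    (hcontr : ∑ j, contractionSum n (F j) ≤ δ / (4 * 8 ^ Fintype.card α) * S ^ 2) (g : α → ℝ) :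
    contractionSum n (∑ j, g j • F j) ≤
      δ * derivForm evalZero n (∑ j, g j • F j) (∑ j, g j • F j) ^ 2 :=
  calc contractionSum n (∑ j, g j • F j)
      ≤ 8 ^ Fintype.card α * (∑ j, g j ^ 2) ^ 2 *
          (δ / (4 * 8 ^ Fintype.card α) * S ^ 2) := by
        refine (contractionSum_sum_smul_le g F).trans ?_
        gcongr
    _ = δ * (S * (∑ j, g j ^ 2) / 2) ^ 2 := by
        field_simp
        ring
    _ ≤ _ := by
        gcongr
        exact mul_sum_sq_le_derivForm_sum_smul hS hF g

lemma integral_decoupledCharFun_sum_smul_le {α : Type} [Fintype α] [DecidableEq α] {N : ℕ}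
    {δ C : ℝ} (hδ : 0 ≤ δ) (hC : 0 ≤ C)
    (hdecay : ∀ h : MvPolynomial ι ℝ, contractionSum n h ≤ δ * derivForm evalZero n h h ^ 2 →
      derivForm evalZero n h h ^ N * decoupledCharFun n h ≤ C)
    {F : α → MvPolynomial ι ℝ} {S ρ : ℝ} (hS : 0 < S) (hρ : 0 < ρ) (hF : ∑ i, ∑ j,
      (derivForm evalZero n (F i) (F j) - if i = j then S else 0) ^ 2 ≤ (S / 2) ^ 2)
    (hcontr : ∑ j, contractionSum n (F j) ≤ δ / (4 * 8 ^ Fintype.card α) * S ^ 2) :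
    ∫ g, decoupledCharFun n (∑ j, g j • F j) ∂gaussPi α ≤
      ρ ^ Fintype.card α + C * (2 / (S * ρ ^ 2)) ^ N := by
  refine integral_gaussPi_le_of_le_off_ball (integrable_decoupledCharFun_sum_smul F)
    (fun g => decoupledCharFun_le_one _) hρ.le (by positivity) fun g hg => ?_
  set h := ∑ j, g j • F j
  have hlower : S * ρ ^ 2 / 2 ≤ derivForm evalZero n h h := by
    refine le_trans ?_ (mul_sum_sq_le_derivForm_sum_smul hS.le hF g)
    gcongr
  have hpos : 0 < S * ρ ^ 2 / 2 := by positivity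
  calc decoupledCharFun n h ≤ C / derivForm evalZero n h h ^ N := by
        rw [le_div_iff₀ (pow_pos (hpos.trans_le hlower) N), mul_comm]
        exact hdecay h (contractionSum_sum_smul_le_sq hS.le hδ hF hcontr g)
    _ ≤ C / (S * ρ ^ 2 / 2) ^ N := by gcongr
    _ = C * (2 / (S * ρ ^ 2)) ^ N := by rw [div_eq_mul_inv, ← inv_pow, inv_div]

lemma sum_sq_derivForm_inv_smul_dirDeriv_sub {f : MvPolynomial ι ℝ} {X : Fin q → ι → ℝ} {w : ℝ}
    (hw : 0 < w) (hS : derivForm evalZero (n + 1) f f = w ^ 8) :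
    ∑ i, ∑ j, (derivForm evalZero n ((w ^ 2)⁻¹ • dirDeriv (X i) f) ((w ^ 2)⁻¹ • dirDeriv (X j) f) -
      if i = j then w ^ 4 else 0) ^ 2 = (w ^ 8)⁻¹ * gramDefect n f X := by
  simp only [gramDefect, Finset.mul_sum]
  refine Finset.sum_congr rfl fun i _ => Finset.sum_congr rfl fun j _ => ?_
  simp only [map_smul, LinearMap.smul_apply, smul_eq_mul, hS]
  split_ifs <;> field_simp
  ring

lemma integral_decoupledCharFun_dirDeriv_le {N : ℕ} {δ C : ℝ} (hδ : 0 < δ) (hC : 0 ≤ C)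
    (hdecay : ∀ h : MvPolynomial ι ℝ, contractionSum n h ≤ δ * derivForm evalZero n h h ^ 2 →
      derivForm evalZero n h h ^ N * decoupledCharFun n h ≤ C)
    {f : MvPolynomial ι ℝ} {X : Fin q → ι → ℝ} {w : ℝ} (hw : 0 < w)
    (hS : derivForm evalZero (n + 1) f f = w ^ 8)
    (hX : directionDefect n (δ / (4 * 8 ^ q)) f X ≤ (w ^ 8) ^ 2) :
    ∫ g, decoupledCharFun n (∑ j, g j • (√(w ^ 4))⁻¹ • dirDeriv (X j) f) ∂gaussPi (Fin q) ≤
      w⁻¹ ^ q + C * (2 * w⁻¹ ^ 2) ^ N := by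
  have hsqrt : √(w ^ 4) = w ^ 2 := by
    rw [show w ^ 4 = (w ^ 2) ^ 2 by ring, Real.sqrt_sq (by positivity)]
  have hgram := gramDefect_nonneg (n := n) f X
  have hsum := sum_contractionSum_nonneg (n := n) fun j => dirDeriv (X j) f
  have hη : (0 : ℝ) < δ / (4 * 8 ^ q) := by positivity
  have hgramX : gramDefect n f X ≤ (w ^ 8 / 2) ^ 2 := by
    have := mul_nonneg (inv_pos.2 hη).le hsum
    unfold directionDefect at hX
    linarith
  have hsumX : ∑ j, contractionSum n (dirDeriv (X j) f) ≤ δ / (4 * 8 ^ q) * (w ^ 8) ^ 2 := by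
    rw [← inv_mul_le_iff₀ hη]
    unfold directionDefect at hX
    linarith
  rw [hsqrt]
  convert integral_decoupledCharFun_sum_smul_le hδ.le hC hdecay (ρ := w⁻¹)
    (F := fun j => (w ^ 2)⁻¹ • dirDeriv (X j) f) (pow_pos hw 4) (inv_pos.2 hw) ?_ ?_ using 3
  · rw [Fintype.card_fin]
  · congr 1
    field_simp
  · rw [sum_sq_derivForm_inv_smul_dirDeriv_sub hw hS, inv_mul_le_iff₀ (by positivity)]
    exact hgramX.trans_eq (by ring)
  · simp only [contractionSum_smul, ← Finset.mul_sum, Fintype.card_fin, inv_pow]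
    rw [inv_mul_le_iff₀ (by positivity)]
    exact hsumX.trans_eq (by ring)

lemma pow_mul_exp_neg_half_le {t : ℝ} (ht : 0 ≤ t) (N : ℕ) :
    t ^ N * Real.exp (-t / 2) ≤ 2 ^ N * N.factorial := by
  have h := Real.pow_div_factorial_le_exp (t / 2) (by positivity) N
  rw [div_le_iff₀ (by positivity), div_pow, div_le_iff₀ (by positivity)] at h
  calc t ^ N * Real.exp (-t / 2)
      ≤ Real.exp (t / 2) * N.factorial * 2 ^ N * Real.exp (-t / 2) := by gcongr
    _ = Real.exp (t / 2 + -t / 2) * (2 ^ N * N.factorial) := by rw [Real.exp_add]; ring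
    _ = 2 ^ N * N.factorial := by rw [neg_div, add_neg_cancel, Real.exp_zero, one_mul]

lemma pow_mul_decoupledCharFun_le_one_of_eq_zero {f : MvPolynomial ι ℝ} (N : ℕ)
    (hf : derivForm evalZero n f f = 0) :
    derivForm evalZero n f f ^ N * decoupledCharFun n f ≤ 1 := by
  rw [hf]
  calc (0 : ℝ) ^ N * decoupledCharFun n f ≤ 0 ^ N * 1 := by
        gcongr
        exact decoupledCharFun_le_one f
    _ ≤ 1 := by
        rw [mul_one]
        exact pow_le_one₀ le_rfl zero_le_one

/-- With `w ^ 8 = derivForm evalZero (n + 1) f f` the threshold for the squared gradient is `w ^ 4`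
and the radius of the excluded ball is `w⁻¹`. -/
lemma pow_mul_decoupledCharFun_succ_le (hn : n ≠ 0) {N : ℕ} {δ C : ℝ} (hδ : 0 < δ) (hC : 0 ≤ C)
    (hdecay : ∀ h : MvPolynomial ι ℝ, contractionSum n h ≤ δ * derivForm evalZero n h h ^ 2 →
      derivForm evalZero n h h ^ (4 * N) * decoupledCharFun n h ≤ C)
    {f : MvPolynomial ι ℝ} (hpos : 0 < derivForm evalZero (n + 1) f f)
    (hf : (8 * (8 * N : ℕ) ^ 2 + 3 * (8 * N : ℕ) * (δ / (4 * 8 ^ (8 * N)))⁻¹) *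
      contractionSum (n + 1) f ≤
        derivForm evalZero (n + 1) f f ^ 2 * (1 / 2) ^ (8 * N + 1)) :
    derivForm evalZero (n + 1) f f ^ N * decoupledCharFun (n + 1) f ≤
      2 ^ (2 * N) * (2 * N).factorial + 2 ^ (8 * N + 1) * (1 + C * 2 ^ (4 * N)) := by
  obtain ⟨w, hw, hwS⟩ : ∃ w : ℝ, 0 < w ∧ derivForm evalZero (n + 1) f f = w ^ 8 :=
    ⟨_, Real.rpow_pos_of_pos hpos _,
      (Real.rpow_inv_natCast_pow hpos.le (by norm_num : 8 ≠ 0)).symm⟩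
  rw [hwS] at hf ⊢
  set b : ℝ := w⁻¹ ^ (8 * N) + C * (2 * w⁻¹ ^ 2) ^ (4 * N)
  have hstep : decoupledCharFun (n + 1) f ≤ Real.exp (-w ^ 4 / 2) + 2 ^ (8 * N + 1) * b :=
    decoupledCharFun_succ_le (by positivity) (by positivity)
      ((continuous_directionDefect _ f).measurable measurableSet_Iic)
      (measureReal_directionDefect_le hn (by positivity) (by positivity) hf)
      fun X hX => integral_decoupledCharFun_dirDeriv_le hδ hC hdecay hw hwS hX
  have hexp : (w ^ 8) ^ N * Real.exp (-w ^ 4 / 2) ≤ 2 ^ (2 * N) * (2 * N).factorial := by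
    rw [show (w ^ 8) ^ N = (w ^ 4) ^ (2 * N) by ring]
    exact pow_mul_exp_neg_half_le (by positivity) _
  have hb : (w ^ 8) ^ N * b = 1 + C * 2 ^ (4 * N) := by
    have hcancel : (w ^ 8) ^ N * w⁻¹ ^ (8 * N) = 1 := by
      rw [← pow_mul, ← mul_pow, mul_inv_cancel₀ hw.ne', one_pow]
    have hpow : (w⁻¹ ^ 2) ^ (4 * N) = w⁻¹ ^ (8 * N) := by ring
    rw [mul_add, mul_pow 2, hpow]
    linear_combination (1 + C * 2 ^ (4 * N)) * hcancel
  calc (w ^ 8) ^ N * decoupledCharFun (n + 1) f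
      ≤ (w ^ 8) ^ N * (Real.exp (-w ^ 4 / 2) + 2 ^ (8 * N + 1) * b) := by gcongr
    _ = (w ^ 8) ^ N * Real.exp (-w ^ 4 / 2) + 2 ^ (8 * N + 1) * ((w ^ 8) ^ N * b) := by ring
    _ ≤ _ := by
        rw [hb]
        gcongr

lemma decoupledCharFun_one (f : MvPolynomial ι ℝ) :
    decoupledCharFun 1 f = Real.exp (-derivForm evalZero 1 f f / 2) := by
  simp only [decoupledCharFun_succ, derivForm_succ, derivForm_zero, multiDeriv, ← sq]
  simp

theorem exists_pow_mul_decoupledCharFun_le (n N : ℕ) : ∃ δ > (0 : ℝ), ∃ C > (0 : ℝ),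
    ∀ (ι : Type) [Fintype ι] (f : MvPolynomial ι ℝ),
      contractionSum (n + 1) f ≤ δ * derivForm evalZero (n + 1) f f ^ 2 →
      derivForm evalZero (n + 1) f f ^ N * decoupledCharFun (n + 1) f ≤ C := by
  induction n generalizing N with
  | zero =>
    refine ⟨1, one_pos, 2 ^ N * N.factorial, by positivity, fun ι _ f _ => ?_⟩
    rw [zero_add, decoupledCharFun_one]
    exact pow_mul_exp_neg_half_le (derivForm_self_nonneg ..) N
  | succ n ih =>
    obtain ⟨δ, hδ, C, hC, hdecay⟩ := ih (4 * N)
    set D : ℝ := 8 * (8 * N : ℕ) ^ 2 + 3 * (8 * N : ℕ) * (δ / (4 * 8 ^ (8 * N)))⁻¹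
    have hD : 0 < D + 1 := by positivity
    refine ⟨(1 / 2) ^ (8 * N + 1) / (D + 1), div_pos (by positivity) hD,
      1 + (2 ^ (2 * N) * (2 * N).factorial + 2 ^ (8 * N + 1) * (1 + C * 2 ^ (4 * N))),
      by positivity, fun ι _ f hf => ?_⟩
    rcases (derivForm_self_nonneg evalZero (n + 1 + 1) f).eq_or_lt with hzero | hpos
    · refine (pow_mul_decoupledCharFun_le_one_of_eq_zero N hzero.symm).trans ?_
      exact le_add_of_nonneg_right (by positivity)
    · refine (pow_mul_decoupledCharFun_succ_le n.succ_ne_zero hδ hC.le (hdecay ι) hpos ?_).trans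
        (le_add_of_nonneg_left zero_le_one)
      rw [div_mul_eq_mul_div, le_div_iff₀ hD] at hf
      linarith [contractionSum_nonneg (n + 1 + 1) f]

end DecouplingDecay

section AffineSubst

variable {ι : Type} {n : ℕ}

/-- The substitution `x ↦ s • x + v` in a polynomial. -/
noncomputable def affineSubst (s : ℝ) (v : ι → ℝ) : MvPolynomial ι ℝ →ₐ[ℝ] MvPolynomial ι ℝ :=
  aeval fun i => C s * X i + C (v i)

lemma eval_affineSubst (s : ℝ) (v x : ι → ℝ) (f : MvPolynomial ι ℝ) :
    eval x (affineSubst s v f) = eval (s • x + v) f := by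
  induction f using MvPolynomial.induction_on with
  | C a => simp [affineSubst]
  | add p q hp hq => simp only [map_add, hp, hq]
  | mul_X p i hp =>
    rw [map_mul, map_mul, map_mul, hp]
    simp [affineSubst]

lemma pderiv_affineSubst (s : ℝ) (v : ι → ℝ) (i : ι) (f : MvPolynomial ι ℝ) :
    pderiv i (affineSubst s v f) = s • affineSubst s v (pderiv i f) := by
  classical
  induction f using MvPolynomial.induction_on with
  | C a => simp [affineSubst]
  | add p q hp hq => simp only [map_add, hp, hq, smul_add]
  | mul_X p j hp =>
    have hX : pderiv i (affineSubst s v (X j)) = s • affineSubst s v (pderiv i (X j)) := by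
      by_cases hij : i = j <;> simp [affineSubst, pderiv_X, hij, smul_eq_C_mul]
    simp only [map_mul, Derivation.leibniz, map_add, hp, hX, smul_eq_mul, mul_smul_comm, smul_add]

lemma affineSubst_sub_mem_degreeLT (s : ℝ) (v v' : ι → ℝ) {f : MvPolynomial ι ℝ}
    (hf : f ∈ degreeLT (n + 1)) : affineSubst s v f - affineSubst s v' f ∈ degreeLT n := by
  induction n generalizing f with
  | zero =>
    rw [mem_degreeLT_zero, eq_C_of_mem_degreeLT_one hf]
    simp [affineSubst]
  | succ n ih =>
    refine mem_degreeLT_succ.2 fun k => ?_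
    rw [map_sub, pderiv_affineSubst, pderiv_affineSubst, ← smul_sub]
    exact Submodule.smul_mem _ _ (ih (mem_degreeLT_succ.1 hf k))

@[fun_prop]
lemma continuous_eval_comp {α : Type*} [TopologicalSpace α] {u : α → ι → ℝ} (hu : Continuous u)
    (f : MvPolynomial ι ℝ) : Continuous fun a => eval (u a) f :=
  (MvPolynomial.continuous_eval f).comp hu

end AffineSubst

section WeylDifferencing

lemma map_mul_add_mul_gaussianReal_prod {a b : ℝ} (h : a ^ 2 + b ^ 2 = 1) :
    ((gaussianReal 0 1).prod (gaussianReal 0 1)).map (fun p : ℝ × ℝ => a * p.1 + b * p.2) =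
      gaussianReal 0 1 := by
  have hconv := gaussianReal_conv_gaussianReal (m₁ := a * 0) (m₂ := b * 0)
    (v₁ := .mk (a ^ 2) (sq_nonneg _) * 1) (v₂ := .mk (b ^ 2) (sq_nonneg _) * 1)
  rw [← gaussianReal_map_const_mul, ← gaussianReal_map_const_mul, Measure.conv,
    Measure.map_prod_map _ _ (by fun_prop) (by fun_prop),
    Measure.map_map (by fun_prop) (by fun_prop)] at hconv
  refine hconv.trans ?_
  congr 1
  · simp
  · ext
    simpa using h

variable {ι : Type} [Fintype ι] {n : ℕ}

lemma measurePreserving_smul_add_smul_gaussPi {a b : ℝ} (h : a ^ 2 + b ^ 2 = 1) :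
    MeasurePreserving (fun p : (ι → ℝ) × (ι → ℝ) => a • p.1 + b • p.2)
      ((gaussPi ι).prod (gaussPi ι)) (gaussPi ι) := by
  have hmap := map_mul_add_mul_gaussianReal_prod h
  have hpi := Measure.pi_map_pi (ι := ι) (μ := fun _ => (gaussianReal 0 1).prod (gaussianReal 0 1))
    (f := fun _ (p : ℝ × ℝ) => a * p.1 + b * p.2)
    (hμ := fun _ => by rw [hmap]; infer_instance) fun _ => by fun_prop
  rw [hmap] at hpi
  refine ⟨by fun_prop, ?_⟩
  unfold gaussPi
  rw [← (measurePreserving_arrowProdEquivProdArrow ℝ ℝ ι (fun _ => gaussianReal 0 1)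
    fun _ => gaussianReal 0 1).map_eq, Measure.map_map (by fun_prop) (by fun_prop)]
  exact hpi

lemma convexOn_pow_two_pow (n : ℕ) : ConvexOn ℝ Set.univ fun x : ℝ => x ^ 2 ^ n := by
  cases n with
  | zero =>
    simp only [pow_zero, pow_one]
    exact convexOn_id convex_univ
  | succ n => exact Even.convexOn_pow ⟨2 ^ n, by ring⟩

lemma integrable_pow_of_abs_le_one {α : Type*} [MeasurableSpace α] {μ : Measure α}
    [IsFiniteMeasure μ] {k : α → ℝ} (hk : AEStronglyMeasurable k μ) (hone : ∀ a, |k a| ≤ 1)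
    (p : ℕ) : Integrable (fun a => k a ^ p) μ :=
  .of_bound (hk.pow p) 1 <| Eventually.of_forall fun a => by
    rw [norm_pow]
    exact pow_le_one₀ (norm_nonneg _) (hone a)

lemma pow_two_pow_integral_le {α : Type*} [MeasurableSpace α] {μ : Measure α}
    [IsProbabilityMeasure μ] {k : α → ℝ} (hk : AEStronglyMeasurable k μ) (hone : ∀ a, |k a| ≤ 1)
    (n : ℕ) : (∫ a, k a ∂μ) ^ 2 ^ n ≤ ∫ a, k a ^ 2 ^ n ∂μ :=
  (convexOn_pow_two_pow n).map_integral_le (by fun_prop) isClosed_univ (by simp)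
    (.of_bound hk 1 (Eventually.of_forall hone)) (integrable_pow_of_abs_le_one hk hone _)

lemma abs_integral_cos_le_one {α : Type*} [MeasurableSpace α] {μ : Measure α}
    [IsProbabilityMeasure μ] (k : α → ℝ) : |∫ a, Real.cos (k a) ∂μ| ≤ 1 := by
  simpa using norm_integral_le_of_norm_le_const (μ := μ) (f := fun a => Real.cos (k a)) (C := 1)
    (Eventually.of_forall fun _ => Real.abs_cos_le_one _)

lemma sq_integral_cos_le {α : Type*} [MeasurableSpace α] {ν : Measure α} [IsFiniteMeasure ν]
    {k : α → ℝ} (hk : Measurable k) :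
    (∫ a, Real.cos (k a) ∂ν) ^ 2 ≤ ∫ z, Real.cos (k z.1 - k z.2) ∂ν.prod ν := by
  have hcos : Integrable (fun a => Real.cos (k a)) ν :=
    .of_bound (Real.measurable_cos.comp hk).aestronglyMeasurable 1
      (Eventually.of_forall fun _ => Real.abs_cos_le_one _)
  have hsin : Integrable (fun a => Real.sin (k a)) ν :=
    .of_bound (Real.measurable_sin.comp hk).aestronglyMeasurable 1
      (Eventually.of_forall fun _ => Real.abs_sin_le_one _)
  simp only [Real.cos_sub]
  rw [integral_add (hcos.mul_prod hcos) (hsin.mul_prod hsin),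
    integral_prod_mul (fun a => Real.cos (k a)) fun a => Real.cos (k a),
    integral_prod_mul (fun a => Real.sin (k a)) fun a => Real.sin (k a), ← sq, ← sq]
  exact le_add_of_nonneg_right (sq_nonneg _)

lemma dirDeriv_affineSubst (s : ℝ) (v x : ι → ℝ) (f : MvPolynomial ι ℝ) :
    dirDeriv x (affineSubst s v f) = s • affineSubst s v (dirDeriv x f) := by
  simp only [dirDeriv_apply, pderiv_affineSubst, map_sum, map_smul, Finset.smul_sum]
  exact Finset.sum_congr rfl fun k _ => smul_comm _ _ _

lemma dirDeriv_comm (x y : ι → ℝ) (f : MvPolynomial ι ℝ) :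
    dirDeriv x (dirDeriv y f) = dirDeriv y (dirDeriv x f) := by
  simp only [dirDeriv_apply, map_sum, Derivation.map_smul]
  rw [Finset.sum_comm]
  refine Finset.sum_congr rfl fun k _ => Finset.sum_congr rfl fun l _ => ?_
  rw [pderiv_comm, smul_comm]

lemma dirDeriv_mem_degreeLT {f : MvPolynomial ι ℝ} (hf : f ∈ degreeLT (n + 1)) (x : ι → ℝ) :
    dirDeriv x f ∈ degreeLT n := by
  rw [dirDeriv_apply]
  exact sum_mem fun k _ => Submodule.smul_mem _ _ (mem_degreeLT_succ.1 hf k)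

lemma eval_eq_of_mem_degreeLT_two {f : MvPolynomial ι ℝ} (hf : f ∈ degreeLT 2) (v : ι → ℝ) :
    eval v f = evalZero f + evalZero (dirDeriv v f) := by
  classical
  have hconst (k) : pderiv k f = C (evalZero (pderiv k f)) :=
    eq_C_of_mem_degreeLT_one (mem_degreeLT_succ.1 hf k)
  have hrest : f - ∑ k, evalZero (pderiv k f) • X k ∈ degreeLT 1 := by
    refine mem_degreeLT_succ.2 fun i => mem_degreeLT_zero.2 ?_
    rw [map_sub, sub_eq_zero, map_sum, hconst i]
    simp [pderiv_X, Pi.single_apply, smul_eq_C_mul]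
  have heval := congrArg (eval v) (eq_C_of_mem_degreeLT_one hrest)
  simp only [map_sub, map_sum, map_smul, smul_eval, eval_X, eval_C, sub_eq_iff_eq_add] at heval
  rw [heval]
  simp [evalZero_apply, dirDeriv_apply, mul_comm]

lemma multiDeriv_affineSubst_sub (s : ℝ) (v v' : ι → ℝ) (y : Fin n → ι → ℝ)
    {f : MvPolynomial ι ℝ} (hf : f ∈ degreeLT (n + 2)) :
    multiDeriv n y (affineSubst s v f - affineSubst s v' f) =
      s ^ n * multiDeriv n y (dirDeriv (v - v') f) := by
  induction n generalizing f with
  | zero =>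
    simp only [multiDeriv, map_sub, evalZero_apply, eval_affineSubst, smul_zero, zero_add,
      pow_zero, one_mul]
    rw [eval_eq_of_mem_degreeLT_two hf v, eval_eq_of_mem_degreeLT_two hf v']
    simp [evalZero_apply, dirDeriv_apply, sub_mul]
  | succ n ih =>
    rw [multiDeriv_succ, map_sub, dirDeriv_affineSubst, dirDeriv_affineSubst, ← smul_sub, map_smul,
      ih _ (dirDeriv_mem_degreeLT hf _), multiDeriv_succ, dirDeriv_comm, smul_eq_mul, pow_succ]
    ring

lemma decoupledCharFun_smul_affineSubst_sub (c s : ℝ) (v v' : ι → ℝ) {f : MvPolynomial ι ℝ}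
    (hf : f ∈ degreeLT (n + 2)) :
    decoupledCharFun n (c • (affineSubst s v f - affineSubst s v' f)) =
      decoupledCharFun n (dirDeriv (v - v') ((c * s ^ n) • f)) := by
  simp only [decoupledCharFun, map_smul, multiDeriv_affineSubst_sub s v v' _ hf, smul_eq_mul,
    mul_assoc]

lemma integrable_decoupledCharFun_dirDeriv (f : MvPolynomial ι ℝ) :
    Integrable (fun x => decoupledCharFun n (dirDeriv x f)) (gaussPi ι) := by
  unfold decoupledCharFun
  simp only [multiDeriv_dirDeriv]
  have hprod : Integrable (fun z : (ι → ℝ) × (Fin n → ι → ℝ) =>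
      Real.cos (∑ k, z.1 k * multiDeriv n z.2 (pderiv k f)))
      ((gaussPi ι).prod (gaussCopies n ι)) :=
    integrable_of_continuous_of_bound (by fun_prop) fun _ => Real.abs_cos_le_one _
  exact hprod.integral_prod_left

lemma integral_decoupledCharFun_dirDeriv (f : MvPolynomial ι ℝ) :
    ∫ x, decoupledCharFun n (dirDeriv x f) ∂gaussPi ι = decoupledCharFun (n + 1) f := by
  unfold decoupledCharFun
  rw [integral_gaussCopies_succ]
  simp only [multiDeriv_cons, multiDeriv_dirDeriv]
  rw [integral_prod]
  exact integrable_of_continuous_of_bound (by fun_prop) fun _ => Real.abs_cos_le_one _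

lemma integral_cos_eval_eq (f : MvPolynomial ι ℝ) {s : ℝ} (hs : s ^ 2 + s ^ 2 = 1) :
    ∫ x, Real.cos (eval x f) ∂gaussPi ι =
      ∫ u, ∫ v, Real.cos (eval (s • u + s • v) f) ∂gaussPi ι ∂gaussPi ι := by
  have hrot := measurePreserving_smul_add_smul_gaussPi (ι := ι) hs
  rw [← hrot.map_eq, integral_map hrot.measurable.aemeasurable
    (Continuous.aestronglyMeasurable (by fun_prop)), integral_prod]
  · simp only [hrot.map_eq]
  · exact integrable_of_continuous_of_bound (by fun_prop) fun _ => Real.abs_cos_le_one _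

lemma integrable_integral_cos {α β : Type*} [TopologicalSpace α] [SecondCountableTopology α]
    [MeasurableSpace α] [BorelSpace α] [TopologicalSpace β] [SecondCountableTopology β]
    [MeasurableSpace β] [BorelSpace β] {μ : Measure α} [IsFiniteMeasure μ] {ν : Measure β}
    [IsFiniteMeasure ν] {k : α → β → ℝ} (hk : Continuous fun z : α × β => k z.1 z.2) :
    Integrable (fun a => ∫ b, Real.cos (k a b) ∂ν) μ :=
  Integrable.integral_prod_left (f := fun z : α × β => Real.cos (k z.1 z.2)) <|
    integrable_of_continuous_of_bound (by fun_prop) fun _ => Real.abs_cos_le_one _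

end WeylDifferencing

section Weyl

variable {ι : Type} [Fintype ι] {n : ℕ}

lemma sq_integral_cos_eval_le {s : ℝ} (hs : s ^ 2 + s ^ 2 = 1) (f : MvPolynomial ι ℝ) :
    (∫ x, Real.cos (eval x f) ∂gaussPi ι) ^ 2 ≤
      ∫ z, ∫ u, Real.cos (eval u (affineSubst s (s • z.1) f - affineSubst s (s • z.2) f)) ∂gaussPi ι
        ∂(gaussPi ι).prod (gaussPi ι) := by
  set k : (ι → ℝ) → (ι → ℝ) → ℝ := fun u v => eval (s • u + s • v) f
  calc (∫ x, Real.cos (eval x f) ∂gaussPi ι) ^ 2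
      = (∫ u, ∫ v, Real.cos (k u v) ∂gaussPi ι ∂gaussPi ι) ^ 2 := by rw [integral_cos_eval_eq f hs]
    _ ≤ ∫ u, (∫ v, Real.cos (k u v) ∂gaussPi ι) ^ 2 ∂gaussPi ι :=
        pow_two_pow_integral_le (integrable_integral_cos (by fun_prop)).aestronglyMeasurable
          (fun _ => abs_integral_cos_le_one _) 1
    _ ≤ ∫ u, ∫ z, Real.cos (k u z.1 - k u z.2) ∂(gaussPi ι).prod (gaussPi ι) ∂gaussPi ι := by
        refine integral_mono ?_ (integrable_integral_cos (by fun_prop)) fun u =>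
          sq_integral_cos_le (Continuous.measurable (by fun_prop))
        exact integrable_pow_of_abs_le_one
          (integrable_integral_cos (by fun_prop)).aestronglyMeasurable
          (fun _ => abs_integral_cos_le_one _) 2
    _ = ∫ z, ∫ u, Real.cos (k u z.1 - k u z.2) ∂gaussPi ι ∂(gaussPi ι).prod (gaussPi ι) :=
        integral_integral_swap <| integrable_of_continuous_of_bound (by fun_prop) fun _ =>
          Real.abs_cos_le_one _
    _ = _ := by simp only [k, map_sub, eval_affineSubst]

lemma decoupledCharFun_smul_affineSubst_sub_eq_comp (c s : ℝ) {f : MvPolynomial ι ℝ}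
    (hf : f ∈ degreeLT (n + 2)) :
    (fun z : (ι → ℝ) × (ι → ℝ) =>
        decoupledCharFun n (c • (affineSubst s (s • z.1) f - affineSubst s (s • z.2) f))) =
      (fun x => decoupledCharFun n (dirDeriv x ((c * s ^ n) • f))) ∘
        fun z => s • z.1 + (-s) • z.2 := by
  ext z
  rw [decoupledCharFun_smul_affineSubst_sub c s _ _ hf, Function.comp_apply, neg_smul,
    ← sub_eq_add_neg]

lemma integrable_decoupledCharFun_affineSubst_sub {s : ℝ} (hs : s ^ 2 + s ^ 2 = 1) (c : ℝ)
    {f : MvPolynomial ι ℝ} (hf : f ∈ degreeLT (n + 2)) :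
    Integrable (fun z : (ι → ℝ) × (ι → ℝ) =>
      decoupledCharFun n (c • (affineSubst s (s • z.1) f - affineSubst s (s • z.2) f)))
      ((gaussPi ι).prod (gaussPi ι)) := by
  rw [decoupledCharFun_smul_affineSubst_sub_eq_comp c s hf]
  exact (measurePreserving_smul_add_smul_gaussPi (by rwa [neg_sq])).integrable_comp_of_integrable
    (integrable_decoupledCharFun_dirDeriv _)

lemma integral_decoupledCharFun_affineSubst_sub {s : ℝ} (hs : s ^ 2 + s ^ 2 = 1) (c : ℝ)
    {f : MvPolynomial ι ℝ} (hf : f ∈ degreeLT (n + 2)) :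
    ∫ z, decoupledCharFun n (c • (affineSubst s (s • z.1) f - affineSubst s (s • z.2) f))
        ∂(gaussPi ι).prod (gaussPi ι) = decoupledCharFun (n + 1) ((c * s ^ n) • f) := by
  have hrot := measurePreserving_smul_add_smul_gaussPi (ι := ι) (a := s) (b := -s) (by rwa [neg_sq])
  rw [← integral_decoupledCharFun_dirDeriv, ← hrot.map_eq,
    integral_map hrot.measurable.aemeasurable, hrot.map_eq,
    decoupledCharFun_smul_affineSubst_sub_eq_comp c s hf]
  · rfl
  · rw [hrot.map_eq]
    exact (integrable_decoupledCharFun_dirDeriv _).aestronglyMeasurable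

/-- Weyl's inequality: each application of Cauchy–Schwarz, after splitting `x` into two independent
copies, lowers the degree of the phase by one. -/
theorem exists_integral_cos_pow_le_decoupledCharFun (n : ℕ) :
    ∃ c > (0 : ℝ), ∀ (ι : Type) [Fintype ι] (f : MvPolynomial ι ℝ), f ∈ degreeLT (n + 1) →
      (∫ x, Real.cos (eval x f) ∂gaussPi ι) ^ 2 ^ n ≤ decoupledCharFun n (c • f) := by
  induction n with
  | zero =>
    refine ⟨1, one_pos, fun ι _ f hf => ?_⟩
    rw [eq_C_of_mem_degreeLT_one hf]
    simp [decoupledCharFun, multiDeriv]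
  | succ n ih =>
    obtain ⟨c, hc, hweyl⟩ := ih
    obtain ⟨s, hs, hss⟩ : ∃ s > (0 : ℝ), s ^ 2 + s ^ 2 = 1 :=
      ⟨√(1 / 2), by positivity, by rw [Real.sq_sqrt (by norm_num)]; norm_num⟩
    refine ⟨c * s ^ n, by positivity, fun ι _ f hf => ?_⟩
    set diff : (ι → ℝ) × (ι → ℝ) → MvPolynomial ι ℝ := fun z =>
      affineSubst s (s • z.1) f - affineSubst s (s • z.2) f
    have hmeas : AEStronglyMeasurable (fun z => ∫ u, Real.cos (eval u (diff z)) ∂gaussPi ι)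
        ((gaussPi ι).prod (gaussPi ι)) := by
      simp only [diff, map_sub, eval_affineSubst]
      exact (integrable_integral_cos (by fun_prop)).aestronglyMeasurable
    calc (∫ x, Real.cos (eval x f) ∂gaussPi ι) ^ 2 ^ (n + 1)
        = ((∫ x, Real.cos (eval x f) ∂gaussPi ι) ^ 2) ^ 2 ^ n := by rw [← pow_mul, pow_succ']
      _ ≤ (∫ z, ∫ u, Real.cos (eval u (diff z)) ∂gaussPi ι ∂(gaussPi ι).prod (gaussPi ι)) ^ 2 ^ n :=
          pow_le_pow_left₀ (sq_nonneg _) (sq_integral_cos_eval_le hss f) _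
      _ ≤ ∫ z, (∫ u, Real.cos (eval u (diff z)) ∂gaussPi ι) ^ 2 ^ n ∂(gaussPi ι).prod (gaussPi ι) :=
          pow_two_pow_integral_le hmeas (fun _ => abs_integral_cos_le_one _) n
      _ ≤ ∫ z, decoupledCharFun n (c • diff z) ∂(gaussPi ι).prod (gaussPi ι) :=
          integral_mono (integrable_pow_of_abs_le_one hmeas (fun _ => abs_integral_cos_le_one _) _)
            (integrable_decoupledCharFun_affineSubst_sub hss c hf)
              fun z => hweyl ι _ (affineSubst_sub_mem_degreeLT _ _ _ hf)
      _ = decoupledCharFun (n + 1) ((c * s ^ n) • f) :=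
          integral_decoupledCharFun_affineSubst_sub hss c hf

lemma integral_exp_neg_sqField_eq (f : MvPolynomial ι ℝ) :
    ∫ x, Real.exp (-sqField f x / 2) ∂gaussPi ι =
      ∫ y, ∫ x, Real.cos (eval x (dirDeriv y f)) ∂gaussPi ι ∂gaussPi ι := by
  have heval (x y : ι → ℝ) : eval x (dirDeriv y f) = ∑ k, y k * eval x (pderiv k f) := by
    simp [dirDeriv_apply]
  simp only [heval]
  rw [integral_integral_swap]
  · simp only [integral_cos_gaussPi, sqField]
  · exact integrable_of_continuous_of_bound (by fun_prop) fun _ => Real.abs_cos_le_one _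

theorem exists_integral_exp_neg_sqField_pow_le (n : ℕ) :
    ∃ c > (0 : ℝ), ∀ (ι : Type) [Fintype ι] (f : MvPolynomial ι ℝ), f ∈ degreeLT (n + 2) →
      (∫ x, Real.exp (-sqField f x / 2) ∂gaussPi ι) ^ 2 ^ n ≤ decoupledCharFun (n + 1) (c • f) := by
  obtain ⟨c, hc, hweyl⟩ := exists_integral_cos_pow_le_decoupledCharFun n
  refine ⟨c, hc, fun ι _ f hf => ?_⟩
  have hmeas : AEStronglyMeasurable
      (fun y => ∫ x, Real.cos (eval x (dirDeriv y f)) ∂gaussPi ι) (gaussPi ι) := by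
    simp only [dirDeriv_apply, map_sum, smul_eval]
    exact (integrable_integral_cos (by fun_prop)).aestronglyMeasurable
  calc (∫ x, Real.exp (-sqField f x / 2) ∂gaussPi ι) ^ 2 ^ n
      = (∫ y, ∫ x, Real.cos (eval x (dirDeriv y f)) ∂gaussPi ι ∂gaussPi ι) ^ 2 ^ n := by
        rw [integral_exp_neg_sqField_eq]
    _ ≤ ∫ y, (∫ x, Real.cos (eval x (dirDeriv y f)) ∂gaussPi ι) ^ 2 ^ n ∂gaussPi ι :=
        pow_two_pow_integral_le hmeas (fun _ => abs_integral_cos_le_one _) n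
    _ ≤ ∫ y, decoupledCharFun n (dirDeriv y (c • f)) ∂gaussPi ι := by
        refine integral_mono (integrable_pow_of_abs_le_one hmeas
          (fun _ => abs_integral_cos_le_one _) _)
          (integrable_decoupledCharFun_dirDeriv _) fun y => ?_
        simpa only [map_smul] using hweyl ι _ (dirDeriv_mem_degreeLT hf y)
    _ = decoupledCharFun (n + 1) (c • f) := integral_decoupledCharFun_dirDeriv _

end Weyl

section NegativeMoments

lemma inv_ofReal_pow_succ_le_lintegral {x : ℝ} (hx : 0 ≤ x) (p : ℕ) :
    (ENNReal.ofReal x ^ (p + 1))⁻¹ ≤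
      ∫⁻ t in Set.Ioi (0 : ℝ), ENNReal.ofReal (t ^ p * Real.exp (-(x * t))) := by
  rcases hx.eq_or_lt with rfl | hx
  · calc (ENNReal.ofReal 0 ^ (p + 1))⁻¹ ≤ ∫⁻ _ in Set.Ioi (1 : ℝ), 1 := by simp
      _ ≤ ∫⁻ t in Set.Ioi (1 : ℝ), ENNReal.ofReal (t ^ p * Real.exp (-(0 * t))) :=
          setLIntegral_mono (by fun_prop) fun t ht => by
            simpa using one_le_pow₀ (Set.mem_Ioi.1 ht).le
      _ ≤ _ := lintegral_mono_set (Set.Ioi_subset_Ioi zero_le_one)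
  · have hgamma : ∫ t in Set.Ioi (0 : ℝ), t ^ p * Real.exp (-(x * t)) =
        (x ^ (p + 1))⁻¹ * p.factorial := by
      have h := Real.integral_rpow_mul_exp_neg_mul_Ioi (a := p + 1) (by positivity) hx
      rw [Real.Gamma_nat_eq_factorial, ← Nat.cast_succ, Real.rpow_natCast, one_div, inv_pow] at h
      simpa using h
    have hpos : 0 < (x ^ (p + 1))⁻¹ * (p.factorial : ℝ) := by positivity
    rw [← ofReal_integral_eq_lintegral_ofReal (.of_integral_ne_zero (hgamma ▸ hpos.ne')), hgamma,
      ← ENNReal.ofReal_pow hx.le, ← ENNReal.ofReal_inv_of_pos (by positivity)]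
    · gcongr
      exact le_mul_of_one_le_right (by positivity) (mod_cast p.factorial_pos)
    · exact ae_restrict_of_forall_mem measurableSet_Ioi fun t ht => by
        have := (Set.mem_Ioi.1 ht).le
        positivity

lemma lintegral_Ioi_le_one_add {L : ℝ → ℝ} {p : ℕ} {A : ℝ} (hA : 0 ≤ A)
    (hone : ∀ t, 0 < t → L t ≤ 1) (hdecay : ∀ t, 0 < t → t ^ (p + 2) * L t ≤ A) :
    ∫⁻ t in Set.Ioi (0 : ℝ), ENNReal.ofReal (t ^ p * L t) ≤ ENNReal.ofReal (1 + A) := by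
  have hnear : ∫⁻ t in Set.Ioc (0 : ℝ) 1, ENNReal.ofReal (t ^ p * L t) ≤ 1 := by
    calc _ ≤ ∫⁻ _ in Set.Ioc (0 : ℝ) 1, (1 : ENNReal) := by
          refine setLIntegral_mono (by fun_prop) fun t ht => ENNReal.ofReal_le_one.2 ?_
          calc t ^ p * L t ≤ t ^ p * 1 :=
                mul_le_mul_of_nonneg_left (hone t ht.1) (pow_nonneg ht.1.le p)
            _ ≤ 1 := by simpa using pow_le_one₀ ht.1.le ht.2
      _ = 1 := by simp
  have htail : ∫⁻ t in Set.Ioi (1 : ℝ), ENNReal.ofReal (t ^ p * L t) ≤ ENNReal.ofReal A := by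
    calc _ ≤ ∫⁻ t in Set.Ioi (1 : ℝ), ENNReal.ofReal (A * t ^ (-2 : ℝ)) := by
          refine setLIntegral_mono (by fun_prop) fun t ht => ENNReal.ofReal_le_ofReal ?_
          have ht0 : 0 < t := zero_lt_one.trans ht
          rw [Real.rpow_neg ht0.le, Real.rpow_two, ← div_eq_mul_inv, le_div_iff₀ (by positivity)]
          linarith [hdecay t ht0, show t ^ p * L t * t ^ 2 = t ^ (p + 2) * L t by ring]
      _ = ENNReal.ofReal (∫ t in Set.Ioi (1 : ℝ), A * t ^ (-2 : ℝ)) :=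
          (ofReal_integral_eq_lintegral_ofReal
            ((integrableOn_Ioi_rpow_of_lt (by norm_num) one_pos).const_mul A)
            (ae_restrict_of_forall_mem measurableSet_Ioi fun t ht => by
              have := zero_lt_one.trans (Set.mem_Ioi.1 ht)
              positivity)).symm
      _ = ENNReal.ofReal A := by
          rw [integral_const_mul, integral_Ioi_rpow_of_lt (by norm_num) one_pos]
          norm_num
  rw [← Set.Ioc_union_Ioi_eq_Ioi zero_le_one, lintegral_union measurableSet_Ioi
    Set.Ioc_disjoint_Ioi_same, ENNReal.ofReal_add zero_le_one hA, ENNReal.ofReal_one]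
  exact add_le_add hnear htail

/-- Since `(q - 1)! g⁻ᵠ = ∫ t ^ (q - 1) exp (-(g t)) dt` over `t > 0`, for `q ≠ 0`. -/
theorem lintegral_inv_ofReal_pow_le {α : Type*} [MeasurableSpace α] {μ : Measure α}
    [IsProbabilityMeasure μ] {g : α → ℝ} (hg : Measurable g) (hnonneg : ∀ x, 0 ≤ g x) {q : ℕ}
    {A : ℝ} (hA : 0 ≤ A)
    (hdecay : ∀ t, 0 < t → t ^ (q + 1) * ∫ x, Real.exp (-(g x * t)) ∂μ ≤ A) :
    ∫⁻ x, (ENNReal.ofReal (g x) ^ q)⁻¹ ∂μ ≤ ENNReal.ofReal (1 + A) := by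
  cases q with
  | zero => simpa using hA
  | succ p =>
    have hexp_le (t : ℝ) (ht : 0 < t) (x : α) : Real.exp (-(g x * t)) ≤ 1 :=
      Real.exp_le_one_iff.2 (neg_nonpos.2 (mul_nonneg (hnonneg x) ht.le))
    have h_int (t : ℝ) (ht : 0 < t) : Integrable (fun x => Real.exp (-(g x * t))) μ :=
      .of_bound (by fun_prop) 1 (Eventually.of_forall fun x => by
        simpa [abs_of_pos (Real.exp_pos _)] using hexp_le t ht x)
    calc ∫⁻ x, (ENNReal.ofReal (g x) ^ (p + 1))⁻¹ ∂μ
        ≤ ∫⁻ x, (∫⁻ t in Set.Ioi (0 : ℝ), ENNReal.ofReal (t ^ p * Real.exp (-(g x * t)))) ∂μ :=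
          lintegral_mono fun x => inv_ofReal_pow_succ_le_lintegral (hnonneg x) p
      _ = ∫⁻ t in Set.Ioi (0 : ℝ), ∫⁻ x, ENNReal.ofReal (t ^ p * Real.exp (-(g x * t))) ∂μ :=
          lintegral_lintegral_swap (by fun_prop)
      _ = ∫⁻ t in Set.Ioi (0 : ℝ), ENNReal.ofReal (t ^ p * ∫ x, Real.exp (-(g x * t)) ∂μ) := by
          refine setLIntegral_congr_fun measurableSet_Ioi fun t ht => ?_
          have htp : 0 ≤ t ^ p := pow_nonneg (Set.mem_Ioi.1 ht).le p
          rw [← integral_const_mul, ofReal_integral_eq_lintegral_ofReal ((h_int t ht).const_mul _)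
            (Eventually.of_forall fun x => mul_nonneg htp (Real.exp_pos _).le)]
      _ ≤ ENNReal.ofReal (1 + A) :=
          lintegral_Ioi_le_one_add hA
            (fun t ht => integral_le_of_forall_le (h_int t ht) (hexp_le t ht)) hdecay

end NegativeMoments

section SquareField

variable {ι : Type} [Fintype ι]

lemma sqField_nonneg (f : MvPolynomial ι ℝ) (x : ι → ℝ) : 0 ≤ sqField f x :=
  Finset.sum_nonneg fun _ _ => sq_nonneg _

@[fun_prop]
lemma measurable_sqField (f : MvPolynomial ι ℝ) : Measurable (sqField f) :=
  Continuous.measurable (by unfold sqField; fun_prop)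

lemma sqField_smul (a : ℝ) (f : MvPolynomial ι ℝ) (x : ι → ℝ) :
    sqField (a • f) x = a ^ 2 * sqField f x := by
  simp only [sqField, Derivation.map_smul, smul_eval, mul_pow, Finset.mul_sum]

lemma le_one_add_of_pow_le {x C : ℝ} {k : ℕ} (hk : k ≠ 0) (hC : 0 ≤ C) (h : x ^ k ≤ C) :
    x ≤ 1 + C := by
  by_contra! hlt
  linarith [le_self_pow₀ (show 1 ≤ x by linarith) hk]

theorem exists_pow_mul_integral_exp_neg_sqField_le (n q : ℕ) :
    ∃ δ > (0 : ℝ), ∃ C > (0 : ℝ), ∀ (ι : Type) [Fintype ι] (f : MvPolynomial ι ℝ),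
      f ∈ degreeLT (n + 2) →
      contractionSum (n + 1) f ≤ δ * derivForm evalZero (n + 1) f f ^ 2 → ∀ t > (0 : ℝ),
      (derivForm evalZero (n + 1) f f * t) ^ q * ∫ x, Real.exp (-(sqField f x * t)) ∂gaussPi ι ≤
        C := by
  obtain ⟨c, hc, hweyl⟩ := exists_integral_exp_neg_sqField_pow_le n
  obtain ⟨δ, hδ, C, hC, hdecay⟩ := exists_pow_mul_decoupledCharFun_le n (q * 2 ^ n)
  refine ⟨δ, hδ, (1 + C) / (2 * c ^ 2) ^ q, by positivity, fun ι _ f hf hcontr t ht => ?_⟩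
  set d := derivForm evalZero (n + 1) f f
  set L := ∫ x, Real.exp (-(sqField f x * t)) ∂gaussPi ι
  have hsqrt : √(2 * t) ^ 2 = 2 * t := Real.sq_sqrt (by positivity)
  have hlaplace : L ^ 2 ^ n ≤ decoupledCharFun (n + 1) ((c * √(2 * t)) • f) := by
    have h := hweyl ι (√(2 * t) • f) (Submodule.smul_mem _ _ hf)
    simp only [sqField_smul, hsqrt, smul_smul] at h
    convert h using 5
    ring
  have hform : derivForm evalZero (n + 1) ((c * √(2 * t)) • f) ((c * √(2 * t)) • f) =
      2 * c ^ 2 * (d * t) := by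
    simp only [map_smul, LinearMap.smul_apply, smul_eq_mul]
    linear_combination c ^ 2 * d * hsqrt
  have htensor := hdecay ι ((c * √(2 * t)) • f) <| by
    rw [contractionSum_smul]
    simp only [map_smul, LinearMap.smul_apply, smul_eq_mul]
    nlinarith [mul_le_mul_of_nonneg_left hcontr (show 0 ≤ (c * √(2 * t)) ^ 4 by positivity)]
  have hpow : ((2 * c ^ 2 * (d * t)) ^ q * L) ^ 2 ^ n ≤ C := by
    rw [mul_pow, ← pow_mul, ← hform]
    refine (mul_le_mul_of_nonneg_left hlaplace ?_).trans htensor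
    exact pow_nonneg (derivForm_self_nonneg ..) _
  rw [le_div_iff₀ (by positivity)]
  rw [mul_right_comm, ← mul_pow, mul_comm (d * t)]
  exact le_one_add_of_pow_le (by positivity) hC.le hpow

theorem exists_lintegral_inv_sqField_pow_le (n q : ℕ) {b : ℝ} (hb : 0 < b) :
    ∃ δ > (0 : ℝ), ∃ C > (0 : ℝ), ∀ (ι : Type) [Fintype ι] (f : MvPolynomial ι ℝ),
      f ∈ degreeLT (n + 2) →
      contractionSum (n + 1) f ≤ δ * derivForm evalZero (n + 1) f f ^ 2 →
      b ≤ derivForm evalZero (n + 1) f f →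
      ∫⁻ x, (ENNReal.ofReal (sqField f x) ^ q)⁻¹ ∂gaussPi ι ≤ ENNReal.ofReal C := by
  obtain ⟨δ, hδ, C, hC, hdecay⟩ := exists_pow_mul_integral_exp_neg_sqField_le n (q + 1)
  refine ⟨δ, hδ, 1 + C / b ^ (q + 1), by positivity, fun ι _ f hf hcontr hbf => ?_⟩
  refine lintegral_inv_ofReal_pow_le (by fun_prop) (sqField_nonneg f) (by positivity) fun t ht => ?_
  rw [le_div_iff₀' (by positivity), ← mul_assoc, ← mul_pow]
  refine le_trans ?_ (hdecay ι f hf hcontr t ht)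
  gcongr

end SquareField

section LevyProkhorov

variable {Ω : Type*} [MeasurableSpace Ω]

lemma sub_sq_div_le_min {y M a : ℝ} (hM : 0 < M) (hy : 0 ≤ y) (ha : a ≤ 1) :
    a * y - a ^ 2 * y ^ 2 / (4 * M) ≤ min y M := by
  refine le_min ?_ ?_
  · have : 0 ≤ a ^ 2 * y ^ 2 / (4 * M) := by positivity
    nlinarith
  · rw [sub_le_iff_le_add, ← sub_le_iff_le_add', le_div_iff₀ (by positivity)]
    nlinarith [sq_nonneg (a * y - 2 * M)]

lemma integrable_of_integrable_sq {μ : Measure Ω} [IsFiniteMeasure μ] {g : Ω → ℝ}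
    (hg : AEStronglyMeasurable g μ) (hsq : Integrable (fun x => g x ^ 2) μ) : Integrable g μ :=
  ((memLp_two_iff_integrable_sq hg).2 hsq).integrable one_le_two

lemma integral_sub_le_integral_min {μ : Measure Ω} [IsFiniteMeasure μ] {g : Ω → ℝ} {M a : ℝ}
    (hM : 0 < M) (ha : a ≤ 1) (hg : AEStronglyMeasurable g μ) (hnonneg : ∀ x, 0 ≤ g x)
    (hsq : Integrable (fun x => g x ^ 2) μ) :
    a * ∫ x, g x ∂μ - a ^ 2 * (∫ x, g x ^ 2 ∂μ) / (4 * M) ≤ ∫ x, min (g x) M ∂μ := by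
  have h_int := integrable_of_integrable_sq hg hsq
  have hsqint : Integrable (fun x => a ^ 2 * g x ^ 2 / (4 * M)) μ := (hsq.const_mul _).div_const _
  rw [← integral_const_mul, ← integral_const_mul, ← integral_div,
    ← integral_sub (h_int.const_mul a) hsqint]
  exact integral_mono ((h_int.const_mul a).sub hsqint) (h_int.inf (integrable_const M)) fun x =>
    sub_sq_div_le_min hM (hnonneg x) ha

lemma integral_min_le {μ : Measure Ω} [IsFiniteMeasure μ] {g : Ω → ℝ} (hg : Integrable g μ)
    (M : ℝ) : ∫ x, min (g x) M ∂μ ≤ ∫ x, g x ∂μ :=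
  integral_mono (hg.inf (integrable_const M)) hg fun _ => min_le_left _ _

lemma integral_le_two_mul_of_integral_min_le {μ : Measure Ω} [IsFiniteMeasure μ] {g : Ω → ℝ}
    {b C : ℝ} (hb : 0 < b) (hC : 0 < C) (hg : AEStronglyMeasurable g μ) (hnonneg : ∀ x, 0 ≤ g x)
    (hsq : Integrable (fun x => g x ^ 2) μ) (hle : ∫ x, g x ^ 2 ∂μ ≤ C * (∫ x, g x ∂μ) ^ 2)
    (hmin : ∫ x, min (g x) (2 * b * C) ∂μ ≤ b) : ∫ x, g x ∂μ ≤ 2 * b := by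
  by_contra! hlt
  set s := ∫ x, g x ∂μ
  have hs : 0 < s := by linarith
  have htrunc := integral_sub_le_integral_min (a := 2 * b / s) (by positivity : 0 < 2 * b * C)
    ((div_le_one hs).2 hlt.le) hg hnonneg hsq
  have hquad : (2 * b / s) ^ 2 * (∫ x, g x ^ 2 ∂μ) / (4 * (2 * b * C)) ≤ b / 2 := by
    calc _ ≤ (2 * b / s) ^ 2 * (C * s ^ 2) / (4 * (2 * b * C)) := by gcongr
      _ = b / 2 := by field_simp; ring
  have hlin : 2 * b / s * s = 2 * b := div_mul_cancel₀ _ hs.ne'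
  linarith

variable [PseudoMetricSpace Ω] [OpensMeasurableSpace Ω] (ν : Measure Ω) [IsProbabilityMeasure ν]

lemma exists_levyProkhorovDist_le_integral_sub_lt (h : BoundedContinuousFunction Ω ℝ) {η : ℝ}
    (hη : 0 < η) : ∃ δ > (0 : ℝ), ∀ (μ : Measure Ω) [IsProbabilityMeasure μ],
      levyProkhorovDist μ ν ≤ δ → |∫ x, h x ∂μ - ∫ x, h x ∂ν| < η := by
  have htendsto := ProbabilityMeasure.tendsto_iff_forall_integral_tendsto.1
    (LevyProkhorov.continuous_toMeasure_probabilityMeasure.tendsto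
      (LevyProkhorov.ofMeasure (⟨ν, inferInstance⟩ : ProbabilityMeasure Ω))) h
  obtain ⟨δ, hδ, hclose⟩ := Metric.eventually_nhds_iff.1 (Metric.tendsto_nhds.1 htendsto η hη)
  refine ⟨δ / 2, by positivity, fun μ _ hμ => hclose (y := .ofMeasure ⟨μ, inferInstance⟩) ?_⟩
  rw [LevyProkhorov.dist_probabilityMeasure_def]
  exact hμ.trans_lt (half_lt_self hδ)

variable {g : Ω → ℝ}

lemma exists_levyProkhorovDist_le_integral_min_sub_lt (hg : Continuous g) (hnonneg : ∀ x, 0 ≤ g x)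
    {M : ℝ} (hM : 0 ≤ M) {η : ℝ} (hη : 0 < η) :
    ∃ δ > (0 : ℝ), ∀ (μ : Measure Ω) [IsProbabilityMeasure μ],
      levyProkhorovDist μ ν ≤ δ → |∫ x, min (g x) M ∂μ - ∫ x, min (g x) M ∂ν| < η :=
  exists_levyProkhorovDist_le_integral_sub_lt ν
    (.ofNormedAddCommGroup (fun x => min (g x) M) (hg.min continuous_const) M fun x => by
      rw [Real.norm_of_nonneg (le_min (hnonneg x) hM)]
      exact min_le_right _ _) hη

theorem exists_levyProkhorovDist_le_integral_le (hg : Continuous g) (hnonneg : ∀ x, 0 ≤ g x)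
    (hν : Integrable g ν) {C : ℝ} (hC : 0 < C) :
    ∃ δ > (0 : ℝ), ∀ (μ : Measure Ω) [IsProbabilityMeasure μ],
      Integrable (fun x => g x ^ 2) μ → ∫ x, g x ^ 2 ∂μ ≤ C * (∫ x, g x ∂μ) ^ 2 →
      levyProkhorovDist μ ν ≤ δ → ∫ x, g x ∂μ ≤ 2 * (∫ x, g x ∂ν + 1) := by
  set b := ∫ x, g x ∂ν + 1
  have hb : 0 < b := add_pos_of_nonneg_of_pos (integral_nonneg hnonneg) one_pos
  obtain ⟨δ, hδ, hclose⟩ := exists_levyProkhorovDist_le_integral_min_sub_lt ν hg hnonneg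
    (show 0 ≤ 2 * b * C by positivity) one_pos
  refine ⟨δ, hδ, fun μ _ hsq hle hμ => integral_le_two_mul_of_integral_min_le hb hC
    hg.measurable.aestronglyMeasurable hnonneg hsq hle ?_⟩
  linarith [(abs_lt.1 (hclose μ hμ)).2, integral_min_le hν (2 * b * C)]

theorem exists_levyProkhorovDist_le_abs_integral_sub_le (hg : Continuous g)
    (hnonneg : ∀ x, 0 ≤ g x) (hν : Integrable (fun x => g x ^ 2) ν) (B : ℝ) {ε : ℝ} (hε : 0 < ε) :
    ∃ δ > (0 : ℝ), ∀ (μ : Measure Ω) [IsProbabilityMeasure μ],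
      Integrable (fun x => g x ^ 2) μ → ∫ x, g x ^ 2 ∂μ ≤ B →
      levyProkhorovDist μ ν ≤ δ → |∫ x, g x ∂μ - ∫ x, g x ∂ν| ≤ ε := by
  have hgm (μ : Measure Ω) : AEStronglyMeasurable g μ := hg.measurable.aestronglyMeasurable
  set D := max 1 (max B (∫ x, g x ^ 2 ∂ν))
  have hD : 0 < D := lt_max_of_lt_left one_pos
  set M := D / (2 * ε)
  have hM : 0 < M := by positivity
  have htrunc (μ : Measure Ω) [IsProbabilityMeasure μ] (hsq : Integrable (fun x => g x ^ 2) μ)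
      (hle : ∫ x, g x ^ 2 ∂μ ≤ D) : ∫ x, g x ∂μ - ε / 2 ≤ ∫ x, min (g x) M ∂μ := by
    have h := integral_sub_le_integral_min hM le_rfl (hgm μ) hnonneg hsq
    have hdiv : (∫ x, g x ^ 2 ∂μ) / (4 * M) ≤ ε / 2 := by
      calc (∫ x, g x ^ 2 ∂μ) / (4 * M) ≤ D / (4 * M) := by gcongr
        _ = ε / 2 := by simp only [M]; field_simp; norm_num
    rw [one_pow, one_mul, one_mul] at h
    linarith
  obtain ⟨δ, hδ, hclose⟩ := exists_levyProkhorovDist_le_integral_min_sub_lt ν hg hnonneg hM.le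
    (half_pos hε)
  refine ⟨δ, hδ, fun μ _ hsq hle hμ => abs_le.2 ?_⟩
  have habs := abs_lt.1 (hclose μ hμ)
  have hμD := htrunc μ hsq (hle.trans ((le_max_left _ _).trans (le_max_right _ _)))
  have hνD := htrunc ν hν ((le_max_right _ _).trans (le_max_right _ _))
  have hμmin := integral_min_le (integrable_of_integrable_sq (hgm μ) hsq) M
  have hνmin := integral_min_le (integrable_of_integrable_sq (hgm ν) hν) M
  constructor <;> linarith

end LevyProkhorov

section Moments

variable {ι : Type} [Fintype ι]

/-- The law of `F (N)` for a standard Gaussian vector `N`. -/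
noncomputable def law (F : MvPolynomial ι ℝ) : Measure ℝ :=
  Measure.map (fun x => eval x F) (gaussPi ι)

instance (F : MvPolynomial ι ℝ) : IsProbabilityMeasure (law F) :=
  Measure.isProbabilityMeasure_map (MvPolynomial.continuous_eval F).aemeasurable

lemma integral_pow_law (F : MvPolynomial ι ℝ) (k : ℕ) : ∫ x, x ^ k ∂law F = gaussExp (F ^ k) := by
  rw [law, integral_map (MvPolynomial.continuous_eval F).aemeasurable
    (Continuous.aestronglyMeasurable (by fun_prop))]
  simp [gaussExp_apply]

lemma integrable_pow_law (F : MvPolynomial ι ℝ) (k : ℕ) : Integrable (fun x => x ^ k) (law F) := by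
  rw [law, integrable_map_measure (Continuous.aestronglyMeasurable (by fun_prop))
    (MvPolynomial.continuous_eval F).aemeasurable]
  simpa [Function.comp_def] using integrable_eval (F ^ k)

lemma exists_levyProkhorovDist_le_gaussExp_sq_le (n : ℕ) : ∃ δ > (0 : ℝ),
    ∀ (ι : Type) [Fintype ι], ∀ F ∈ degreeLT (ι := ι) n,
      levyProkhorovDist (law F) (gaussianReal 0 1) ≤ δ → gaussExp (F ^ 2) ≤ 4 := by
  obtain ⟨C, hC, hhyper⟩ := exists_gaussExp_pow_four_le n
  obtain ⟨δ, hδ, hclose⟩ := exists_levyProkhorovDist_le_integral_le (gaussianReal 0 1)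
    (continuous_pow 2) sq_nonneg (integrable_pow_gaussianReal 2) hC
  refine ⟨δ, hδ, fun ι _ F hF hlaw => ?_⟩
  have h := hclose (law F)
  simp only [← pow_mul, integral_pow_law, integral_sq_gaussianReal] at h
  linarith [h (integrable_pow_law F 4) (hhyper ι F hF) hlaw]

lemma exists_levyProkhorovDist_le_abs_gaussExp_sub_le {k : ℕ} (hk : Even k) (B : ℝ) {ε : ℝ}
    (hε : 0 < ε) : ∃ δ > (0 : ℝ), ∀ (ι : Type) [Fintype ι] (F : MvPolynomial ι ℝ),
      gaussExp (F ^ (k * 2)) ≤ B → levyProkhorovDist (law F) (gaussianReal 0 1) ≤ δ →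
      |gaussExp (F ^ k) - ∫ x, x ^ k ∂gaussianReal 0 1| ≤ ε := by
  obtain ⟨δ, hδ, hclose⟩ := exists_levyProkhorovDist_le_abs_integral_sub_le (gaussianReal 0 1)
    (continuous_pow k) hk.pow_nonneg
    (by simpa only [← pow_mul] using integrable_pow_gaussianReal (k * 2)) B hε
  refine ⟨δ, hδ, fun ι _ F hF hlaw => ?_⟩
  have h := hclose (law F)
  simp only [← pow_mul, integral_pow_law] at h
  exact h (integrable_pow_law F _) hF hlaw

lemma exists_gaussExp_pow_eight_le (n : ℕ) : ∃ C > (0 : ℝ), ∀ (ι : Type) [Fintype ι],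
    ∀ F ∈ degreeLT (ι := ι) n, gaussExp (F ^ 8) ≤ C * gaussExp (F ^ 4) ^ 2 := by
  obtain ⟨C, hC, hhyper⟩ := exists_gaussExp_pow_four_le (n + n)
  refine ⟨C, hC, fun ι _ F hF => ?_⟩
  have hsq : F ^ 2 ∈ degreeLT (n + n) := by
    rw [sq]
    exact mul_mem_degreeLT hF (degreeLT_mono n.le_succ hF)
  simpa only [← pow_mul] using hhyper ι (F ^ 2) hsq

theorem exists_levyProkhorovDist_le_abs_gaussExp_sq_sub_one_le (n : ℕ) {ε : ℝ} (hε : 0 < ε) :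
    ∃ δ > (0 : ℝ), ∀ (ι : Type) [Fintype ι], ∀ F ∈ degreeLT (ι := ι) n,
      levyProkhorovDist (law F) (gaussianReal 0 1) ≤ δ →
      |gaussExp (F ^ 2) - 1| ≤ ε ∧ |gaussExp (F ^ 4) - 3| ≤ ε := by
  obtain ⟨C₄, hC₄, hhyper₄⟩ := exists_gaussExp_pow_four_le n
  obtain ⟨C₈, hC₈, hhyper₈⟩ := exists_gaussExp_pow_eight_le n
  obtain ⟨δ, hδ, hsq⟩ := exists_levyProkhorovDist_le_gaussExp_sq_le n
  obtain ⟨δ₂, hδ₂, hclose₂⟩ := exists_levyProkhorovDist_le_abs_gaussExp_sub_le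
    (show Even 2 by decide) (C₄ * 4 ^ 2) hε
  obtain ⟨δ₄, hδ₄, hclose₄⟩ := exists_levyProkhorovDist_le_abs_gaussExp_sub_le
    (show Even 4 by decide) (C₈ * (C₄ * 4 ^ 2) ^ 2) hε
  rw [integral_sq_gaussianReal] at hclose₂
  rw [integral_pow_four_gaussianReal] at hclose₄
  refine ⟨min δ (min δ₂ δ₄), lt_min hδ (lt_min hδ₂ hδ₄), fun ι _ F hF hlaw => ?_⟩
  simp only [le_min_iff] at hlaw
  have hfour : gaussExp (F ^ 4) ≤ C₄ * 4 ^ 2 := by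
    refine (hhyper₄ ι F hF).trans ?_
    gcongr
    · exact gaussExp_sq_nonneg F
    · exact hsq ι F hF hlaw.1
  have hpow_eight : gaussExp (F ^ 8) ≤ C₈ * (C₄ * 4 ^ 2) ^ 2 := by
    refine (hhyper₈ ι F hF).trans ?_
    gcongr
    exact gaussExp_nonneg fun x => by simpa using Even.pow_nonneg (by decide) _
  exact ⟨hclose₂ ι F hfour hlaw.2.1, hclose₄ ι F hpow_eight hlaw.2.2⟩

/-- A constant cannot have both its second moment close to `1` and its fourth close to `3`. -/
lemma exists_lt_levyProkhorovDist_law_C : ∃ δ > (0 : ℝ), ∀ (ι : Type) [Fintype ι] (a : ℝ),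
    δ < levyProkhorovDist (law (C a : MvPolynomial ι ℝ)) (gaussianReal 0 1) := by
  obtain ⟨δ, hδ, hmoments⟩ :=
    exists_levyProkhorovDist_le_abs_gaussExp_sq_sub_one_le 1 (show (0 : ℝ) < 1 / 4 by norm_num)
  refine ⟨δ, hδ, fun ι _ a => ?_⟩
  by_contra! hle
  obtain ⟨htwo, hfour⟩ := hmoments ι (C a) (C_mem_degreeLT a) hle
  rw [← map_pow, gaussExp_C, abs_le] at htwo hfour
  nlinarith [sq_nonneg a]

end Moments

section Chaos

open scoped Nat

lemma contractionSum_congr {ι : Type} [Fintype ι] {n : ℕ} {f g : MvPolynomial ι ℝ}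
    (h : f - g ∈ degreeLT n) : contractionSum n f = contractionSum n g := by
  refine Finset.sum_congr rfl fun r hr => contractionSq_congr ?_
  rwa [Nat.sub_add_cancel (Finset.mem_Ico.1 hr).2.le]

variable {K n : ℕ} {P Q : MvPolynomial (Fin K) ℝ}

lemma contractionSum_succ_le_of_mem_chaos (hQ : Q ∈ chaos K (n + 1)) :
    contractionSum (n + 1) Q ≤
      n * (((n + 1)! : ℝ) ^ 2 * (gaussExp (Q ^ 4) - 3 * gaussExp (Q ^ 2) ^ 2)) := by
  have hterm (r : ℕ) (hr : r ∈ Finset.Ico 1 (n + 1)) : contractionSq r (n + 1 - r) Q ≤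
      ((n + 1)! : ℝ) ^ 2 * (gaussExp (Q ^ 4) - 3 * gaussExp (Q ^ 2) ^ 2) := by
    obtain ⟨hr1, hrn⟩ := Finset.mem_Ico.1 hr
    have hle := contractionSq_le (s := n + 1 - r) (by omega : r ≠ 0) (by omega)
      (by rwa [Nat.sub_add_cancel hrn.le] : Q ∈ chaos K (n + 1 - r + r))
    have hcumulant : 0 ≤ gaussExp (Q ^ 4) - 3 * gaussExp (Q ^ 2) ^ 2 :=
      nonneg_of_mul_nonneg_right ((contractionSq_nonneg _ _ Q).trans hle) (by positivity)
    have hfact : (r ! * (n + 1 - r)! : ℝ) ≤ (n + 1)! := by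
      have h := Nat.le_of_dvd (Nat.factorial_pos _)
        (Nat.factorial_mul_factorial_dvd_factorial hrn.le)
      exact_mod_cast h
    refine hle.trans ?_
    gcongr
  simpa [contractionSum] using Finset.sum_le_card_nsmul _ _ _ hterm

lemma derivForm_evalZero_eq_of_mem_chaos (hQ : Q ∈ chaos K n) :
    derivForm evalZero n Q Q = n ! * gaussExp (Q ^ 2) := by
  rw [gaussExp_sq_of_mem_chaos_eq hQ, mul_inv_cancel_left₀ (by positivity)]

lemma gaussExp_sq_le_of_sub_mem_degreeLT (hQ : Q ∈ chaos K n) (hPQ : P - Q ∈ degreeLT n) :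
    gaussExp (Q ^ 2) ≤ gaussExp (P ^ 2) := by
  have hP : P ∈ degreeLT (n + 1) := by
    rw [← sub_add_cancel P Q]
    exact add_mem (degreeLT_le_succ n hPQ) (chaos_le_degreeLT hQ)
  have hbessel := sum_derivForm_le_gaussExp_sq P {n}
  rw [Finset.sum_singleton, derivForm_gaussExp_eq_derivForm_evalZero hP hP,
    derivForm_self_congr _ hPQ, ← gaussExp_sq_of_mem_chaos_eq hQ] at hbessel
  exact hbessel

theorem exists_levyProkhorovDist_le_contractionSum_le (n : ℕ) {η : ℝ} (hη : 0 < η) :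
    ∃ δ > (0 : ℝ), ∀ (K : ℕ) (Q : MvPolynomial (Fin K) ℝ), Q ∈ chaos K (n + 1) →
      levyProkhorovDist (law Q) (gaussianReal 0 1) ≤ δ →
      1 / 2 ≤ gaussExp (Q ^ 2) ∧
        contractionSum (n + 1) Q ≤ η * derivForm evalZero (n + 1) Q Q ^ 2 := by
  set ε := min (1 / 2) (η / (28 * (n + 1)))
  have hε : 0 < ε := by positivity
  have hεη : n * (7 * ε) ≤ η / 4 := by
    calc n * (7 * ε) ≤ (n + 1) * (7 * (η / (28 * (n + 1)))) := by
          gcongr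
          · exact le_add_of_nonneg_right zero_le_one
          · exact min_le_right _ _
      _ = η / 4 := by field_simp; norm_num
  obtain ⟨δ, hδ, hmoments⟩ := exists_levyProkhorovDist_le_abs_gaussExp_sq_sub_one_le (n + 2) hε
  refine ⟨δ, hδ, fun K Q hQ hlaw => ?_⟩
  obtain ⟨htwo, hfour⟩ := hmoments (Fin K) Q (chaos_le_degreeLT hQ) hlaw
  rw [abs_le] at htwo hfour
  have hhalf : 1 / 2 ≤ gaussExp (Q ^ 2) := by
    linarith [min_le_left (1 / 2) (η / (28 * (n + 1)))]
  have hcumulant : gaussExp (Q ^ 4) - 3 * gaussExp (Q ^ 2) ^ 2 ≤ 7 * ε := by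
    nlinarith [sq_nonneg (gaussExp (Q ^ 2) - 1)]
  refine ⟨hhalf, ?_⟩
  rw [derivForm_evalZero_eq_of_mem_chaos hQ, mul_pow]
  calc contractionSum (n + 1) Q
      ≤ n * (((n + 1)! : ℝ) ^ 2 * (gaussExp (Q ^ 4) - 3 * gaussExp (Q ^ 2) ^ 2)) :=
        contractionSum_succ_le_of_mem_chaos hQ
    _ ≤ n * (((n + 1)! : ℝ) ^ 2 * (7 * ε)) := by gcongr
    _ = ((n + 1)! : ℝ) ^ 2 * (n * (7 * ε)) := by ring
    _ ≤ ((n + 1)! : ℝ) ^ 2 * (η * gaussExp (Q ^ 2) ^ 2) := by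
        refine mul_le_mul_of_nonneg_left (hεη.trans ?_) (sq_nonneg _)
        nlinarith [mul_le_mul hhalf hhalf (by norm_num) (gaussExp_sq_nonneg Q)]
    _ = η * (((n + 1)! : ℝ) ^ 2 * gaussExp (Q ^ 2) ^ 2) := by ring

theorem exists_lintegral_inv_sqField_pow_le_of_chaos (n q : ℕ) :
    ∃ δ > (0 : ℝ), ∃ B > (0 : ℝ), ∀ (K : ℕ) (P Q : MvPolynomial (Fin K) ℝ),
      Q ∈ chaos K (n + 1) → P - Q ∈ degreeLT (n + 1) →
      levyProkhorovDist (law Q) (gaussianReal 0 1) ≤ δ →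
      1 / 2 ≤ gaussExp (P ^ 2) ∧
        ∫⁻ x, (ENNReal.ofReal (sqField P x) ^ q)⁻¹ ∂gaussPi (Fin K) ≤ ENNReal.ofReal B := by
  obtain ⟨η, hη, B, hB, hbound⟩ :=
    exists_lintegral_inv_sqField_pow_le n q (show (0 : ℝ) < 1 / 2 by norm_num)
  obtain ⟨δ, hδ, hclose⟩ := exists_levyProkhorovDist_le_contractionSum_le n hη
  refine ⟨δ, hδ, B, hB, fun K P Q hQ hPQ hlaw => ?_⟩
  obtain ⟨hhalf, hcontr⟩ := hclose K Q hQ hlaw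
  have hP : P ∈ degreeLT (n + 2) := by
    rw [← sub_add_cancel P Q]
    exact add_mem (degreeLT_le_succ _ hPQ) (chaos_le_degreeLT hQ)
  refine ⟨hhalf.trans (gaussExp_sq_le_of_sub_mem_degreeLT hQ hPQ), hbound (Fin K) P hP ?_ ?_⟩
  · rwa [contractionSum_congr hPQ, derivForm_self_congr _ hPQ]
  · rw [derivForm_self_congr _ hPQ, derivForm_evalZero_eq_of_mem_chaos hQ]
    exact hhalf.trans (le_mul_of_one_le_left (by linarith) (mod_cast Nat.factorial_pos _))

end Chaos

end GaussianChaos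

/-- Quantitative negative-moment bound on a sum of chaoses: if the projection on
the top chaos is close in law to `N(0,1)`, then the negative `q`-moment of the carré du champ is
controlled by a power of the `L²`-norm. -/
theorem negative_moments_sum_of_chaoses_quantitative (m q : ℕ) :
    ∃ δ > (0:ℝ), ∃ r > (0:ℝ), ∃ C > (0:ℝ),
      ∀ (K : ℕ) (P Q R : MvPolynomial (Fin K) ℝ),
        P.totalDegree ≤ m → P = Q + R → Q ∈ chaos K m → R.totalDegree ≤ m - 1 →
        levyProkhorovDist
            (Measure.map (fun x => eval x Q) (gaussPi (Fin K))) (gaussianReal 0 1) ≤ δ →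
        ∫⁻ x, (ENNReal.ofReal (sqField P x) ^ q)⁻¹ ∂gaussPi (Fin K)
          ≤ ENNReal.ofReal
              (C * (∫ x, (eval x P) ^ 2 ∂gaussPi (Fin K)) ^ (r / 2)) := by
  cases m with
  | zero =>
    obtain ⟨δ, hδ, hfar⟩ := GaussianChaos.exists_lt_levyProkhorovDist_law_C
    refine ⟨δ, hδ, 2, two_pos, 1, one_pos, fun K P Q R _ _ hQ _ hlaw => ?_⟩
    rw [GaussianChaos.eq_C_of_mem_degreeLT_one (GaussianChaos.chaos_le_degreeLT hQ)] at hlaw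
    exact absurd hlaw (hfar (Fin K) _).not_ge
  | succ n =>
    obtain ⟨δ, hδ, B, hB, hbound⟩ :=
      GaussianChaos.exists_lintegral_inv_sqField_pow_le_of_chaos n q
    refine ⟨δ, hδ, 2, two_pos, 2 * B, by positivity, fun K P Q R _ hPQR hQ hR hlaw => ?_⟩
    have hPQ : P - Q ∈ GaussianChaos.degreeLT (n + 1) := by
      rw [hPQR, add_sub_cancel_left]
      exact GaussianChaos.mem_degreeLT_of_totalDegree_lt (Nat.lt_succ_of_le hR)
    obtain ⟨hhalf, hmoment⟩ := hbound K P Q hQ hPQ hlaw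
    have hsq : GaussianChaos.gaussExp (P ^ 2) = ∫ x, eval x P ^ 2 ∂gaussPi (Fin K) := by
      simp only [GaussianChaos.gaussExp_apply, map_pow]
    rw [hsq] at hhalf
    refine hmoment.trans (ENNReal.ofReal_le_ofReal ?_)
    rw [div_self two_ne_zero, Real.rpow_one]
    nlinarith
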